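/- arXiv:2401.12670 — 2 statements merged into one kernel-verified Lean document; each statement's English description precedes it below -/
import Mathlib

section
/- For every positive integer k, every (320·k²)-connected finite simple graph has a k-connected orientation. -/
/-- A simple graph `G` is `k`-connected if it has at least `k+1` vertices and removing any
set of fewer than `k` vertices leaves a connected induced subgraph. -/
def KConnected {W : Type*} (G : SimpleGraph W) (k : ℕ) : Prop :=
  k + 1 ≤ Nat.card W ∧
    ∀ S : Set W, S.Finite → S.ncard < k → (G.induce (Sᶜ : Set W)).Connected

/-- `D` is an orientation of the simple graph `G`: every arc of `D` comes from an edge of `G`,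
and for each edge `{u, v}` of `G` exactly one of the arcs `(u, v)`, `(v, u)` belongs to `D`. -/
def IsOrientation {W : Type*} (G : SimpleGraph W) (D : W → W → Prop) : Prop :=
  (∀ u v, D u v → G.Adj u v) ∧ ∀ u v, G.Adj u v → (D u v ↔ ¬ D v u)

/-- After deleting the vertex set `S`, the directed graph `D` is strongly connected:
any vertex outside `S` can be reached from any other vertex outside `S` by a directed
path avoiding `S`. -/
def StronglyConnectedOutside {W : Type*} (D : W → W → Prop) (S : Set W) : Prop :=
  ∀ u v : W, u ∉ S → v ∉ S →
    Relation.ReflTransGen (fun a b => D a b ∧ a ∉ S ∧ b ∉ S) u v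

/-- A directed graph `D` is `k`-connected if it has at least `k+1` vertices and it remains
strongly connected after the removal of any set of fewer than `k` vertices. -/
def DKConnected {W : Type*} (D : W → W → Prop) (k : ℕ) : Prop :=
  k + 1 ≤ Nat.card W ∧
    ∀ S : Set W, S.Finite → S.ncard < k → StronglyConnectedOutside D S

/-!
Let `d ≈ 4k` and consider the union with itself of the generic `d`-dimensional rigidity matroid on
the edges of the complete graph on `V`. Suppose that the flat spanned by `G` is a graph `H` that is
not complete. Order `V` at random and add the nonsimplicial vertices one at a time. A vertex with
sufficiently many earlier neighbours contributes `2d` to the rank by a `0`-extension, and `2d + 1`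
by a `1`-extension if two of its earlier neighbours are not adjacent. As the degrees are at least of
order `d²`, the gain from two fixed nonadjacent neighbours, which both precede the vertex with
probability `1/3`, compensates on average for the loss from few earlier neighbours. Each simplicial
vertex has at least `2d` nonsimplicial neighbours and can be added afterwards, so `H` has rank at
least `2d|V|`, which exceeds Maxwell's bound `2d|V| - d(d+1)`.

Hence `H` is complete, and `G` contains two disjoint edge sets which satisfy Maxwell's count with
equality. By Hall's theorem one of them has an orientation with all out-degrees `d` and the other
one with all in-degrees `d`, except for a set `T` of `d(d+1)/2` vertices of degree `d - 1`. Suppose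
that no arc leads from `X` to `Y`, where `X`, `Y` and `S` partition `V`. Arcs of the first set with
tail in `X` stay in `X ∪ S`, and arcs of the second set with head in `Y` stay in `Y ∪ S`, so
Maxwell's count gives `d(d+1)/2 ≤ d|S| + |X ∩ T|` and `d(d+1)/2 ≤ d|S| + |Y ∩ T|`. Adding these
yields `d + 1 ≤ 4|S|`, whence `|S| ≥ k`.
-/

open Finset Module

/-! ### Generic linear independence -/

section LinearAlgebra

variable {K W W' ι : Type*} [Field K] [AddCommGroup W] [Module K W] [AddCommGroup W'] [Module K W']

lemma linearIndependent_iff_exists_det_ne_zero [Fintype ι] [DecidableEq ι] {v : ι → W} :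
    LinearIndependent K v ↔ ∃ L : W →ₗ[K] ι → K, Matrix.det (.of fun i => L (v i)) ≠ 0 := by
  refine ⟨fun hv => ?_, fun ⟨L, hL⟩ => .of_comp L (Matrix.linearIndependent_rows_of_det_ne_zero hL)⟩
  obtain ⟨L, hL⟩ := LinearMap.exists_leftInverse_of_injective (Fintype.linearCombination K v)
    (LinearMap.ker_eq_bot.2 hv.fintypeLinearCombination_injective)
  refine ⟨L, ?_⟩
  have hrow : Matrix.of (fun i => L (v i)) = 1 := by
    ext i j
    have hi := LinearMap.congr_fun hL (Pi.single i 1)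
    simp only [LinearMap.comp_apply, Fintype.linearCombination_apply_single, one_smul] at hi
    simp [hi, Matrix.one_apply, Pi.single_apply, eq_comm]
  simp [hrow]

lemma finite_not_linearIndependent_lineMap [Finite ι] {u w : ι → W} {t₀ : K}
    (h : LinearIndependent K (AffineMap.lineMap u w t₀ : ι → W)) :
    {t : K | ¬ LinearIndependent K (AffineMap.lineMap u w t : ι → W)}.Finite := by
  classical
  cases nonempty_fintype ι
  obtain ⟨L, hL⟩ := linearIndependent_iff_exists_det_ne_zero.1 h
  let A : Matrix ι ι K := .of fun i => L (u i)
  let B : Matrix ι ι K := .of fun i => L (w i - u i)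
  let q : Polynomial K := Matrix.det
    (A.map Polynomial.C + (Polynomial.X : Polynomial K) • B.map Polynomial.C)
  have eval_q (t : K) :
      q.eval t = Matrix.det (.of fun i => L ((AffineMap.lineMap u w t : ι → W) i)) := by
    rw [← Polynomial.coe_evalRingHom, RingHom.map_det]
    congr 1
    ext i j
    simp [A, B, AffineMap.lineMap_apply, add_comm]
  have q_ne_zero : q ≠ 0 := fun hq => hL (by rw [← eval_q, hq, Polynomial.eval_zero])
  refine (q.rootSet_finite K).subset fun t ht => ?_
  rw [Polynomial.mem_rootSet, Polynomial.coe_aeval_eq_eval, eval_q]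
  exact ⟨q_ne_zero, not_not.1 fun hdet =>
    ht (linearIndependent_iff_exists_det_ne_zero.2 ⟨L, hdet⟩)⟩

variable {Θ : Type*} [AddCommGroup Θ] [Module K Θ]

lemma finite_not_linearIndepOn_lineMap [Finite ι] (f : Θ →ₗ[K] ι → W) {θ₀ θ₁ : Θ} {F : Set ι}
    {t₀ : K} (h : LinearIndepOn K (f (AffineMap.lineMap θ₀ θ₁ t₀)) F) :
    {t : K | ¬ LinearIndepOn K (f (AffineMap.lineMap θ₀ θ₁ t)) F}.Finite := by
  have restrict_lineMap (t : K) : (fun e : F => f (AffineMap.lineMap θ₀ θ₁ t) e) =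
      AffineMap.lineMap (fun e : F => f θ₀ e) (fun e : F => f θ₁ e) t := by
    funext e
    simp [AffineMap.lineMap_apply]
  simp only [LinearIndepOn, restrict_lineMap] at h ⊢
  exact finite_not_linearIndependent_lineMap h

lemma exists_forall_linearIndepOn [Infinite K] [Finite ι] (f : Θ →ₗ[K] ι → W) :
    ∃ θ, ∀ (F : Set ι) (θ' : Θ), LinearIndepOn K (f θ') F → LinearIndepOn K (f θ) F := by
  classical
  suffices h : ∀ 𝓕 : Finset (Set ι), ∃ θ, ∀ F ∈ 𝓕, ∀ θ' : Θ,
      LinearIndepOn K (f θ') F → LinearIndepOn K (f θ) F by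
    cases nonempty_fintype (Set ι)
    simpa using h univ
  intro 𝓕
  induction 𝓕 using Finset.induction_on with
  | empty => exact ⟨0, by simp⟩
  | insert F₀ 𝓕 _ ih =>
    obtain ⟨θ₀, hθ₀⟩ := ih
    by_cases hF₀ : ∃ θ₁, LinearIndepOn K (f θ₁) F₀
    swap
    · exact ⟨θ₀, (forall_mem_insert _ _ _).2 ⟨fun θ' h => (hF₀ ⟨θ', h⟩).elim, hθ₀⟩⟩
    obtain ⟨θ₁, hθ₁⟩ := hF₀
    let good : Finset (Set ι) := {F ∈ insert F₀ 𝓕 | ∃ θ', LinearIndepOn K (f θ') F}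
    have finite_bad_good : (⋃ F ∈ good,
        {t : K | ¬ LinearIndepOn K (f (AffineMap.lineMap θ₀ θ₁ t)) F}).Finite := by
      refine Set.Finite.biUnion good.finite_toSet fun F hF => ?_
      obtain ⟨hF, θ', hθ'⟩ := mem_filter.1 hF
      rcases mem_insert.1 hF with rfl | hF
      · exact finite_not_linearIndepOn_lineMap f (t₀ := 1) (by simpa using hθ₁)
      · exact finite_not_linearIndepOn_lineMap f (t₀ := 0) (by simpa using hθ₀ F hF θ' hθ')
    obtain ⟨t, ht⟩ := finite_bad_good.infinite_compl.nonempty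
    refine ⟨AffineMap.lineMap θ₀ θ₁ t, fun F hF θ' hθ' => not_not.1 fun hbad => ht ?_⟩
    exact Set.mem_biUnion (mem_filter.2 ⟨hF, θ', hθ'⟩) hbad

lemma linearIndepOn_union_of_map_eq_zero {R : ι → W} {F S : Set ι} (π : W →ₗ[K] W')
    (hF : LinearIndepOn K R F) (hπ : ∀ e ∈ F, π (R e) = 0)
    (hS : LinearIndepOn K (fun e => π (R e)) S) : LinearIndepOn K R (F ∪ S) := by
  refine hF.union (LinearIndependent.of_comp π hS) ?_
  have hdisj := Submodule.range_ker_disjoint (f := π) (v := fun e : S => R e) hS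
  rw [← Set.image_eq_range] at hdisj
  refine hdisj.symm.mono_left (Submodule.span_le.2 ?_)
  rintro _ ⟨e, he, rfl⟩
  exact hπ e he

lemma linearIndepOn_insert_of_sub_smul_mem_span {R : ι → W} {s : Set ι} {a b : ι} (ha : a ∉ s)
    (h : LinearIndepOn K R (insert a s)) {c : K} (hc : c ≠ 0)
    (hb : R b - c • R a ∈ Submodule.span K (R '' s)) : LinearIndepOn K R (insert b s) := by
  rw [linearIndepOn_insert ha] at h
  have hb' : R b ∉ Submodule.span K (R '' s) := fun hmem =>
    h.2 ((Submodule.smul_mem_iff _ hc).1 (by simpa using Submodule.sub_mem _ hmem hb))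
  have hbs : b ∉ s := fun hbs => hb' (Submodule.subset_span (Set.mem_image_of_mem R hbs))
  exact (linearIndepOn_insert hbs).2 ⟨h.1, hb'⟩

lemma linearIndepOn_of_linearIndepOn_smul {R : ι → W} {F : Set ι} (a : ι → K)
    (h : LinearIndepOn K (fun e => a e • R e) F) : LinearIndepOn K R F := by
  have ha (e : F) : a e ≠ 0 := fun h0 => h.ne_zero e.2 (by simp [h0])
  change LinearIndependent K fun e : F => R e
  convert LinearIndependent.units_smul h fun e => (Units.mk0 (a e) (ha e))⁻¹ using 1
  funext e
  simp [Units.smul_def, ha]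

lemma exists_union_eq_linearIndepOn_of_add {x y : ι → W} {F : Set ι} (hF : F.Finite)
    (h : LinearIndepOn K (x + y) F) :
    ∃ F₁ F₂, F₁ ∪ F₂ = F ∧ LinearIndepOn K x F₁ ∧ LinearIndepOn K y F₂ := by
  classical
  have := hF.fintype
  obtain ⟨L, hL⟩ := linearIndependent_iff_exists_det_ne_zero.1 h
  -- Expand the determinant multilinearly: some choice of one summand per row is nonsingular.
  let det : MultilinearMap K (fun _ : F => W) K :=
    (Matrix.detRowAlternating (n := F) (R := K)).toMultilinearMap.compLinearMap fun _ => L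
  have hdet : ∑ s : Finset F, det (s.piecewise (x ·) (y ·)) ≠ 0 := by
    rw [← MultilinearMap.map_add_univ]
    exact hL
  obtain ⟨s, -, hs⟩ := exists_ne_zero_of_sum_ne_zero hdet
  have hs : LinearIndependent K (s.piecewise (x ·) (y ·)) :=
    linearIndependent_iff_exists_det_ne_zero.2 ⟨L, hs⟩
  have hcomp {A : Set F} {z : ι → W} (hz : ∀ e ∈ A, s.piecewise (x ·) (y ·) e = z e) :
      LinearIndepOn K z ((↑) '' A) :=
    .image_of_comp _ _ ((linearIndepOn_congr hz).1 (hs.linearIndepOn A))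
  refine ⟨(↑) '' (s : Set F), (↑) '' (sᶜ : Set F), ?_, hcomp ?_, hcomp ?_⟩
  · simp
  · exact fun e he => piecewise_eq_of_mem _ _ _ he
  · exact fun e he => piecewise_eq_of_notMem _ _ _ he

end LinearAlgebra

section VectorRank

variable {K W ι : Type*} [Field K] [AddCommGroup W] [Module K W] {R : ι → W} {B F F' : Finset ι}

variable (K) in
/-- The rank of the set `F` of indices in the linear matroid of the vectors `R`. -/
noncomputable def vectorRank (R : ι → W) (F : Finset ι) : ℕ :=
  finrank K (Submodule.span K (R '' F))

lemma vectorRank_le_card : vectorRank K R F ≤ #F := by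
  classical
  rw [vectorRank, ← coe_image]
  exact (finrank_span_finset_le_card _).trans card_image_le

lemma vectorRank_le_of_image_subset_span
    (h : R '' F ⊆ Submodule.span K (R '' F')) : vectorRank K R F ≤ vectorRank K R F' :=
  have := FiniteDimensional.span_of_finite K (F'.finite_toSet.image R)
  Submodule.finrank_mono (Submodule.span_le.2 h)

lemma vectorRank_union_le [DecidableEq ι] :
    vectorRank K R (F ∪ F') ≤ vectorRank K R F + vectorRank K R F' := by
  have := FiniteDimensional.span_of_finite K (F.finite_toSet.image R)
  have := FiniteDimensional.span_of_finite K (F'.finite_toSet.image R)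
  rw [vectorRank, coe_union, Set.image_union, Submodule.span_union]
  exact Submodule.finrank_add_le_finrank_add_finrank _ _

lemma vectorRank_eq_card (hF : LinearIndepOn K R F) : vectorRank K R F = #F := by
  rw [vectorRank, Set.image_eq_range, finrank_span_eq_card hF]
  exact Fintype.card_coe F

lemma card_le_vectorRank (hB : LinearIndepOn K R B) (hBF : B ⊆ F) : #B ≤ vectorRank K R F := by
  rw [← vectorRank_eq_card hB]
  exact vectorRank_le_of_image_subset_span
    ((Set.image_mono (coe_subset.2 hBF)).trans Submodule.subset_span)

lemma exists_subset_linearIndepOn_card_eq_vectorRank (R : ι → W) (F : Finset ι) :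
    ∃ B ⊆ F, LinearIndepOn K R B ∧ #B = vectorRank K R F := by
  classical
  obtain ⟨B, hBF, -, hspan, hB⟩ := exists_linearIndepOn_extension
    (linearIndepOn_empty K R) (Set.empty_subset (F : Set ι))
  lift B to Finset ι using F.finite_toSet.subset hBF
  refine ⟨B, coe_subset.1 hBF, hB, le_antisymm (card_le_vectorRank hB (coe_subset.1 hBF)) ?_⟩
  rw [← vectorRank_eq_card hB]
  exact vectorRank_le_of_image_subset_span hspan

end VectorRank

section UnionIndep

variable {K W ι : Type*} [Field K] [AddCommGroup W] [Module K W]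

variable (K) in
/-- Independence in the matroid union of the linear matroid of `R` with itself. -/
def IsUnionIndep (R : ι → W) (F : Set ι) : Prop :=
  ∃ F₁ F₂, F₁ ∪ F₂ = F ∧ LinearIndepOn K R F₁ ∧ LinearIndepOn K R F₂

lemma isUnionIndep_of_linearIndepOn_prod {R : ι → W} {a b : ι → K} {F : Set ι} (hF : F.Finite)
    (h : LinearIndepOn K (fun e => (a e • R e, b e • R e)) F) : IsUnionIndep K R F := by
  obtain ⟨F₁, F₂, hF, h₁, h₂⟩ := exists_union_eq_linearIndepOn_of_add hF
    (x := fun e => LinearMap.inl K W W (a e • R e)) (y := fun e => LinearMap.inr K W W (b e • R e))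
    ((linearIndepOn_congr fun e _ => by simp).2 h)
  exact ⟨F₁, F₂, hF, linearIndepOn_of_linearIndepOn_smul a (.of_comp (LinearMap.inl K W W) h₁),
    linearIndepOn_of_linearIndepOn_smul b (.of_comp (LinearMap.inr K W W) h₂)⟩

lemma exists_linearIndepOn_prod_of_isUnionIndep {R : ι → W} {F : Set ι} (h : IsUnionIndep K R F) :
    ∃ a b : ι → K, LinearIndepOn K (fun e => (a e • R e, b e • R e)) F := by
  classical
  obtain ⟨F₁, F₂, rfl, h₁, h₂⟩ := h
  refine ⟨F₁.indicator 1, F₁ᶜ.indicator 1, ?_⟩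
  rw [← Set.union_sdiff_self]
  refine linearIndepOn_union_of_map_eq_zero (LinearMap.snd K W W) ?_ ?_ ?_
  · refine .of_comp (LinearMap.fst K W W) ((linearIndepOn_congr fun e he => ?_).2 h₁)
    simp [Set.indicator_of_mem he]
  · intro e he
    simp [he]
  · refine (linearIndepOn_congr fun e he => ?_).2 (h₂.mono Set.sdiff_subset)
    simp [he.2]

theorem exists_forall_linearIndepOn_iff_isUnionIndep [Infinite K] [Finite ι] (R : ι → W) :
    ∃ Q : ι → W × W, ∀ F, LinearIndepOn K Q F ↔ IsUnionIndep K R F := by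
  let scale : (ι → K) × (ι → K) →ₗ[K] ι → W × W := LinearMap.pi fun e =>
    (((LinearMap.proj e).comp (LinearMap.fst K _ _)).smulRight (R e)).prod
      (((LinearMap.proj e).comp (LinearMap.snd K _ _)).smulRight (R e))
  obtain ⟨θ, hθ⟩ := exists_forall_linearIndepOn scale
  refine ⟨scale θ, fun F => ⟨isUnionIndep_of_linearIndepOn_prod F.toFinite, fun hF => ?_⟩⟩
  obtain ⟨a, b, hab⟩ := exists_linearIndepOn_prod_of_isUnionIndep hF
  exact hθ F (a, b) hab

end UnionIndep

/-! ### Affine independence and the rigidity matrix -/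

section AffineIndependence

variable {V E : Type*} [AddCommGroup E] [Module ℝ E] {p : V → E} {X : Finset V}

lemma affineIndependent_coe_iff :
    AffineIndependent ℝ (fun x : X => p x) ↔ ∀ w : V → ℝ,
      ∑ x ∈ X, w x = 0 → ∑ x ∈ X, w x • p x = 0 → ∀ x ∈ X, w x = 0 := by
  rw [affineIndependent_iff_of_fintype]
  refine ⟨fun h w hw hp x hx => ?_, fun h w hw hp x => ?_⟩
  · have hw' : ∑ x : X, w x = 0 := by rwa [sum_coe_sort X w]
    refine h (fun x => w x) hw' ?_ ⟨x, hx⟩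
    rwa [weightedVSub_eq_linear_combination _ hw', sum_coe_sort X fun x => w x • p x]
  · rw [weightedVSub_eq_linear_combination _ hw] at hp
    let w' : V → ℝ := Function.extend (↑) w 0
    have w'_coe (x : X) : w' x = w x := Subtype.val_injective.extend_apply w 0 x
    rw [← w'_coe]
    refine h w' ?_ ?_ x x.2
    · rw [← sum_coe_sort X]
      simpa only [w'_coe]
    · rw [← sum_coe_sort X fun x => w' x • p x]
      simpa only [w'_coe]

lemma linearIndepOn_sum_smul_sub_of_affineIndependent [DecidableEq V]
    (hX : AffineIndependent ℝ (fun x : X => p x)) {c : V → ℝ} (hc : ∑ x ∈ X, c x = 1)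
    {w : V} (hw : w ∈ X) (hcw : c w ≠ 0) :
    LinearIndepOn ℝ (fun x => (∑ y ∈ X, c y • p y) - p x) (X.erase w) := by
  rw [affineIndependent_coe_iff] at hX
  rw [linearIndepOn_finset_iff]
  intro f hf
  let s := ∑ x ∈ X.erase w, f x
  let f₀ : V → ℝ := Function.update f w 0
  have f₀_eq : ∀ x ∈ X.erase w, f₀ x = f x := fun x hx => by
    simp [f₀, Function.update_of_ne (ne_of_mem_erase hx)]
  have f₀_w : f₀ w = 0 := by simp [f₀]
  have weights := hX (fun x => s * c x - f₀ x) ?_ ?_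
  · have hs : s = 0 := by simpa [f₀_w, hcw] using weights w hw
    intro x hx
    simpa [hs, f₀_eq x hx] using weights x (mem_of_mem_erase hx)
  · rw [sum_sub_distrib, ← mul_sum, hc, ← add_sum_erase X f₀ hw, f₀_w, sum_congr rfl f₀_eq]
    simp [s]
  · have hf₀ : ∑ x ∈ X, f₀ x • p x = ∑ x ∈ X.erase w, f x • p x := by
      rw [← add_sum_erase X _ hw, f₀_w, zero_smul, zero_add]
      exact sum_congr rfl fun x hx => by rw [f₀_eq x hx]
    simp only [smul_sub, sum_sub_distrib, ← sum_smul] at hf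
    simp only [sub_smul, mul_smul, sum_sub_distrib, ← smul_sum, hf₀]
    exact hf

lemma exists_affineIndependent_coe [FiniteDimensional ℝ E] (hX : #X ≤ finrank ℝ E + 1) :
    ∃ q : V → E, AffineIndependent ℝ (fun x : X => q x) := by
  obtain ⟨b⟩ := AffineBasis.exists_affineBasis_of_finiteDimensional (k := ℝ) (P := E)
    (Fintype.card_fin (finrank ℝ E + 1))
  obtain ⟨f⟩ : Nonempty (X ↪ Fin (finrank ℝ E + 1)) :=
    Function.Embedding.nonempty_of_card_le (by simpa using hX)
  refine ⟨Function.extend (↑) (b ∘ f) 0, ?_⟩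
  simpa only [Subtype.val_injective.extend_apply] using! b.ind.comp_embedding f

end AffineIndependence

section Rigidity

variable {V E : Type*} [DecidableEq V] [AddCommGroup E] [Module ℝ E]
  {p : V → E} {F : Finset (Sym2 V)} {A X : Finset V} {u v w : V}

/-- The edges joining `v` to the vertices in `A`. -/
def starEdges (v : V) (A : Finset V) : Finset (Sym2 V) := A.image (s(v, ·))

/-- The edges of the complete graph on `X`. -/
def cliqueEdges (X : Finset V) : Finset (Sym2 V) := {e ∈ X.sym2 | ¬ e.IsDiag}

lemma mem_starEdges {e : Sym2 V} : e ∈ starEdges v A ↔ ∃ x ∈ A, s(v, x) = e := mem_image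

lemma card_starEdges : #(starEdges v A) = #A :=
  card_image_of_injective A fun _ _ h => Sym2.congr_right.1 h

lemma mk_mem_cliqueEdges : s(u, v) ∈ cliqueEdges X ↔ u ∈ X ∧ v ∈ X ∧ u ≠ v := by
  simp [cliqueEdges, and_assoc]

lemma card_cliqueEdges : #(cliqueEdges X) = (#X).choose 2 := by
  rw [← Sym2.card_image_offDiag]
  congr 1
  ext e
  induction e with | _ u v =>
  rw [mk_mem_cliqueEdges]
  simp only [mem_image, mem_offDiag, Prod.exists]
  grind

lemma cliqueEdges_insert : cliqueEdges (insert v X) = cliqueEdges X ∪ starEdges v (X.erase v) := by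
  ext e
  induction e with | _ x y =>
  simp only [mem_union, mk_mem_cliqueEdges, mem_starEdges, mem_insert, mem_erase, Sym2.eq_iff]
  grind

/-- The rows of the rigidity matrix of the placement `p`, as a linear function of `p`. The row
of the edge `uv` has the block `p u - p v` at `u` and the block `p v - p u` at `v`. -/
def rigidityRow : (V → E) →ₗ[ℝ] Sym2 V → V → E where
  toFun p := Sym2.lift ⟨fun u v => Pi.single u (p u - p v) + Pi.single v (p v - p u),
    fun _ _ => add_comm _ _⟩
  map_add' p q := by
    funext e
    induction e with | _ u v =>
    simp only [Sym2.lift_mk, Pi.add_apply, add_sub_add_comm, Pi.single_add]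
    abel
  map_smul' c p := by
    funext e
    induction e with | _ u v =>
    simp [← smul_sub, Pi.single_smul]

lemma rigidityRow_mk (p : V → E) (u v : V) :
    rigidityRow p s(u, v) = Pi.single u (p u - p v) + Pi.single v (p v - p u) := rfl

lemma rigidityRow_apply_of_notMem {e : Sym2 V} (h : v ∉ e) : rigidityRow p e v = 0 := by
  induction e with | _ x y =>
  simp only [Sym2.mem_iff, not_or] at h
  simp [rigidityRow_mk, h]

lemma rigidityRow_mk_apply_left (p : V → E) (v x : V) : rigidityRow p s(v, x) v = p v - p x := by
  obtain rfl | h := eq_or_ne v x <;> simp [rigidityRow_mk, *]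

lemma rigidityRow_update_of_notMem {e : Sym2 V} (h : v ∉ e) (z : E) :
    rigidityRow (Function.update p v z) e = rigidityRow p e := by
  induction e with | _ x y =>
  simp only [Sym2.mem_iff, not_or] at h
  simp [rigidityRow_mk, Function.update_of_ne (Ne.symm h.1), Function.update_of_ne (Ne.symm h.2)]

lemma linearIndepOn_rigidityRow_union_starEdges (hF : LinearIndepOn ℝ (rigidityRow p) F)
    (hv : ∀ e ∈ F, v ∉ e) (hp : LinearIndepOn ℝ (fun x => p v - p x) A) :
    LinearIndepOn ℝ (rigidityRow p) ↑(F ∪ starEdges v A) := by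
  rw [coe_union, starEdges, coe_image]
  refine linearIndepOn_union_of_map_eq_zero (LinearMap.proj v) hF
    (fun e he => rigidityRow_apply_of_notMem (hv e he)) (.image_of_comp _ _ ?_)
  exact (linearIndepOn_congr fun x _ => rigidityRow_mk_apply_left p v x).2 hp

lemma rigidityRow_midpoint (h : p v = (2⁻¹ : ℝ) • p u + (2⁻¹ : ℝ) • p w) :
    rigidityRow p s(v, w) - (2⁻¹ : ℝ) • rigidityRow p s(u, w) = -rigidityRow p s(v, u) := by
  have huv : p u - p v = (2⁻¹ : ℝ) • (p u - p w) := by rw [h]; module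
  have hwv : p w - p v = (2⁻¹ : ℝ) • (p w - p u) := by rw [h]; module
  have hvw : p v - p w = (2⁻¹ : ℝ) • (p u - p w) := by rw [h]; module
  have hvu : p v - p u = (2⁻¹ : ℝ) • (p w - p u) := by rw [h]; module
  have hneg : p w - p u = -(p u - p w) := by abel
  simp only [rigidityRow_mk, huv, hwv, hvw, hvu, hneg, Pi.single_smul, Pi.single_neg]
  module

lemma linearIndepOn_rigidityRow_union_starEdges_of_midpoint
    (h : p v = (2⁻¹ : ℝ) • p u + (2⁻¹ : ℝ) • p w) (hvu : v ≠ u) (hvw : v ≠ w)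
    (hF : LinearIndepOn ℝ (rigidityRow p) ↑(insert s(u, w) F)) (huwF : s(u, w) ∉ F)
    (hv : ∀ e ∈ F, v ∉ e) (huA : u ∈ A) (hp : LinearIndepOn ℝ (fun x => p v - p x) A) :
    LinearIndepOn ℝ (rigidityRow p) ↑(F ∪ starEdges v (insert w A)) := by
  have hvuw : v ∉ s(u, w) := by simp [hvu, hvw]
  have extended : LinearIndepOn ℝ (rigidityRow p) ↑(insert s(u, w) F ∪ starEdges v A) :=
    linearIndepOn_rigidityRow_union_starEdges hF (by simpa [hvuw] using hv) hp
  have huw : s(u, w) ∉ F ∪ starEdges v A := by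
    simp only [mem_union, huwF, mem_starEdges, false_or]
    rintro ⟨x, -, hx⟩
    exact hvuw (hx ▸ Sym2.mem_mk_left v x)
  rw [insert_union, coe_insert] at extended
  rw [starEdges, image_insert, union_insert, coe_insert]
  refine linearIndepOn_insert_of_sub_smul_mem_span (mod_cast huw) extended
    (by norm_num : (2⁻¹ : ℝ) ≠ 0) ?_
  rw [rigidityRow_midpoint h]
  refine Submodule.neg_mem _ (Submodule.subset_span (Set.mem_image_of_mem _ ?_))
  exact mod_cast mem_union_right _ (mem_starEdges.2 ⟨u, huA, rfl⟩)

/-- An affine dependence `c` of the points is an equilibrium stress `c x * c y` of the complete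
graph on them. -/
lemma sum_mul_smul_rigidityRow_eq_zero {c : V → ℝ} (hc : ∑ x ∈ X, c x = 0)
    (hp : ∑ x ∈ X, c x • p x = 0) :
    ∑ x ∈ X, ∑ y ∈ X, (c x * c y) • rigidityRow p s(x, y) = 0 := by
  have half (x : V) : ∑ y ∈ X, (c x * c y) • (Pi.single x (p x - p y) : V → E) = 0 := by
    calc
      _ = LinearMap.single ℝ (fun _ => E) x (∑ y ∈ X, (c x * c y) • (p x - p y)) := by simp
      _ = LinearMap.single ℝ (fun _ => E) x
          (c x • ((∑ y ∈ X, c y) • p x - ∑ y ∈ X, c y • p y)) := by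
        simp only [mul_smul, smul_sub, sum_sub_distrib, smul_sum, sum_smul]
      _ = 0 := by simp [hc, hp]
  simp only [rigidityRow_mk, smul_add, sum_add_distrib, half, zero_add]
  rw [sum_comm]
  exact sum_eq_zero fun y _ => by simpa only [mul_comm (c y)] using half y

lemma rigidityRow_mem_of_affine_dependence {c : V → ℝ} (hc : ∑ x ∈ X, c x = 0)
    (hp : ∑ x ∈ X, c x • p x = 0) (hu : u ∈ X) (hv : v ∈ X) (huv : u ≠ v) (hcu : c u ≠ 0)
    (hcv : c v ≠ 0) {N : Submodule ℝ (V → E)}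
    (hN : ∀ e ∈ cliqueEdges X, e ≠ s(u, v) → rigidityRow p e ∈ N) :
    rigidityRow p s(u, v) ∈ N := by
  have others (x) (hx : x ∈ X) (y) (hy : y ∈ X) (hne : s(x, y) ≠ s(u, v)) :
      N.mkQ (rigidityRow p s(x, y)) = 0 := by
    rw [Submodule.mkQ_apply, Submodule.Quotient.mk_eq_zero]
    obtain rfl | hxy := eq_or_ne x y
    · simp [rigidityRow_mk]
    · exact hN _ (mk_mem_cliqueEdges.2 ⟨hx, hy, hxy⟩) hne
  have stress := congrArg N.mkQ (sum_mul_smul_rigidityRow_eq_zero hc hp)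
  simp only [map_sum, map_smul, map_zero] at stress
  rw [← sum_subset (insert_subset hu (singleton_subset_iff.2 hv)), sum_pair huv,
    sum_eq_single_of_mem v hv, sum_eq_single_of_mem u hu, Sym2.eq_swap (a := v), mul_comm (c v),
    ← two_smul ℝ, smul_smul, smul_eq_zero] at stress
  · simpa [hcu, hcv] using stress
  · exact fun y hy hyu => by rw [others v hv y hy (by aesop), smul_zero]
  · exact fun y hy hyv => by rw [others u hu y hy (by aesop), smul_zero]
  · intro x hx hxuv
    refine sum_eq_zero fun y hy => ?_
    rw [others x hx y hy (by aesop), smul_zero]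

lemma linearIndepOn_rigidityRow_cliqueEdges (hX : AffineIndependent ℝ (fun x : X => p x)) :
    LinearIndepOn ℝ (rigidityRow p) (cliqueEdges X) := by
  induction X using Finset.induction_on with
  | empty => simp [cliqueEdges]
  | insert v X hv ih =>
    have hX' : AffineIndependent ℝ (fun x : X => p x) :=
      hX.comp_embedding (Subtype.impEmbedding _ _ fun x hx => mem_insert_of_mem hx)
    rw [cliqueEdges_insert, erase_eq_of_notMem hv]
    refine linearIndepOn_rigidityRow_union_starEdges (ih hX') ?_ ?_
    · intro e he hve
      exact hv (mem_sym2_iff.1 (mem_filter.1 he).1 v hve)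
    · have := linearIndepOn_sum_smul_sub_of_affineIndependent hX (c := Pi.single v 1)
        (by simp) (mem_insert_self v X) (by simp)
      simpa [Pi.single_apply, hv] using this

end Rigidity

lemma choose_two_add_choose_two_succ (d : ℕ) : d.choose 2 + (d + 1).choose 2 = d * d := by
  induction d with
  | zero => rfl
  | succ d ih =>
    rw [Nat.choose_succ_succ' (d + 1), Nat.choose_one_right]
    linarith [Nat.choose_succ_succ' d 1, Nat.choose_one_right d]

section Generic

variable {V E : Type*} [DecidableEq V] [AddCommGroup E] [Module ℝ E]
  {p : V → E} {F : Finset (Sym2 V)} {A X : Finset V} {u v w : V}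

/-- A placement is generic if every set of edges whose rows are independent in some placement has
independent rows in this one. -/
def IsGeneric (p : V → E) : Prop :=
  ∀ (F : Set (Sym2 V)) (q : V → E),
    LinearIndepOn ℝ (rigidityRow q) F → LinearIndepOn ℝ (rigidityRow p) F

variable (V E) in
lemma exists_isGeneric [Finite V] : ∃ p : V → E, IsGeneric p := by
  obtain ⟨p, hp⟩ := exists_forall_linearIndepOn (rigidityRow (V := V) (E := E))
  exact ⟨p, hp⟩

namespace IsGeneric

variable [FiniteDimensional ℝ E]

lemma affineIndependent (hp : IsGeneric p) (hX : #X ≤ finrank ℝ E + 1) :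
    AffineIndependent ℝ (fun x : X => p x) := by
  obtain ⟨q, hq⟩ := exists_affineIndependent_coe hX
  have clique := hp _ q (linearIndepOn_rigidityRow_cliqueEdges hq)
  rw [affineIndependent_coe_iff]
  intro c hc hcp u hu
  by_contra hcu
  obtain ⟨v, hv, hcv⟩ : ∃ v ∈ X.erase u, c v ≠ 0 := by
    refine exists_ne_zero_of_sum_ne_zero fun h => hcu ?_
    rwa [← add_sum_erase X c hu, h, add_zero] at hc
  obtain ⟨hvu, hv⟩ := mem_erase.1 hv
  rw [← insert_erase (mk_mem_cliqueEdges.2 ⟨hu, hv, hvu.symm⟩), coe_insert,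
    linearIndepOn_insert (by simp)] at clique
  refine clique.2 (rigidityRow_mem_of_affine_dependence hc hcp hu hv hvu.symm hcu hcv ?_)
  exact fun e he hne => Submodule.subset_span (Set.mem_image_of_mem _ (by simp [he, hne]))

lemma linearIndepOn_union_starEdges (hp : IsGeneric p) (hF : LinearIndepOn ℝ (rigidityRow p) F)
    (hv : ∀ e ∈ F, v ∉ e) (hvA : v ∉ A) (hA : #A ≤ finrank ℝ E) :
    LinearIndepOn ℝ (rigidityRow p) ↑(F ∪ starEdges v A) := by
  refine linearIndepOn_rigidityRow_union_starEdges hF hv ?_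
  have hvA' : AffineIndependent ℝ (fun x : (insert v A : Finset V) => p x) :=
    hp.affineIndependent (by grind)
  have := linearIndepOn_sum_smul_sub_of_affineIndependent hvA' (c := Pi.single v 1)
    (by simp) (mem_insert_self v A) (by simp)
  simpa [Pi.single_apply, hvA] using this

lemma linearIndepOn_union_starEdges_of_insert (hp : IsGeneric p)
    (hF : LinearIndepOn ℝ (rigidityRow p) ↑(insert s(u, w) F)) (huwF : s(u, w) ∉ F)
    (hv : ∀ e ∈ F, v ∉ e) (hvA : v ∉ A) (hu : u ∈ A) (hw : w ∈ A) (huw : u ≠ w)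
    (hA : #A ≤ finrank ℝ E + 1) :
    LinearIndepOn ℝ (rigidityRow p) ↑(F ∪ starEdges v A) := by
  have ne_v {x : V} (hx : x ∈ A) : x ≠ v := fun h => hvA (h ▸ hx)
  let q : V → E := Function.update p v ((2⁻¹ : ℝ) • p u + (2⁻¹ : ℝ) • p w)
  have q_eq {x : V} (hx : x ∈ A) : q x = p x := Function.update_of_ne (ne_v hx) _ _
  have q_v : q v = (2⁻¹ : ℝ) • q u + (2⁻¹ : ℝ) • q w := by
    rw [q_eq hu, q_eq hw]
    exact Function.update_self ..
  refine hp _ q ?_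
  rw [← insert_erase hw]
  refine linearIndepOn_rigidityRow_union_starEdges_of_midpoint q_v (ne_v hu).symm (ne_v hw).symm
    ?_ huwF hv (mem_erase.2 ⟨huw, hu⟩) ?_
  · refine (linearIndepOn_congr fun e he => rigidityRow_update_of_notMem ?_ _).2 hF
    rcases mem_insert.1 (mem_coe.1 he) with rfl | he
    · simp [(ne_v hu).symm, (ne_v hw).symm]
    · exact hv e he
  · have midpoint := linearIndepOn_sum_smul_sub_of_affineIndependent (hp.affineIndependent hA)
      (c := Pi.single u 2⁻¹ + Pi.single w 2⁻¹) (by simp [sum_add_distrib, hu, hw]; norm_num) hw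
      (by simp [huw.symm])
    refine (linearIndepOn_congr fun x hx => ?_).2 midpoint
    rw [q_eq (mem_of_mem_erase hx), q_v, q_eq hu, q_eq hw]
    simp [add_smul, sum_add_distrib, Pi.single_apply, hu, hw]

lemma rigidityRow_mem_of_card_eq (hp : IsGeneric p) (hA : #A = finrank ℝ E) (hv : v ∉ A)
    (hw : w ∉ A) (hvw : v ≠ w) {N : Submodule ℝ (V → E)}
    (hwA : ∀ e ∈ cliqueEdges (insert w A), rigidityRow p e ∈ N)
    (hvA : ∀ e ∈ starEdges v A, rigidityRow p e ∈ N) : rigidityRow p s(v, w) ∈ N := by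
  let X := insert v (insert w A)
  have hX : ¬ AffineIndependent ℝ (fun x : X => p x) := fun h => by
    have := h.card_le_finrank_succ
    rw [Fintype.card_coe] at this
    have := Submodule.finrank_le (vectorSpan ℝ (Set.range fun x : X => p x))
    grind
  rw [affineIndependent_coe_iff] at hX
  push Not at hX
  obtain ⟨c, hc, hcp, x, hx, hcx⟩ := hX
  have ne_zero {y : V} (hy : y ∈ X) (hcard : #(X.erase y) ≤ finrank ℝ E + 1) : c y ≠ 0 := by
    intro hcy
    have := affineIndependent_coe_iff.1 (hp.affineIndependent hcard) c
      (by rwa [← add_sum_erase X c hy, hcy, zero_add] at hc)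
      (by rwa [← add_sum_erase X _ hy, hcy, zero_smul, zero_add] at hcp) x
    exact hcx (this (mem_erase.2 ⟨fun h => hcx (h ▸ hcy), hx⟩))
  refine rigidityRow_mem_of_affine_dependence hc hcp (by grind) (by grind) hvw
    (ne_zero (by grind) (by grind)) (ne_zero (by grind) (by grind)) fun e he hne => ?_
  rw [cliqueEdges_insert, mem_union] at he
  rcases he with he | he
  · exact hwA e he
  · obtain ⟨y, hy, rfl⟩ := mem_starEdges.1 he
    exact hvA _ (mem_starEdges.2 ⟨y, by grind, rfl⟩)

lemma image_cliqueEdges_insert_subset_span (hp : IsGeneric p) (hA : #A = finrank ℝ E)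
    (hAX : A ⊆ X) (hv : v ∉ X) : rigidityRow p '' cliqueEdges (insert v X) ⊆
      Submodule.span ℝ (rigidityRow p '' ↑(cliqueEdges X ∪ starEdges v A)) := by
  set N := Submodule.span ℝ (rigidityRow p '' ↑(cliqueEdges X ∪ starEdges v A))
  have mem_N {e : Sym2 V} (he : e ∈ cliqueEdges X ∪ starEdges v A) : rigidityRow p e ∈ N :=
    Submodule.subset_span (Set.mem_image_of_mem _ (mem_coe.2 he))
  rintro _ ⟨e, he, rfl⟩
  rw [mem_coe, cliqueEdges_insert, erase_eq_of_notMem hv, mem_union] at he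
  rcases he with he | he
  · exact mem_N (mem_union_left _ he)
  obtain ⟨w, hw, rfl⟩ := mem_starEdges.1 he
  by_cases hwA : w ∈ A
  · exact mem_N (mem_union_right _ (mem_starEdges.2 ⟨w, hwA, rfl⟩))
  refine hp.rigidityRow_mem_of_card_eq hA (fun h => hv (hAX h)) hwA (fun h => hv (h ▸ hw))
    (fun e he => mem_N (mem_union_left _ ?_)) fun e he => mem_N (mem_union_right _ he)
  induction e with | _ x y =>
  rw [mk_mem_cliqueEdges] at he ⊢
  grind

lemma vectorRank_cliqueEdges_add_choose_le (hp : IsGeneric p) (hX : finrank ℝ E ≤ #X) :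
    vectorRank ℝ (rigidityRow p) (cliqueEdges X) + (finrank ℝ E + 1).choose 2 ≤
      finrank ℝ E * #X := by
  induction X using Finset.strongInduction with | H X ih =>
  obtain hX | hX := hX.eq_or_lt
  · have hcard := vectorRank_le_card (K := ℝ) (R := rigidityRow p) (F := cliqueEdges X)
    rw [card_cliqueEdges, ← hX] at hcard
    rw [← hX, ← choose_two_add_choose_two_succ]
    omega
  · obtain ⟨v, hv⟩ := card_pos.1 (Nat.zero_lt_of_lt hX)
    obtain ⟨A, hAX, hA⟩ := exists_subset_card_eq
      (show finrank ℝ E ≤ #(X.erase v) by rw [card_erase_of_mem hv]; omega)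
    have hstar := vectorRank_le_card (K := ℝ) (R := rigidityRow p) (F := starEdges v A)
    rw [card_starEdges, hA] at hstar
    have hspan := (vectorRank_le_of_image_subset_span
      (hp.image_cliqueEdges_insert_subset_span hA hAX (notMem_erase v X))).trans
      vectorRank_union_le
    rw [insert_erase hv] at hspan
    have := ih (X.erase v) (erase_ssubset hv) (hA ▸ card_le_card hAX)
    rw [← card_erase_add_one hv, mul_add_one]
    omega

theorem card_add_choose_le (hp : IsGeneric p) (hF : LinearIndepOn ℝ (rigidityRow p) F)
    (hFX : F ⊆ X.sym2) (hX : finrank ℝ E ≤ #X) :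
    #F + (finrank ℝ E + 1).choose 2 ≤ finrank ℝ E * #X := by
  have hFX' : F ⊆ cliqueEdges X := fun e he => by
    refine mem_filter.2 ⟨hFX he, fun hdiag => hF.ne_zero (mem_coe.2 he) ?_⟩
    induction e with | _ x y =>
    obtain rfl : x = y := hdiag
    simp [rigidityRow_mk]
  exact (Nat.add_le_add_right (card_le_vectorRank hF hFX') _).trans
    (hp.vectorRank_cliqueEdges_add_choose_le hX)

end IsGeneric

end Generic

/-! ### The doubled generic rigidity matroid -/

section UnionIndepFinset

variable {K W ι : Type*} [Field K] [AddCommGroup W] [Module K W] [DecidableEq ι] {R : ι → W}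
  {F F₁ F₂ : Finset ι}

lemma isUnionIndep_of_subset_union (h₁ : LinearIndepOn K R F₁) (h₂ : LinearIndepOn K R F₂)
    (hF : F ⊆ F₁ ∪ F₂) : IsUnionIndep K R F := by
  refine ⟨↑(F ∩ F₁), ↑(F ∩ F₂), ?_, h₁.mono (by simp), h₂.mono (by simp)⟩
  rw [← coe_union, ← inter_union_distrib_left, inter_eq_left.2 hF]

lemma exists_disjoint_of_isUnionIndep (h : IsUnionIndep K R F) :
    ∃ F₁ F₂, Disjoint F₁ F₂ ∧ F₁ ∪ F₂ = F ∧ LinearIndepOn K R F₁ ∧ LinearIndepOn K R F₂ := by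
  obtain ⟨S₁, S₂, hS, h₁, h₂⟩ := h
  lift S₁ to Finset ι using F.finite_toSet.subset (hS ▸ Set.subset_union_left)
  lift S₂ to Finset ι using F.finite_toSet.subset (hS ▸ Set.subset_union_right)
  refine ⟨S₁, S₂ \ S₁, disjoint_sdiff, ?_, h₁, h₂.mono (by simp)⟩
  rw [union_sdiff_self_eq_union]
  exact mod_cast hS

end UnionIndepFinset

section Cardinality

variable {α : Type*} {A B : Finset α} {a b n : ℕ}

lemma exists_union_eq_card_le_of_subset [DecidableEq α] (hB : B ⊆ A) (hBa : #B ≤ a)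
    (hA : #A ≤ a + b) : ∃ A₁ A₂, B ⊆ A₁ ∧ A₁ ∪ A₂ = A ∧ #A₁ ≤ a ∧ #A₂ ≤ b := by
  obtain ⟨A₁, hBA₁, hA₁, hcard⟩ := exists_subsuperset_card_eq hB
    (le_min hBa (card_le_card hB)) (min_le_right a #A)
  refine ⟨A₁, A \ A₁, hBA₁, union_sdiff_of_subset hA₁, by omega, ?_⟩
  rw [card_sdiff_of_subset hA₁]
  omega

lemma exists_forall_card_fiber_eq (h : n * a ≤ #A) :
    ∃ label : α → Fin (n + 1), ∀ i ≠ Fin.last n, #{x ∈ A | label x = i} = a := by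
  classical
  obtain ⟨f⟩ : Nonempty (Fin n × Fin a ↪ A) :=
    Function.Embedding.nonempty_of_card_le (by simpa using h)
  let g : Fin n × Fin a ↪ α := f.trans (.subtype _)
  let label : α → Fin (n + 1) := Function.extend g (fun z => z.1.castSucc) fun _ => Fin.last n
  have label_g (z) : label (g z) = z.1.castSucc := g.injective.extend_apply _ _ z
  refine ⟨label, fun i hi => ?_⟩
  obtain ⟨i, rfl⟩ := Fin.exists_castSucc_eq.2 hi
  have fiber_eq : ({x ∈ A | label x = i.castSucc} : Finset α) =
      univ.image fun j => g (i, j) := by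
    ext x
    simp only [mem_filter, mem_image, mem_univ, true_and]
    refine ⟨fun ⟨_, hx⟩ => ?_, ?_⟩
    · by_cases hxg : ∃ z, g z = x
      · obtain ⟨z, rfl⟩ := hxg
        rw [label_g, Fin.castSucc_inj] at hx
        exact ⟨z.2, by rw [← hx]⟩
      · rw [show label x = Fin.last n from Function.extend_apply' _ _ _ hxg] at hx
        exact absurd hx.symm hi
    · rintro ⟨j, rfl⟩
      exact ⟨(f (i, j)).2, label_g _⟩
  rw [fiber_eq, card_image_of_injective _ fun j j' h => (Prod.ext_iff.1 (g.injective h)).2]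
  simp

end Cardinality

section Doubling

variable {V E : Type*} [DecidableEq V] [AddCommGroup E] [Module ℝ E]
  {p : V → E} {F : Finset (Sym2 V)} {A B C X Y : Finset V} {u v w : V}

lemma card_union_starEdges (hv : ∀ e ∈ F, v ∉ e) : #(F ∪ starEdges v A) = #F + #A := by
  rw [card_union_of_disjoint, card_starEdges]
  refine disjoint_left.2 fun e he hstar => ?_
  obtain ⟨x, -, rfl⟩ := mem_starEdges.1 hstar
  exact hv _ he (Sym2.mem_mk_left v x)

/-- The edges of the complete bipartite graph between `Y` and `A`. -/
def joinEdges (Y A : Finset V) : Finset (Sym2 V) := Y.biUnion (starEdges · A)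

lemma mem_joinEdges {e : Sym2 V} : e ∈ joinEdges Y A ↔ ∃ y ∈ Y, ∃ x ∈ A, s(y, x) = e := by
  simp [joinEdges, mem_starEdges]

namespace IsGeneric

variable [FiniteDimensional ℝ E]

lemma linearIndepOn_union_joinEdges (hp : IsGeneric p) (hF : LinearIndepOn ℝ (rigidityRow p) F)
    (hY : ∀ y ∈ Y, ∀ e ∈ F, y ∉ e) (hYA : Disjoint Y A) (hA : #A ≤ finrank ℝ E) :
    LinearIndepOn ℝ (rigidityRow p) ↑(F ∪ joinEdges Y A) ∧
      #(F ∪ joinEdges Y A) = #F + #Y * #A := by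
  induction Y using Finset.induction_on with
  | empty => simpa [joinEdges] using hF
  | insert v Y hv ih =>
    rw [disjoint_insert_left] at hYA
    rw [forall_mem_insert] at hY
    obtain ⟨ih, ihcard⟩ := ih hY.2 hYA.2
    have hvF : ∀ e ∈ F ∪ joinEdges Y A, v ∉ e := by
      intro e he
      rcases mem_union.1 he with he | he
      · exact hY.1 e he
      · obtain ⟨y, hy, x, hx, rfl⟩ := mem_joinEdges.1 he
        grind
    have union_insert_eq :
        F ∪ joinEdges (insert v Y) A = (F ∪ joinEdges Y A) ∪ starEdges v A := by
      rw [joinEdges, biUnion_insert, union_comm (starEdges v A), union_assoc]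
      rfl
    rw [union_insert_eq]
    refine ⟨hp.linearIndepOn_union_starEdges ih hvF hYA.1 hA, ?_⟩
    rw [card_union_starEdges hvF, ihcard, card_insert_of_notMem hv]
    ring

end IsGeneric

/-- `F` is a set of edges within `C` with independent rows, such that the labels of the ends of
each edge of `F` form a pair in `P`. Used to see that certain independent sets are disjoint. -/
structure IsLabelledIndep {ι : Type*} (p : V → E) (label : V → ι) (C : Finset V)
    (P : Finset (Sym2 ι)) (F : Finset (Sym2 V)) : Prop where
  linearIndepOn : LinearIndepOn ℝ (rigidityRow p) F
  subset_sym2 : F ⊆ C.sym2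
  map_mem : ∀ e ∈ F, e.map label ∈ P

section Labelled

variable [FiniteDimensional ℝ E] {ι : Type*} [DecidableEq ι] {label : V → ι}

lemma IsGeneric.isLabelledIndep_cliqueEdges (hp : IsGeneric p) {i : ι}
    (hi : #{x ∈ C | label x = i} ≤ finrank ℝ E) :
    IsLabelledIndep p label C {s(i, i)} (cliqueEdges {x ∈ C | label x = i}) where
  linearIndepOn :=
    linearIndepOn_rigidityRow_cliqueEdges (hp.affineIndependent (hi.trans (Nat.le_succ _)))
  subset_sym2 := (filter_subset _ _).trans (sym2_mono (filter_subset _ _))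
  map_mem e he := by
    induction e with | _ x y =>
    simp only [mk_mem_cliqueEdges, mem_filter] at he
    simp [he]

lemma IsGeneric.exists_isLabelledIndep_insert (hp : IsGeneric p) {P : Finset (Sym2 ι)}
    (hF : IsLabelledIndep p label C P F) {i j : ι} (hi : ∀ e ∈ P, i ∉ e) (hij : i ≠ j)
    (hj : #{x ∈ C | label x = j} ≤ finrank ℝ E) :
    ∃ F', IsLabelledIndep p label C (insert s(i, j) P) F' ∧
      #F' = #F + #{x ∈ C | label x = i} * #{x ∈ C | label x = j} := by
  obtain ⟨hindep, hcard⟩ := hp.linearIndepOn_union_joinEdges hF.linearIndepOn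
    (Y := {x ∈ C | label x = i}) (A := {x ∈ C | label x = j})
    (fun y hy e he hye => hi _ (hF.map_mem e he)
      (Sym2.mem_map.2 ⟨y, hye, (mem_filter.1 hy).2⟩))
    (disjoint_filter.2 fun x _ hxi hxj => hij (hxi.symm.trans hxj)) hj
  refine ⟨_, ⟨hindep, union_subset hF.subset_sym2 ?_, fun e he => ?_⟩, hcard⟩
  · intro e he
    obtain ⟨y, hy, x, hx, rfl⟩ := mem_joinEdges.1 he
    exact mk_mem_sym2_iff.2 ⟨mem_of_mem_filter _ hy, mem_of_mem_filter _ hx⟩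
  · rcases mem_union.1 he with he | he
    · exact mem_insert_of_mem (hF.map_mem e he)
    · obtain ⟨y, hy, x, hx, rfl⟩ := mem_joinEdges.1 he
      simp [(mem_filter.1 hy).2, (mem_filter.1 hx).2]

/-- Pairs of labels such that joining the corresponding parts of a clique gives a Maxwell-tight
graph. They are chosen so that reversing the labels `0, …, 4` gives a disjoint set of pairs. -/
def tightLabels : Finset (Sym2 (Fin 6)) := {s(4, 1), s(3, 2), s(5, 0), s(2, 0), s(1, 0), s(0, 0)}

lemma IsGeneric.exists_isLabelledIndep (hp : IsGeneric p) {label : V → Fin 6}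
    (hlabel : ∀ i ≠ 5, #{x ∈ C | label x = i} = finrank ℝ E) :
    ∃ F, IsLabelledIndep p label C tightLabels F ∧
      #F + (finrank ℝ E + 1).choose 2 = finrank ℝ E * #C := by
  have part_card_le (i : Fin 6) (hi : i ≠ 5) : #{x ∈ C | label x = i} ≤ finrank ℝ E :=
    (hlabel i hi).le
  obtain ⟨F₁, h₁, c₁⟩ := hp.exists_isLabelledIndep_insert
    (hp.isLabelledIndep_cliqueEdges (part_card_le 0 (by decide)))
    (i := 1) (by decide) (by decide) (part_card_le 0 (by decide))
  obtain ⟨F₂, h₂, c₂⟩ := hp.exists_isLabelledIndep_insert h₁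
    (i := 2) (by decide) (by decide) (part_card_le 0 (by decide))
  obtain ⟨F₃, h₃, c₃⟩ := hp.exists_isLabelledIndep_insert h₂
    (i := 5) (by decide) (by decide) (part_card_le 0 (by decide))
  obtain ⟨F₄, h₄, c₄⟩ := hp.exists_isLabelledIndep_insert h₃
    (i := 3) (by decide) (by decide) (part_card_le 2 (by decide))
  obtain ⟨F₅, h₅, c₅⟩ := hp.exists_isLabelledIndep_insert h₄
    (i := 4) (by decide) (by decide) (part_card_le 1 (by decide))
  refine ⟨F₅, h₅, ?_⟩
  have card_C : #C = ∑ i, #{x ∈ C | label x = i} :=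
    card_eq_sum_card_fiberwise (by simp [Set.MapsTo])
  rw [Fin.sum_univ_six] at card_C
  rw [card_cliqueEdges] at c₁
  simp only [hlabel 0 (by decide), hlabel 1 (by decide), hlabel 2 (by decide),
    hlabel 3 (by decide), hlabel 4 (by decide)] at c₁ c₂ c₃ c₄ c₅ card_C
  rw [card_C]
  linarith [choose_two_add_choose_two_succ (finrank ℝ E)]

end Labelled

/-- The vectors `Q` represent the union with itself of the generic rigidity matroid in `E`. -/
def IsGenericDoubling (Q : Sym2 V → (V → E) × (V → E)) : Prop :=
  ∃ p : V → E, IsGeneric p ∧ ∀ F, LinearIndepOn ℝ Q F ↔ IsUnionIndep ℝ (rigidityRow p) F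

variable (V E) in
lemma exists_isGenericDoubling [Finite V] :
    ∃ Q : Sym2 V → (V → E) × (V → E), IsGenericDoubling Q := by
  obtain ⟨p, hp⟩ := exists_isGeneric V E
  obtain ⟨Q, hQ⟩ := exists_forall_linearIndepOn_iff_isUnionIndep (K := ℝ) (rigidityRow p)
  exact ⟨Q, p, hp, hQ⟩

namespace IsGenericDoubling

variable [FiniteDimensional ℝ E] {Q : Sym2 V → (V → E) × (V → E)}

lemma linearIndepOn_union_starEdges (hQ : IsGenericDoubling Q) (hF : LinearIndepOn ℝ Q F)
    (hv : ∀ e ∈ F, v ∉ e) (hvA : v ∉ A) (hA : #A ≤ 2 * finrank ℝ E) :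
    LinearIndepOn ℝ Q ↑(F ∪ starEdges v A) := by
  obtain ⟨p, hp, hQ⟩ := hQ
  rw [hQ] at hF ⊢
  obtain ⟨F₁, F₂, -, rfl, h₁, h₂⟩ := exists_disjoint_of_isUnionIndep hF
  obtain ⟨A₁, A₂, -, rfl, hA₁, hA₂⟩ := exists_union_eq_card_le_of_subset (empty_subset A)
    (Nat.zero_le _) (two_mul (finrank ℝ E) ▸ hA)
  refine isUnionIndep_of_subset_union
    (hp.linearIndepOn_union_starEdges h₁ (fun e he => hv e (mem_union_left _ he))
      (fun h => hvA (mem_union_left _ h)) hA₁)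
    (hp.linearIndepOn_union_starEdges h₂ (fun e he => hv e (mem_union_right _ he))
      (fun h => hvA (mem_union_right _ h)) hA₂) ?_
  rw [starEdges, image_union, ← starEdges, ← starEdges, union_union_union_comm]

lemma linearIndepOn_union_starEdges_of_insert (hQ : IsGenericDoubling Q) (hE : 0 < finrank ℝ E)
    (hF : LinearIndepOn ℝ Q ↑(insert s(u, w) F)) (huwF : s(u, w) ∉ F)
    (hv : ∀ e ∈ F, v ∉ e) (hvA : v ∉ A) (hu : u ∈ A) (hw : w ∈ A) (huw : u ≠ w)
    (hA : #A ≤ 2 * finrank ℝ E + 1) : LinearIndepOn ℝ Q ↑(F ∪ starEdges v A) := by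
  obtain ⟨p, hp, hQ⟩ := hQ
  rw [hQ] at hF ⊢
  obtain ⟨F₁, F₂, hdisj, hunion, h₁, h₂⟩ := exists_disjoint_of_isUnionIndep hF
  wlog huwF₁ : s(u, w) ∈ F₁ generalizing F₁ F₂
  · refine this F₂ F₁ hdisj.symm (union_comm F₁ F₂ ▸ hunion) h₂ h₁ ?_
    exact (mem_union.1 (hunion ▸ mem_insert_self _ F)).resolve_left huwF₁
  obtain ⟨A₁, A₂, huwA₁, rfl, hA₁, hA₂⟩ := exists_union_eq_card_le_of_subset
    (B := {u, w}) (A := A) (a := finrank ℝ E + 1) (b := finrank ℝ E) (by grind)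
    (card_le_two.trans (by omega)) (by omega)
  obtain rfl : F = F₁.erase s(u, w) ∪ F₂ := by
    rw [← erase_insert huwF, ← hunion, erase_union_distrib,
      erase_eq_of_notMem (disjoint_left.1 hdisj huwF₁)]
  refine isUnionIndep_of_subset_union
    (hp.linearIndepOn_union_starEdges_of_insert (by rwa [insert_erase huwF₁]) (notMem_erase _ _)
      (fun e he => hv e (mem_union_left _ he)) (fun h => hvA (mem_union_left _ h))
      (huwA₁ (by simp)) (huwA₁ (by simp)) huw hA₁)
    (hp.linearIndepOn_union_starEdges h₂ (fun e he => hv e (mem_union_right _ he))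
      (fun h => hvA (mem_union_right _ h)) hA₂) ?_
  rw [starEdges, image_union, ← starEdges, ← starEdges, union_union_union_comm]

lemma card_add_choose_le (hQ : IsGenericDoubling Q) (hF : LinearIndepOn ℝ Q F)
    (hFX : F ⊆ X.sym2) (hX : finrank ℝ E ≤ #X) :
    #F + 2 * (finrank ℝ E + 1).choose 2 ≤ 2 * finrank ℝ E * #X := by
  obtain ⟨p, hp, hQ⟩ := hQ
  obtain ⟨F₁, F₂, hdisj, rfl, h₁, h₂⟩ := exists_disjoint_of_isUnionIndep ((hQ F).1 hF)
  have hF₁ := hp.card_add_choose_le h₁ (union_subset_left hFX) hX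
  have hF₂ := hp.card_add_choose_le h₂ (union_subset_right hFX) hX
  rw [card_union_of_disjoint hdisj]
  linarith

lemma exists_linearIndepOn_card_add_choose_eq (hQ : IsGenericDoubling Q)
    (hC : 5 * finrank ℝ E ≤ #C) :
    ∃ F : Finset (Sym2 V), LinearIndepOn ℝ Q F ∧ F ⊆ C.sym2 ∧
      #F + 2 * (finrank ℝ E + 1).choose 2 = 2 * finrank ℝ E * #C := by
  obtain ⟨p, hp, hQ⟩ := hQ
  obtain ⟨label, hlabel⟩ := exists_forall_card_fiber_eq hC
  let rev : Equiv.Perm (Fin 6) := Equiv.swap 0 4 * Equiv.swap 1 3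
  have rev_symm_ne : ∀ i ≠ 5, rev.symm i ≠ 5 := by decide
  obtain ⟨F₁, h₁, c₁⟩ := hp.exists_isLabelledIndep hlabel
  obtain ⟨F₂, h₂, c₂⟩ := hp.exists_isLabelledIndep (label := rev ∘ label) (C := C) fun i hi => by
    simpa only [Function.comp_apply, ← Equiv.eq_symm_apply] using hlabel _ (rev_symm_ne i hi)
  have map_rev_notMem : ∀ f ∈ tightLabels, f.map rev ∉ tightLabels := by decide
  have hdisj : Disjoint F₁ F₂ := disjoint_left.2 fun e he₁ he₂ =>
    map_rev_notMem _ (h₁.map_mem e he₁) (by simpa only [Sym2.map_map] using h₂.map_mem e he₂)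
  refine ⟨F₁ ∪ F₂, (hQ _).2 (isUnionIndep_of_subset_union h₁.linearIndepOn h₂.linearIndepOn le_rfl),
    union_subset h₁.subset_sym2 h₂.subset_sym2, ?_⟩
  rw [card_union_of_disjoint hdisj]
  linarith

end IsGenericDoubling

end Doubling

/-! ### Averaging over vertex orderings -/

section Before

variable {V ι : Type*} [LinearOrder ι] {σ : V ≃ ι} {M : Finset V} {v : V}

/-- The elements of `M` preceding `v` in the ordering of `V` given by `σ`. -/
def before (σ : V ≃ ι) (M : Finset V) (v : V) : Finset V := {x ∈ M | σ x < σ v}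

lemma mem_before {x : V} : x ∈ before σ M v ↔ x ∈ M ∧ σ x < σ v := mem_filter

lemma notMem_before_self : v ∉ before σ M v := fun h => lt_irrefl _ (mem_before.1 h).2

lemma before_trans (τ : V ≃ V) (σ : V ≃ ι) (M : Finset V) (v : V) :
    (before (τ.trans σ) M v).map τ.toEmbedding = before σ (M.map τ.toEmbedding) (τ v) := by
  ext y
  simp only [mem_map_equiv, mem_before, Equiv.trans_apply, Equiv.apply_symm_apply]

lemma before_insert_self [DecidableEq V] : before σ (insert v M) v = before σ M v := by
  simp [before, filter_insert]

lemma before_insert_of_le [DecidableEq V] {x : V} (h : σ x ≤ σ v) :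
    before σ (insert v M) x = before σ M x := by
  simp [before, filter_insert, h.not_gt]

lemma add_sum_le_of_add_le_insert_before [DecidableEq V] {N : Type*} [AddCommMonoid N]
    [Preorder N] [AddLeftMono N] {r : Finset V → N} {g : V → N}
    (hg : ∀ v ∈ M, r (before σ M v) + g v ≤ r (insert v (before σ M v))) :
    r ∅ + ∑ v ∈ M, g v ≤ r M := by
  induction M using Finset.induction_on_max_value σ with
  | empty => simp
  | insert v M hv hmax ih =>
    have before_eq : before σ (insert v M) v = M := by
      rw [before_insert_self]
      refine filter_true_of_mem fun x hx => (hmax x hx).lt_of_ne fun h => hv ?_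
      rwa [← σ.injective h]
    have hM : r ∅ + ∑ x ∈ M, g x ≤ r M := ih fun x hx => by
      simpa only [before_insert_of_le (hmax x hx)] using hg x (mem_insert_of_mem hx)
    have hgv := hg v (mem_insert_self v M)
    rw [before_eq] at hgv
    calc r ∅ + ∑ x ∈ insert v M, g x = g v + (r ∅ + ∑ x ∈ M, g x) := by
          rw [sum_insert hv, add_left_comm]
      _ ≤ g v + r M := by gcongr
      _ ≤ r (insert v M) := add_comm (r M) (g v) ▸ hgv

lemma sum_card_before (σ : V ≃ ι) (M : Finset V) (f : ℕ → ℕ) :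
    ∑ v ∈ M, f #(before σ M v) = ∑ j ∈ range #M, f j := by
  classical
  have step : ∀ v ∈ M, ∑ j ∈ range #(before σ M v), f j + f #(before σ M v) =
      ∑ j ∈ range #(insert v (before σ M v)), f j := fun v _ => by
    rw [card_insert_of_notMem notMem_before_self, sum_range_succ]
  apply le_antisymm
  · simpa using add_sum_le_of_add_le_insert_before (σ := σ) (r := fun X => ∑ j ∈ range #X, f j)
      (g := fun v => f #(before σ M v)) fun v hv => (step v hv).le
  · have h := add_sum_le_of_add_le_insert_before (N := ℕᵒᵈ) (σ := σ)
      (r := fun X => OrderDual.toDual (∑ j ∈ range #X, f j))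
      (g := fun v => OrderDual.toDual (f #(before σ M v))) fun v hv => (step v hv).ge
    rw [card_empty, range_zero, sum_empty, toDual_zero, zero_add] at h
    exact h

variable [DecidableEq V] [Fintype V] [Fintype ι]

lemma card_mul_sum_card_before (hv : v ∈ M) (f : ℕ → ℕ) :
    #M * ∑ σ : V ≃ ι, f #(before σ M v) = Fintype.card (V ≃ ι) * ∑ j ∈ range #M, f j := by
  have sum_eq : ∀ x ∈ M,
      ∑ σ : V ≃ ι, f #(before σ M x) = ∑ σ : V ≃ ι, f #(before σ M v) := fun x hx => by
    have hM : M.map (Equiv.swap x v).toEmbedding = M := map_perm fun y hy => by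
      by_contra hyM
      exact hy (Equiv.swap_apply_of_ne_of_ne (by grind) (by grind))
    refine Fintype.sum_equiv ((Equiv.swap x v).equivCongr (.refl ι)) _ _ fun σ => ?_
    have card_eq := congrArg card (before_trans (Equiv.swap x v) σ M v)
    rw [card_map, hM, Equiv.swap_apply_right] at card_eq
    exact congrArg f card_eq.symm
  calc #M * ∑ σ : V ≃ ι, f #(before σ M v) = ∑ x ∈ M, ∑ σ : V ≃ ι, f #(before σ M x) := by
        rw [sum_congr rfl sum_eq, sum_const, smul_eq_mul]
    _ = Fintype.card (V ≃ ι) * ∑ j ∈ range #M, f j := by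
        rw [sum_comm]
        simp only [sum_card_before, sum_const, smul_eq_mul, card_univ]

lemma three_mul_card_filter_lt_and_lt {u w v : V} (huw : u ≠ w) (huv : u ≠ v) (hwv : w ≠ v) :
    3 * #{σ : V ≃ ι | σ u < σ v ∧ σ w < σ v} = Fintype.card (V ≃ ι) := by
  have card_eq_two (σ : V ≃ ι) : #(before σ {u, w, v} v) = 2 ↔ σ u < σ v ∧ σ w < σ v := by
    have subset : before σ {u, w, v} v ⊆ {u, w} := fun x hx => by
      rw [mem_before] at hx
      grind
    constructor
    · intro h
      have heq := eq_of_subset_of_card_le subset (by rw [h, card_pair huw])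
      exact ⟨(mem_before.1 (heq ▸ mem_insert_self u {w})).2,
        (mem_before.1 (heq ▸ mem_insert_of_mem (mem_singleton_self w))).2⟩
    · rintro ⟨hu, hw⟩
      rw [subset.antisymm fun x hx => mem_before.2 (by grind), card_pair huw]
  have h := card_mul_sum_card_before (ι := ι) (M := {u, w, v}) (v := v) (by simp)
    fun j => if j = 2 then 1 else 0
  rw [card_eq_three.2 ⟨u, w, v, huw, huv, hwv, rfl⟩] at h
  simpa [card_eq_two, sum_range_succ, sum_boole] using h

end Before

/-- The number of edges that can be added to an independent set of the doubled rigidity matroid in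
dimension `D / 2` by joining a new vertex to vertices of `A`: at most `D` in a `0`-extension, and
one more in a `1`-extension on the missing edge `uw`. -/
def extensionGain {V : Type*} [DecidableEq V] (D : ℕ) (u w : V) (A : Finset V) : ℕ :=
  if #A ≤ D then #A else if u ∈ A ∧ w ∈ A then D + 1 else D

section Averaging

variable {V ι : Type*} [DecidableEq V] [LinearOrder ι]

lemma add_ite_le_extensionGain_add (D : ℕ) (u w : V) (A : Finset V) :
    D + (if u ∈ A ∧ w ∈ A then 1 else 0) ≤ extensionGain D u w A + (D + 1 - #A) := by
  unfold extensionGain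
  split_ifs <;> omega

lemma two_mul_sum_range_sub_le (D m : ℕ) : 2 * ∑ j ∈ range m, (D - j) ≤ D * (D + 1) := by
  induction m generalizing D with
  | zero => simp
  | succ m ih =>
    rcases D with _ | D
    · simp
    · have := ih D
      simp only [sum_range_succ', Nat.add_sub_add_right]
      lia

lemma card_equiv_mul_le_sum_extensionGain [Fintype V] [Fintype ι] {D : ℕ} {u w v : V}
    {M : Finset V} (huw : u ≠ w) (hu : u ∈ M) (hw : w ∈ M) (hv : v ∉ M)
    (hM : 3 * ((D + 1) * (D + 2)) ≤ 2 * (#M + 1)) :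
    Fintype.card (V ≃ ι) * D ≤ ∑ σ : V ≃ ι, extensionGain D u w (before σ M v) := by
  set N := Fintype.card (V ≃ ι)
  have hlast : 3 * ∑ σ : V ≃ ι, (if u ∈ before σ M v ∧ w ∈ before σ M v then 1 else 0) = N := by
    have := three_mul_card_filter_lt_and_lt (ι := ι) huw (ne_of_mem_of_not_mem hu hv)
      (ne_of_mem_of_not_mem hw hv)
    simpa [mem_before, hu, hw, sum_boole] using this
  have hdeficit : 3 * ∑ σ : V ≃ ι, (D + 1 - #(before σ M v)) ≤ N := by
    have h := card_mul_sum_card_before (ι := ι) (mem_insert_self v M) fun j => D + 1 - j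
    simp only [before_insert_self, card_insert_of_notMem hv] at h
    have := two_mul_sum_range_sub_le (D + 1) (#M + 1)
    refine Nat.le_of_mul_le_mul_left (c := #M + 1) ?_ (by lia)
    calc _ = N * (3 * ∑ j ∈ range (#M + 1), (D + 1 - j)) := by rw [mul_left_comm, h]; ring
      _ ≤ N * (#M + 1) := by gcongr; lia
      _ = _ := mul_comm _ _
  have hsum := sum_le_sum fun (σ : V ≃ ι) (_ : σ ∈ univ) =>
    add_ite_le_extensionGain_add D u w (before σ M v)
  rw [sum_add_distrib, sum_add_distrib, sum_const, card_univ, smul_eq_mul] at hsum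
  lia

lemma exists_card_mul_le_sum_extensionGain [Finite V] [Nonempty (V ≃ ι)] {D : ℕ}
    {Y : Finset V} {u w : V → V} {M : V → Finset V} (huw : ∀ v ∈ Y, u v ≠ w v)
    (hu : ∀ v ∈ Y, u v ∈ M v) (hw : ∀ v ∈ Y, w v ∈ M v) (hv : ∀ v ∈ Y, v ∉ M v)
    (hM : ∀ v ∈ Y, 3 * ((D + 1) * (D + 2)) ≤ 2 * (#(M v) + 1)) :
    ∃ σ : V ≃ ι, #Y * D ≤ ∑ v ∈ Y, extensionGain D (u v) (w v) (before σ (M v) v) := by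
  have := Fintype.ofFinite V
  have := Fintype.ofEquiv V (Classical.arbitrary (V ≃ ι))
  suffices h : ∑ _σ : V ≃ ι, #Y * D ≤
      ∑ σ : V ≃ ι, ∑ v ∈ Y, extensionGain D (u v) (w v) (before σ (M v) v) by
    obtain ⟨σ, -, hσ⟩ := exists_le_of_sum_le univ_nonempty h
    exact ⟨σ, hσ⟩
  calc ∑ _σ : V ≃ ι, #Y * D = ∑ _v ∈ Y, Fintype.card (V ≃ ι) * D := by
        simp only [sum_const, smul_eq_mul, card_univ]; ring
    _ ≤ ∑ v ∈ Y, ∑ σ : V ≃ ι, extensionGain D (u v) (w v) (before σ (M v) v) :=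
        sum_le_sum fun v hvY => card_equiv_mul_le_sum_extensionGain (huw v hvY) (hu v hvY)
          (hw v hvY) (hv v hvY) (hM v hvY)
    _ = _ := sum_comm

end Averaging

/-! ### Graphs closed in the doubled rigidity matroid -/

section SpanClosure

variable {K W V : Type*} [Field K] [AddCommGroup W] [Module K W] {Q : Sym2 V → W}
  {G H : SimpleGraph V} {u w : V} {F : Finset (Sym2 V)}

variable (K) in
/-- The edge set of `H` is a flat of the linear matroid represented by `Q` on the edges of the
complete graph. -/
def IsSpanClosed (Q : Sym2 V → W) (H : SimpleGraph V) : Prop :=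
  ∀ ⦃u w⦄, u ≠ w → Q s(u, w) ∈ Submodule.span K (Q '' H.edgeSet) → H.Adj u w

variable (K) in
/-- The graph whose edge set is the flat spanned by the edges of `G` in the linear matroid
represented by `Q`. -/
def spanClosure (Q : Sym2 V → W) (G : SimpleGraph V) : SimpleGraph V where
  Adj u w := u ≠ w ∧ Q s(u, w) ∈ Submodule.span K (Q '' G.edgeSet)
  symm := ⟨fun u w h => ⟨h.1.symm, Sym2.eq_swap (a := u) (b := w) ▸ h.2⟩⟩
  loopless := ⟨fun _ h => h.1 rfl⟩

lemma le_spanClosure : G ≤ spanClosure K Q G := fun u w h =>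
  ⟨h.ne, Submodule.subset_span ⟨s(u, w), h, rfl⟩⟩

lemma isSpanClosed_spanClosure : IsSpanClosed K Q (spanClosure K Q G) := fun u w huw h => by
  refine ⟨huw, Submodule.span_le.2 ?_ h⟩
  rintro _ ⟨e, he, rfl⟩
  induction e with | _ x y => exact he.2

lemma IsSpanClosed.linearIndepOn_insert [DecidableEq V] (hH : IsSpanClosed K Q H) (huw : u ≠ w)
    (hnadj : ¬ H.Adj u w) (hF : LinearIndepOn K Q F) (hFH : (F : Set (Sym2 V)) ⊆ H.edgeSet) :
    LinearIndepOn K Q ↑(insert s(u, w) F) := by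
  rw [coe_insert]
  exact hF.insert fun h => hnadj (hH huw (Submodule.span_mono (Set.image_mono hFH) h))

end SpanClosure

section EdgesWithin

variable {V : Type*} {H : SimpleGraph V} {X : Finset V} {v : V} {F : Finset (Sym2 V)}

open scoped Classical in
/-- The edges of `H` with both endpoints in `X`. -/
noncomputable def edgesWithin (H : SimpleGraph V) (X : Finset V) : Finset (Sym2 V) :=
  {e ∈ X.sym2 | e ∈ H.edgeSet}

lemma mem_edgesWithin {e : Sym2 V} : e ∈ edgesWithin H X ↔ e ∈ X.sym2 ∧ e ∈ H.edgeSet := by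
  simp [edgesWithin]

lemma coe_subset_edgeSet (hF : F ⊆ edgesWithin H X) : (F : Set (Sym2 V)) ⊆ H.edgeSet :=
  fun _ he => (mem_edgesWithin.1 (hF he)).2

lemma notMem_of_mem_edgesWithin (hv : v ∉ X) (hF : F ⊆ edgesWithin H X) : ∀ e ∈ F, v ∉ e :=
  fun _ he hve => hv (mem_sym2_iff.1 (mem_edgesWithin.1 (hF he)).1 v hve)

lemma union_starEdges_subset_edgesWithin [DecidableEq V] {A : Finset V}
    (hF : F ⊆ edgesWithin H X) (hAX : A ⊆ X) (hvA : ∀ a ∈ A, H.Adj v a) :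
    F ∪ starEdges v A ⊆ edgesWithin H (insert v X) := by
  refine union_subset (fun e he => ?_) fun e he => ?_
  · obtain ⟨heX, heH⟩ := mem_edgesWithin.1 (hF he)
    exact mem_edgesWithin.2 ⟨sym2_mono (subset_insert v X) heX, heH⟩
  · obtain ⟨a, ha, rfl⟩ := mem_starEdges.1 he
    exact mem_edgesWithin.2 ⟨mk_mem_sym2_iff.2
      ⟨mem_insert_self v X, mem_insert_of_mem (hAX ha)⟩, hvA a ha⟩

end EdgesWithin

namespace IsGenericDoubling

variable {V E : Type*} [DecidableEq V] [AddCommGroup E] [Module ℝ E]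
  {Q : Sym2 V → (V → E) × (V → E)} {H : SimpleGraph V} {X A C : Finset V} {u v w x y : V}

lemma not_isDiag_of_mem (hQ : IsGenericDoubling Q) {F : Finset (Sym2 V)}
    (hF : LinearIndepOn ℝ Q F) : ∀ e ∈ F, ¬ e.IsDiag := by
  intro e he hdiag
  obtain ⟨p, -, hQ⟩ := hQ
  obtain ⟨F₁, F₂, -, rfl, h₁, h₂⟩ := exists_disjoint_of_isUnionIndep ((hQ F).1 hF)
  have row_eq_zero : rigidityRow p e = 0 := by
    induction e with | _ x y => rw [Sym2.mk_isDiag_iff.1 hdiag, rigidityRow_mk]; simp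
  rcases mem_union.1 he with he | he
  · exact h₁.ne_zero he row_eq_zero
  · exact h₂.ne_zero he row_eq_zero

variable [FiniteDimensional ℝ E]

lemma vectorRank_edgesWithin_add_card_le (hQ : IsGenericDoubling Q) (hv : v ∉ X) (hAX : A ⊆ X)
    (hvA : ∀ a ∈ A, H.Adj v a) (hA : #A ≤ 2 * finrank ℝ E) :
    vectorRank ℝ Q (edgesWithin H X) + #A ≤ vectorRank ℝ Q (edgesWithin H (insert v X)) := by
  obtain ⟨B, hBX, hB, hcard⟩ :=
    exists_subset_linearIndepOn_card_eq_vectorRank (K := ℝ) Q (edgesWithin H X)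
  have hvB := notMem_of_mem_edgesWithin hv hBX
  rw [← hcard, ← card_union_starEdges hvB]
  exact card_le_vectorRank (hQ.linearIndepOn_union_starEdges hB hvB (fun h => hv (hAX h)) hA)
    (union_starEdges_subset_edgesWithin hBX hAX hvA)

lemma vectorRank_edgesWithin_add_card_le_of_not_adj (hQ : IsGenericDoubling Q)
    (hE : 0 < finrank ℝ E) (hH : IsSpanClosed ℝ Q H) (hv : v ∉ X) (hAX : A ⊆ X)
    (hvA : ∀ a ∈ A, H.Adj v a) (hu : u ∈ A) (hw : w ∈ A) (huw : u ≠ w) (hnadj : ¬ H.Adj u w)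
    (hA : #A ≤ 2 * finrank ℝ E + 1) :
    vectorRank ℝ Q (edgesWithin H X) + #A ≤ vectorRank ℝ Q (edgesWithin H (insert v X)) := by
  obtain ⟨B, hBX, hB, hcard⟩ :=
    exists_subset_linearIndepOn_card_eq_vectorRank (K := ℝ) Q (edgesWithin H X)
  have hvB := notMem_of_mem_edgesWithin hv hBX
  have hBH := coe_subset_edgeSet hBX
  rw [← hcard, ← card_union_starEdges hvB]
  exact card_le_vectorRank (hQ.linearIndepOn_union_starEdges_of_insert hE
    (hH.linearIndepOn_insert huw hnadj hB hBH) (fun h => hnadj (hBH h)) hvB (fun h => hv (hAX h))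
    hu hw huw hA) (union_starEdges_subset_edgesWithin hBX hAX hvA)

lemma vectorRank_edgesWithin_add_extensionGain_le (hQ : IsGenericDoubling Q)
    (hE : 0 < finrank ℝ E) (hH : IsSpanClosed ℝ Q H) (hv : v ∉ X) (hAX : A ⊆ X)
    (hvA : ∀ a ∈ A, H.Adj v a) (huw : u ≠ w) (hnadj : ¬ H.Adj u w) :
    vectorRank ℝ Q (edgesWithin H X) + extensionGain (2 * finrank ℝ E) u w A ≤
      vectorRank ℝ Q (edgesWithin H (insert v X)) := by
  unfold extensionGain
  split_ifs with hA hmem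
  · exact hQ.vectorRank_edgesWithin_add_card_le hv hAX hvA hA
  · obtain ⟨B, huwB, hBA, hcard⟩ := exists_subsuperset_card_eq (s := {u, w}) (t := A)
      (n := 2 * finrank ℝ E + 1) (by grind) (card_le_two.trans (by lia)) (by lia)
    rw [← hcard]
    exact hQ.vectorRank_edgesWithin_add_card_le_of_not_adj hE hH hv (hBA.trans hAX)
      (fun a ha => hvA a (hBA ha)) (huwB (by simp)) (huwB (by simp)) huw hnadj hcard.le
  · obtain ⟨B, hBA, hcard⟩ := exists_subset_card_eq (not_le.1 hA).le
    have h := hQ.vectorRank_edgesWithin_add_card_le hv (hBA.trans hAX)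
      (fun a ha => hvA a (hBA ha)) hcard.le
    rwa [hcard] at h

lemma adj_of_isClique (hQ : IsGenericDoubling Q) (hH : IsSpanClosed ℝ Q H) (hCH : H.IsClique C)
    (hC : 5 * finrank ℝ E ≤ #C) (hx : x ∉ C) (hAC : A ⊆ C) (hxA : ∀ a ∈ A, H.Adj x a)
    (hA : 2 * finrank ℝ E ≤ #A) (hy : y ∈ C) : H.Adj x y := by
  by_contra hnadj
  obtain ⟨A', hA'A, hA'⟩ := exists_subset_card_eq hA
  obtain ⟨F, hF, hFC, hcard⟩ := hQ.exists_linearIndepOn_card_add_choose_eq hC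
  have hFH : F ⊆ edgesWithin H C := fun e he => by
    refine mem_edgesWithin.2 ⟨hFC he, ?_⟩
    have hdiag := hQ.not_isDiag_of_mem hF e he
    induction e with | _ a b =>
    obtain ⟨ha, hb⟩ := mk_mem_sym2_iff.1 (hFC he)
    exact hCH ha hb hdiag
  have hxF := notMem_of_mem_edgesWithin hx hFH
  have hunion := union_starEdges_subset_edgesWithin hFH (hA'A.trans hAC)
    fun a ha => hxA a (hA'A ha)
  have hindep := hH.linearIndepOn_insert (ne_of_mem_of_not_mem hy hx).symm hnadj
    (hQ.linearIndepOn_union_starEdges hF hxF (fun h => hx (hAC (hA'A h))) hA'.le)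
    (coe_subset_edgeSet hunion)
  have hsparse := hQ.card_add_choose_le hindep (X := insert x C)
    (insert_subset (mk_mem_sym2_iff.2 ⟨mem_insert_self x C, mem_insert_of_mem hy⟩)
      fun e he => (mem_edgesWithin.1 (hunion he)).1)
    (by rw [card_insert_of_notMem hx]; lia)
  rw [card_insert_of_notMem fun h => hnadj (coe_subset_edgeSet hunion h),
    card_union_starEdges hxF, hA', card_insert_of_notMem hx] at hsparse
  linarith

end IsGenericDoubling

/-! ### Simplicial vertices of highly connected graphs -/

section Connectivity

variable {V : Type*} {G H : SimpleGraph V} {c c' : ℕ} {u v w z : V}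

namespace KConnected

lemma mono_right (hG : KConnected G c) (hc : c' ≤ c) : KConnected G c' :=
  ⟨by have := hG.1; lia, fun S hfin hS => hG.2 S hfin (by lia)⟩

lemma mono_left (hG : KConnected G c) (hGH : G ≤ H) : KConnected H c :=
  ⟨hG.1, fun S hfin hS => (hG.2 S hfin hS).mono (SimpleGraph.comap_monotone _ hGH)⟩

lemma exists_adj_of_mem_of_notMem (hG : KConnected G c) {S : Finset V} {X : Set V} (hS : #S < c)
    (hu : u ∈ X) (huS : u ∉ S) (hw : w ∉ X) (hwS : w ∉ S) :
    ∃ x ∈ X, ∃ y ∉ X, x ∉ S ∧ y ∉ S ∧ G.Adj x y := by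
  obtain ⟨path⟩ := (hG.2 S S.finite_toSet (by rwa [Set.ncard_coe_finset])).preconnected
    ⟨u, huS⟩ ⟨w, hwS⟩
  obtain ⟨dart, -, hfst, hsnd⟩ := path.exists_boundary_dart {x | x.1 ∈ X} hu hw
  exact ⟨dart.fst, hfst, dart.snd, hsnd, dart.fst.2, dart.snd.2, dart.adj⟩

lemma le_degree [Fintype V] [DecidableRel G.Adj] (hG : KConnected G c) (v : V) :
    c ≤ G.degree v := by
  classical
  by_contra! hlt
  have hcard : #(insert v (G.neighborFinset v)) < #(univ : Finset V) := by
    have := hG.1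
    rw [Nat.card_eq_fintype_card] at this
    exact (card_insert_le _ _).trans_lt (by rw [card_univ, G.card_neighborFinset_eq_degree]; lia)
  obtain ⟨w, -, hw⟩ := exists_mem_notMem_of_card_lt_card hcard
  rw [mem_insert, not_or] at hw
  obtain ⟨x, rfl, y, -, -, hy, hxy⟩ := hG.exists_adj_of_mem_of_notMem (X := {v}) hlt rfl
    (G.notMem_neighborFinset_self v) hw.1 hw.2
  exact hy ((G.mem_neighborFinset x y).2 hxy)

end KConnected

/-- The neighbours of `v` are pairwise adjacent. -/
def IsSimplicial (H : SimpleGraph V) (v : V) : Prop := H.IsClique (H.neighborSet v)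

lemma IsSimplicial.isClique_insert (hv : IsSimplicial H v) :
    H.IsClique (insert v (H.neighborSet v)) :=
  SimpleGraph.IsClique.insert hv fun _ h _ => h

variable [Fintype V]

open scoped Classical in
/-- The neighbours of `v` that are not simplicial. -/
noncomputable def nonsimplicialNbrs (H : SimpleGraph V) (v : V) : Finset V :=
  {x | H.Adj v x ∧ ¬ IsSimplicial H x}

lemma mem_nonsimplicialNbrs {x : V} :
    x ∈ nonsimplicialNbrs H v ↔ H.Adj v x ∧ ¬ IsSimplicial H x := by
  simp [nonsimplicialNbrs]

namespace KConnected

/-- Otherwise the nonsimplicial neighbours of `z` would separate `z` and its simplicial neighbours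
from the rest of `H`. -/
lemma le_card_nonsimplicialNbrs (hc : KConnected H c) (htop : H ≠ ⊤) (hz : IsSimplicial H z) :
    c ≤ #(nonsimplicialNbrs H z) := by
  by_contra! hlt
  have exists_notMem : ∃ w, w ∉ insert z (H.neighborSet z) := by
    by_contra! hall
    exact htop (eq_top_iff.2 fun a b hab => hz.isClique_insert (hall a) (hall b) hab)
  obtain ⟨w, hw⟩ := exists_notMem
  obtain ⟨x, hx, y, hy, hxS, -, hxy⟩ := hc.exists_adj_of_mem_of_notMem hlt
    (Set.mem_insert z _) (fun h => (mem_nonsimplicialNbrs.1 h).1.ne rfl) hw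
    (fun h => hw (Or.inr (mem_nonsimplicialNbrs.1 h).1))
  rcases hx with rfl | hzx
  · exact hy (Or.inr hxy)
  · have hx : IsSimplicial H x := by
      by_contra h
      exact hxS (mem_nonsimplicialNbrs.2 ⟨hzx, h⟩)
    exact hy (Or.inr (hx hzx.symm hxy fun hzy => hy (Or.inl hzy.symm)))

lemma le_card_nonsimplicialNbrs_add_one (hc : KConnected H c) (htop : H ≠ ⊤) (v : V) :
    c ≤ #(nonsimplicialNbrs H v) + 1 := by
  classical
  by_cases h : ∃ z, H.Adj v z ∧ IsSimplicial H z
  · obtain ⟨z, hvz, hz⟩ := h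
    have subset : nonsimplicialNbrs H z ⊆ insert v (nonsimplicialNbrs H v) := fun x hx => by
      rw [mem_nonsimplicialNbrs] at hx
      by_cases hxv : x = v
      · exact hxv ▸ mem_insert_self x _
      · exact mem_insert_of_mem
          (mem_nonsimplicialNbrs.2 ⟨hz hvz.symm hx.1 (Ne.symm hxv), hx.2⟩)
    exact (hc.le_card_nonsimplicialNbrs htop hz).trans
      ((card_le_card subset).trans (card_insert_le _ _))
  · push Not at h
    have subset : H.neighborFinset v ⊆ nonsimplicialNbrs H v := fun x hx => by
      rw [H.mem_neighborFinset] at hx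
      exact mem_nonsimplicialNbrs.2 ⟨hx, h x hx⟩
    exact ((hc.le_degree v).trans (card_le_card subset)).trans (Nat.le_succ _)

end KConnected

end Connectivity

namespace IsGenericDoubling

variable {V E : Type*} [DecidableEq V] [AddCommGroup E] [Module ℝ E]
  [FiniteDimensional ℝ E] {Q : Sym2 V → (V → E) × (V → E)} {H : SimpleGraph V} {c : ℕ}
  {v x z : V} {A : Finset V}

lemma adj_of_isSimplicial [Finite V] (hQ : IsGenericDoubling Q) (hH : IsSpanClosed ℝ Q H)
    (hc : KConnected H c) (hcE : 5 * finrank ℝ E < c) (hz : IsSimplicial H z) (hxz : x ≠ z)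
    (hzA : ∀ a ∈ A, H.Adj z a) (hxA : ∀ a ∈ A, H.Adj x a) (hA : 2 * finrank ℝ E ≤ #A) :
    H.Adj z x := by
  classical
  have := Fintype.ofFinite V
  by_contra hnadj
  refine hnadj (hQ.adj_of_isClique hH (C := insert z (H.neighborFinset z)) ?_ ?_ ?_ ?_ hxA hA
    (mem_insert_self z _)).symm
  · simpa using hz.isClique_insert
  · exact (hcE.le.trans (hc.le_degree z)).trans (card_le_card (subset_insert _ _))
  · simp [hxz, hnadj]
  · exact fun a ha => mem_insert_of_mem ((H.mem_neighborFinset z a).2 (hzA a ha))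

lemma isSimplicial_of_isClique_nonsimplicialNbrs [Fintype V] (hQ : IsGenericDoubling Q)
    (hH : IsSpanClosed ℝ Q H) (hc : KConnected H c) (hcE : 5 * finrank ℝ E < c) (htop : H ≠ ⊤)
    (hv : H.IsClique (nonsimplicialNbrs H v)) : IsSimplicial H v := by
  have adj_of_nonsimplicial : ∀ z, H.Adj v z → IsSimplicial H z → ∀ x ∈ nonsimplicialNbrs H v,
      H.Adj z x := fun z hvz hz x hx => by
    by_contra hzx
    have hxz : x ≠ z := fun h => (mem_nonsimplicialNbrs.1 hx).2 (h ▸ hz)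
    refine hzx (hQ.adj_of_isSimplicial hH hc hcE hz hxz
      (A := (nonsimplicialNbrs H z).erase v) ?_ ?_ ?_)
    · exact fun a ha => (mem_nonsimplicialNbrs.1 (mem_of_mem_erase ha)).1
    · intro a ha
      obtain ⟨hav, ha⟩ := mem_erase.1 ha
      rw [mem_nonsimplicialNbrs] at ha
      exact hv hx (mem_nonsimplicialNbrs.2 ⟨hz hvz.symm ha.1 hav.symm, ha.2⟩)
        fun hxa => hzx (hxa ▸ ha.1)
    · have := hc.le_card_nonsimplicialNbrs htop hz
      have := pred_card_le_card_erase (s := nonsimplicialNbrs H z) (a := v)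
      lia
  intro a ha b hb hab
  by_cases ha' : IsSimplicial H a <;> by_cases hb' : IsSimplicial H b
  · refine hQ.adj_of_isSimplicial hH hc hcE ha' hab.symm (A := nonsimplicialNbrs H a)
      (fun x hx => (mem_nonsimplicialNbrs.1 hx).1) (fun x hx => ?_)
      (le_trans (by lia) (hc.le_card_nonsimplicialNbrs htop ha'))
    rw [mem_nonsimplicialNbrs] at hx
    by_cases hxv : x = v
    · exact hxv ▸ hb.symm
    · exact adj_of_nonsimplicial b hb hb' x
        (mem_nonsimplicialNbrs.2 ⟨ha' ha.symm hx.1 (Ne.symm hxv), hx.2⟩)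
  · exact adj_of_nonsimplicial a ha ha' b (mem_nonsimplicialNbrs.2 ⟨hb, hb'⟩)
  · exact (adj_of_nonsimplicial b hb hb' a (mem_nonsimplicialNbrs.2 ⟨ha, ha'⟩)).symm
  · exact hv (mem_nonsimplicialNbrs.2 ⟨ha, ha'⟩) (mem_nonsimplicialNbrs.2 ⟨hb, hb'⟩) hab

lemma card_mul_le_vectorRank_of_forall_not_isSimplicial [Finite V]
    (hQ : IsGenericDoubling Q) (hE : 0 < finrank ℝ E) (hH : IsSpanClosed ℝ Q H)
    (hc : KConnected H c)
    (hcE : 3 * ((2 * finrank ℝ E + 1) * (2 * finrank ℝ E + 2)) ≤ 2 * c) (htop : H ≠ ⊤)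
    {Y : Finset V} (hY : ∀ v, v ∈ Y ↔ ¬ IsSimplicial H v) :
    #Y * (2 * finrank ℝ E) ≤ vectorRank ℝ Q (edgesWithin H Y) := by
  have := Fintype.ofFinite V
  have exists_nonadj : ∀ v, ∃ u w, v ∈ Y → u ∈ nonsimplicialNbrs H v ∧
      w ∈ nonsimplicialNbrs H v ∧ u ≠ w ∧ ¬ H.Adj u w := fun v => by
    by_contra! h
    exact (hY v).1 (h v v).1 (hQ.isSimplicial_of_isClique_nonsimplicialNbrs hH hc (by nlinarith)
      htop fun u hu w hw huw => (h u w).2 hu hw huw)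
  choose u w huw using exists_nonadj
  have : Nonempty (V ≃ Fin (Fintype.card V)) := ⟨Fintype.equivFin V⟩
  obtain ⟨σ, hσ⟩ := exists_card_mul_le_sum_extensionGain (ι := Fin (Fintype.card V))
    (D := 2 * finrank ℝ E) (Y := Y) (M := nonsimplicialNbrs H) (fun v hv => (huw v hv).2.2.1)
    (fun v hv => (huw v hv).1) (fun v hv => (huw v hv).2.1)
    (fun v _ h => (mem_nonsimplicialNbrs.1 h).1.ne rfl)
    (fun v _ => hcE.trans (by
      have := hc.le_card_nonsimplicialNbrs_add_one htop v
      lia))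
  have hrank := add_sum_le_of_add_le_insert_before (σ := σ) (M := Y)
    (r := fun X => vectorRank ℝ Q (edgesWithin H X)) fun v hv =>
    hQ.vectorRank_edgesWithin_add_extensionGain_le hE hH notMem_before_self
      (A := before σ (nonsimplicialNbrs H v) v)
      (fun x hx => by
        rw [mem_before, mem_nonsimplicialNbrs] at hx
        exact mem_before.2 ⟨(hY x).2 hx.1.2, hx.2⟩)
      (fun x hx => (mem_nonsimplicialNbrs.1 (mem_before.1 hx).1).1)
      (huw v hv).2.2.1 (huw v hv).2.2.2
  exact hσ.trans (le_of_add_le_right hrank)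

lemma card_mul_le_vectorRank_edgesWithin_univ [Fintype V] (hQ : IsGenericDoubling Q)
    (hE : 0 < finrank ℝ E) (hH : IsSpanClosed ℝ Q H) (hc : KConnected H c)
    (hcE : 3 * ((2 * finrank ℝ E + 1) * (2 * finrank ℝ E + 2)) ≤ 2 * c) (htop : H ≠ ⊤) :
    Fintype.card V * (2 * finrank ℝ E) ≤ vectorRank ℝ Q (edgesWithin H univ) := by
  classical
  let Y : Finset V := {v | ¬ IsSimplicial H v}
  have hY : ∀ v, v ∈ Y ↔ ¬ IsSimplicial H v := fun v => by simp [Y]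
  have add_simplicial : ∀ T : Finset V, Disjoint T Y →
      #(T ∪ Y) * (2 * finrank ℝ E) ≤ vectorRank ℝ Q (edgesWithin H (T ∪ Y)) := fun T => by
    induction T using Finset.induction_on with
    | empty =>
      intro _
      rw [empty_union]
      exact hQ.card_mul_le_vectorRank_of_forall_not_isSimplicial hE hH hc hcE htop hY
    | insert z T hzT ih =>
      intro hdisj
      obtain ⟨hzY, hTY⟩ := disjoint_insert_left.1 hdisj
      have hz : IsSimplicial H z := by simpa [Y] using hzY
      obtain ⟨A, hA, hcard⟩ := exists_subset_card_eq (n := 2 * finrank ℝ E)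
        (le_trans (by nlinarith) (hc.le_card_nonsimplicialNbrs htop hz))
      have hzTY : z ∉ T ∪ Y := by simp [hzT, hzY]
      have hstep := hQ.vectorRank_edgesWithin_add_card_le hzTY
        (fun a ha => mem_union_right T ((hY a).2 (mem_nonsimplicialNbrs.1 (hA ha)).2))
        (fun a ha => (mem_nonsimplicialNbrs.1 (hA ha)).1) hcard.le
      rw [insert_union, card_insert_of_notMem hzTY, add_one_mul]
      linarith [ih hTY]
  have h := add_simplicial Yᶜ disjoint_compl_left
  rwa [union_comm, union_compl, card_univ] at h

theorem eq_top_of_isSpanClosed [Finite V] (hQ : IsGenericDoubling Q) (hE : 0 < finrank ℝ E)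
    (hH : IsSpanClosed ℝ Q H) (hc : KConnected H c)
    (hcE : 3 * ((2 * finrank ℝ E + 1) * (2 * finrank ℝ E + 2)) ≤ 2 * c) : H = ⊤ := by
  have := Fintype.ofFinite V
  by_contra htop
  have hrank := hQ.card_mul_le_vectorRank_edgesWithin_univ hE hH hc hcE htop
  obtain ⟨B, -, hB, hcard⟩ :=
    exists_subset_linearIndepOn_card_eq_vectorRank (K := ℝ) Q (edgesWithin H univ)
  have hV := hc.1
  rw [Nat.card_eq_fintype_card] at hV
  have hsparse := hQ.card_add_choose_le hB (X := univ) (by simp) (by rw [card_univ]; nlinarith)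
  have hchoose : 0 < (finrank ℝ E + 1).choose 2 := Nat.choose_pos (by lia)
  rw [card_univ] at hsparse
  linarith

end IsGenericDoubling

/-! ### Maxwell-tight edge sets -/

section MaxwellTight

variable {V : Type*} {d : ℕ} {F : Finset (Sym2 V)}

/-- Maxwell's count for an edge set that is independent in the `d`-dimensional rigidity matroid. -/
def IsMaxwellSparse (d : ℕ) (F : Finset (Sym2 V)) : Prop :=
  ∀ F' ⊆ F, ∀ X : Finset V, F' ⊆ X.sym2 → d ≤ #X → #F' + (d + 1).choose 2 ≤ d * #X

/-- Maxwell's count for a basis of the `d`-dimensional rigidity matroid. -/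
structure IsMaxwellTight [Fintype V] (d : ℕ) (F : Finset (Sym2 V)) : Prop where
  isMaxwellSparse : IsMaxwellSparse d F
  card_add_choose_eq : #F + (d + 1).choose 2 = d * Fintype.card V

variable [DecidableEq V] {E : Type*} [AddCommGroup E] [Module ℝ E] [FiniteDimensional ℝ E]
  {Q : Sym2 V → (V → E) × (V → E)} {G : SimpleGraph V} {c : ℕ}

lemma IsGeneric.isMaxwellSparse {p : V → E} (hp : IsGeneric p)
    (hF : LinearIndepOn ℝ (rigidityRow p) F) : IsMaxwellSparse (finrank ℝ E) F :=
  fun _ hF'F _ hF'X hX => hp.card_add_choose_le (hF.mono (coe_subset.2 hF'F)) hF'X hX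

variable [Fintype V]

lemma IsGenericDoubling.exists_disjoint_isMaxwellTight (hQ : IsGenericDoubling Q)
    (hF : LinearIndepOn ℝ Q F) (hV : finrank ℝ E ≤ Fintype.card V)
    (hcard : 2 * finrank ℝ E * Fintype.card V ≤ #F + 2 * (finrank ℝ E + 1).choose 2) :
    ∃ F₁ F₂, Disjoint F₁ F₂ ∧ F₁ ∪ F₂ = F ∧ IsMaxwellTight (finrank ℝ E) F₁ ∧
      IsMaxwellTight (finrank ℝ E) F₂ := by
  obtain ⟨p, hp, hQ⟩ := hQ
  obtain ⟨F₁, F₂, hdisj, rfl, hF₁, hF₂⟩ := exists_disjoint_of_isUnionIndep ((hQ F).1 hF)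
  have h₁ := hp.card_add_choose_le hF₁ (X := univ) (by simp) hV
  have h₂ := hp.card_add_choose_le hF₂ (X := univ) (by simp) hV
  rw [card_union_of_disjoint hdisj] at hcard
  rw [card_univ] at h₁ h₂
  exact ⟨F₁, F₂, hdisj, rfl, ⟨hp.isMaxwellSparse hF₁, by linarith⟩,
    ⟨hp.isMaxwellSparse hF₂, by linarith⟩⟩

lemma IsGenericDoubling.mul_card_le_vectorRank_add_choose (hQ : IsGenericDoubling Q)
    (hE : 0 < finrank ℝ E) (hG : KConnected G c)
    (hc : 3 * ((2 * finrank ℝ E + 1) * (2 * finrank ℝ E + 2)) ≤ 2 * c) :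
    2 * finrank ℝ E * Fintype.card V ≤
      vectorRank ℝ Q (edgesWithin G univ) + 2 * (finrank ℝ E + 1).choose 2 := by
  have closure_eq_top : spanClosure ℝ Q G = ⊤ :=
    hQ.eq_top_of_isSpanClosed hE isSpanClosed_spanClosure (hG.mono_left le_spanClosure) hc
  have hV := hG.1
  rw [Nat.card_eq_fintype_card] at hV
  obtain ⟨F, hF, -, hcard⟩ := hQ.exists_linearIndepOn_card_add_choose_eq (C := univ)
    (by rw [card_univ]; nlinarith)
  rw [card_univ] at hcard
  rw [← hcard, ← vectorRank_eq_card hF]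
  gcongr
  refine vectorRank_le_of_image_subset_span ?_
  rintro _ ⟨e, he, rfl⟩
  have hdiag := hQ.not_isDiag_of_mem hF e he
  have edgesWithin_univ : (edgesWithin G univ : Set (Sym2 V)) = G.edgeSet := by
    ext e; simp [mem_edgesWithin]
  rw [edgesWithin_univ]
  induction e with | _ x y =>
  have hadj : (spanClosure ℝ Q G).Adj x y := by rwa [closure_eq_top]
  exact hadj.2

theorem KConnected.exists_disjoint_isMaxwellTight (hG : KConnected G c) (hd : 0 < d)
    (hc : 3 * ((2 * d + 1) * (2 * d + 2)) ≤ 2 * c) :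
    ∃ F₁ F₂ : Finset (Sym2 V), Disjoint F₁ F₂ ∧ (∀ e ∈ F₁ ∪ F₂, e ∈ G.edgeSet) ∧
      IsMaxwellTight d F₁ ∧ IsMaxwellTight d F₂ := by
  obtain ⟨Q, hQ⟩ := exists_isGenericDoubling V (Fin d → ℝ)
  obtain ⟨F, hFG, hF, hcard⟩ :=
    exists_subset_linearIndepOn_card_eq_vectorRank (K := ℝ) Q (edgesWithin G univ)
  have hV := hG.1
  rw [Nat.card_eq_fintype_card] at hV
  have hrank := hQ.mul_card_le_vectorRank_add_choose (by simpa using hd) hG (by simpa using hc)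
  obtain ⟨F₁, F₂, hdisj, rfl, h₁, h₂⟩ := hQ.exists_disjoint_isMaxwellTight hF
    (by rw [finrank_fin_fun]; nlinarith) (hcard ▸ hrank)
  rw [finrank_fin_fun] at h₁ h₂
  exact ⟨F₁, F₂, hdisj, fun e he => (mem_edgesWithin.1 (hFG he)).2, h₁, h₂⟩

end MaxwellTight

/-! ### Orientations -/

section Hall

variable {ι V : Type*} [DecidableEq V] [Fintype V] [Nonempty V] {F : Finset ι} {t : ι → Finset V}
  {f : V → ℕ}

/-- Hall's theorem with capacities: apply it to `f v` copies of each `v`. -/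
lemma exists_mem_card_fiber_eq (hF : ∀ F' ⊆ F, #F' ≤ ∑ v ∈ F'.biUnion t, f v)
    (hcard : #F = ∑ v, f v) :
    ∃ a : ι → V, (∀ e ∈ F, a e ∈ t e) ∧ ∀ v, #{e ∈ F | a e = v} = f v := by
  classical
  let copies : F → Finset (Σ v, Fin (f v)) := fun e => (t e).sigma fun _ => univ
  have hall : ∀ s : Finset F, #s ≤ #(s.biUnion copies) := fun s => by
    have biUnion_eq : s.biUnion copies =
        ((s.map (.subtype (· ∈ F))).biUnion t).sigma fun _ => univ := by
      ext ⟨v, i⟩; simp [copies]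
    rw [biUnion_eq, card_sigma]
    simpa using hF (s.map (.subtype (· ∈ F))) (map_subtype_subset s)
  obtain ⟨φ, hφ, hφt⟩ := (all_card_le_biUnion_card_iff_exists_injective copies).1 hall
  let a : ι → V := fun e => if he : e ∈ F then (φ ⟨e, he⟩).1 else Classical.arbitrary V
  have fiber_le : ∀ v ∈ univ, #{e ∈ F | a e = v} ≤ f v := fun v _ => by
    refine (card_le_card_of_forall_subsingleton (t := univ)
      (fun e (i : Fin (f v)) => ∃ he : e ∈ F, φ ⟨e, he⟩ = ⟨v, i⟩) ?_ ?_).trans (card_fin _).le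
    · intro e he
      obtain ⟨heF, hae⟩ := mem_filter.1 he
      obtain rfl : (φ ⟨e, heF⟩).1 = v := by simpa [a, heF] using hae
      exact ⟨(φ ⟨e, heF⟩).2, mem_univ _, heF, rfl⟩
    · rintro i - e ⟨-, he, hei⟩ e' ⟨-, he', hei'⟩
      exact congrArg Subtype.val (hφ (hei.trans hei'.symm))
  have fiber_eq := (sum_eq_sum_iff_of_le fiber_le).1
    ((card_eq_sum_card_fiberwise fun e _ => mem_univ (a e)).symm.trans hcard)
  refine ⟨a, fun e he => ?_, fun v => fiber_eq v (mem_univ v)⟩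
  have := hφt ⟨e, he⟩
  simpa [a, he, copies] using this

end Hall

section BalancedTail

variable {V : Type*} [DecidableEq V] {d : ℕ} {T X S : Finset V}
  {F : Finset (Sym2 V)} {a : Sym2 V → V}

/-- `a` selects an endpoint of every edge of `F` such that each vertex is selected `d` times,
except that the vertices in `T` are selected `d - 1` times. -/
structure IsBalancedTail (d : ℕ) (T : Finset V) (F : Finset (Sym2 V)) (a : Sym2 V → V) :
    Prop where
  mem : ∀ e ∈ F, a e ∈ e
  card_fiber_add : ∀ v, #{e ∈ F | a e = v} + (if v ∈ T then 1 else 0) = d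

lemma IsMaxwellSparse.card_add_card_inter_le (hF : IsMaxwellSparse d F)
    (hdiag : ∀ e ∈ F, ¬ e.IsDiag) (hT : #T = (d + 1).choose 2) (hFX : F ⊆ X.sym2) :
    #F + #(X ∩ T) ≤ d * #X := by
  by_cases hX : d ≤ #X
  · have := card_le_card (inter_subset_right (s₁ := X) (s₂ := T))
    have := hF F le_rfl X hFX hX
    lia
  · have hF : #F ≤ (#X).choose 2 := by
      rw [← card_cliqueEdges]
      exact card_le_card fun e he => mem_filter.2 ⟨hFX he, hdiag e he⟩
    have := card_le_card (inter_subset_left (s₁ := X) (s₂ := T))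
    have : (#X).choose 2 ≤ #X * (#X - 1) := Nat.choose_two_right _ ▸ Nat.div_le_self _ _
    have : #X * (#X - 1) + #X ≤ d * #X := by
      rcases h : #X with _ | n
      · simp
      · simp only [Nat.add_sub_cancel]; nlinarith
    lia

theorem IsMaxwellTight.exists_isBalancedTail [Fintype V] [Nonempty V] (hF : IsMaxwellTight d F)
    (hd : 0 < d) (hdiag : ∀ e ∈ F, ¬ e.IsDiag) (hT : #T = (d + 1).choose 2) :
    ∃ a, IsBalancedTail d T F a := by
  let f : V → ℕ := fun v => d - if v ∈ T then 1 else 0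
  have f_add (v : V) : f v + (if v ∈ T then 1 else 0) = d := by
    simp only [f]; split_ifs <;> lia
  have sum_f_add (X : Finset V) : ∑ v ∈ X, f v + #(X ∩ T) = d * #X := by
    rw [← filter_mem_eq_inter, card_filter, ← sum_add_distrib, sum_congr rfl fun v _ => f_add v,
      sum_const, smul_eq_mul, mul_comm]
  have hall : ∀ F' ⊆ F, #F' ≤ ∑ v ∈ F'.biUnion Sym2.toFinset, f v := fun F' hF' => by
    have hF'X : F' ⊆ (F'.biUnion Sym2.toFinset).sym2 := fun e he => mem_sym2_iff.2 fun x hx =>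
      mem_biUnion.2 ⟨e, he, Sym2.mem_toFinset.2 hx⟩
    have hsparse : IsMaxwellSparse d F' := fun F'' h => hF.isMaxwellSparse F'' (h.trans hF')
    have := hsparse.card_add_card_inter_le (fun e he => hdiag e (hF' he)) hT hF'X
    have := sum_f_add (F'.biUnion Sym2.toFinset)
    lia
  have hcard : #F = ∑ v, f v := by
    have htotal := sum_f_add univ
    rw [univ_inter, card_univ, hT, ← hF.card_add_choose_eq] at htotal
    lia
  obtain ⟨a, ha, hfiber⟩ := exists_mem_card_fiber_eq hall hcard
  exact ⟨a, fun e he => Sym2.mem_toFinset.1 (ha e he), fun v => by rw [hfiber, f_add]⟩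

namespace IsBalancedTail

lemma card_filter_mem_add (ha : IsBalancedTail d T F a) (X : Finset V) :
    #{e ∈ F | a e ∈ X} + #(X ∩ T) = d * #X := by
  have card_eq : #{e ∈ F | a e ∈ X} = ∑ v ∈ X, #{e ∈ F | a e = v} := by
    rw [card_eq_sum_card_fiberwise (s := {e ∈ F | a e ∈ X}) (t := X)
      fun e he => (mem_filter.1 he).2]
    refine sum_congr rfl fun v hv => congrArg card ?_
    grind
  rw [card_eq, ← filter_mem_eq_inter, card_filter, ← sum_add_distrib,
    sum_congr rfl fun v _ => ha.card_fiber_add v, sum_const, smul_eq_mul, mul_comm]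

lemma le_card_of_nonempty (ha : IsBalancedTail d T F a) (hdiag : ∀ e ∈ F, ¬ e.IsDiag)
    (hX : X.Nonempty) (hXS : ∀ e ∈ F, a e ∈ X → e ∈ (X ∪ S).sym2) : d ≤ #(X ∪ S) := by
  obtain ⟨x, hx⟩ := hX
  have hxXS : x ∈ X ∪ S := mem_union_left S hx
  have subset : {e ∈ F | a e = x} ⊆ starEdges x ((X ∪ S).erase x) := fun e he => by
    obtain ⟨heF, rfl⟩ := mem_filter.1 he
    obtain ⟨y, hy⟩ := Sym2.mem_iff_exists.1 (ha.mem e heF)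
    have hyXS := mem_sym2_iff.1 (hXS e heF hx) y (hy ▸ Sym2.mem_mk_right _ _)
    refine mem_starEdges.2 ⟨y, mem_erase.2 ⟨fun h => hdiag e heF ?_, hyXS⟩, hy.symm⟩
    rw [hy, h]
    exact Sym2.mk_isDiag_iff.2 rfl
  have hle := card_le_card subset
  rw [card_starEdges] at hle
  have := card_erase_add_one hxXS
  have := ha.card_fiber_add x
  split_ifs at this <;> lia

lemma choose_two_le (ha : IsBalancedTail d T F a) (hF : IsMaxwellSparse d F)
    (hdiag : ∀ e ∈ F, ¬ e.IsDiag) (hX : X.Nonempty)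
    (hXS : ∀ e ∈ F, a e ∈ X → e ∈ (X ∪ S).sym2) :
    (d + 1).choose 2 ≤ d * #S + #(X ∩ T) := by
  have hsparse := hF {e ∈ F | a e ∈ X} (filter_subset _ _) (X ∪ S)
    (fun e he => hXS e (mem_filter.1 he).1 (mem_filter.1 he).2)
    (ha.le_card_of_nonempty hdiag hX hXS)
  have := ha.card_filter_mem_add X
  have := Nat.mul_le_mul_left d (card_union_le X S)
  lia

end IsBalancedTail

end BalancedTail

section Orientation

variable {V : Type*} {G : SimpleGraph V} {D : V → V → Prop} {d : ℕ}

/-- The orientation of `G` in which `tail e` is the tail of the edge `e`. -/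
def orientation (G : SimpleGraph V) (tail : Sym2 V → V) (u v : V) : Prop :=
  G.Adj u v ∧ tail s(u, v) = u

lemma isOrientation_orientation {tail : Sym2 V → V} (htail : ∀ e, tail e ∈ e) :
    IsOrientation G (orientation G tail) := by
  refine ⟨fun u v h => h.1, fun u v huv => ?_⟩
  have := huv.ne
  simp only [orientation, huv, huv.symm, true_and, Sym2.eq_swap (a := v)]
  rcases Sym2.mem_iff.1 (htail s(u, v)) with h | h <;> rw [h] <;> grind

lemma orientation_of_mem_edgeSet {tail : Sym2 V → V} {e : Sym2 V} {v : V} (he : e ∈ G.edgeSet)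
    (htail : s(tail e, v) = e) : orientation G tail (tail e) v := by
  refine ⟨?_, congrArg tail htail⟩
  rwa [← SimpleGraph.mem_edgeSet, htail]

lemma exists_cut_of_not_stronglyConnectedOutside [Finite V] {S : Finset V}
    (h : ¬ StronglyConnectedOutside D S) :
    ∃ X Y : Finset V, X.Nonempty ∧ Y.Nonempty ∧ Disjoint X Y ∧
      (∀ v, v ∈ X ∨ v ∈ Y ∨ v ∈ S) ∧ ∀ x ∈ X, ∀ y ∈ Y, ¬ D x y := by
  classical
  have := Fintype.ofFinite V
  unfold StronglyConnectedOutside at h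
  push Not at h
  obtain ⟨u, w, hu, hw, huw⟩ := h
  let Reach := Relation.ReflTransGen (fun a b => D a b ∧ a ∉ (S : Set V) ∧ b ∉ (S : Set V)) u
  have reach_notMem : ∀ x, Reach x → x ∉ S := fun x hx => by
    rcases hx.cases_tail with rfl | ⟨_, -, h⟩
    · exact hu
    · exact h.2.2
  refine ⟨({x | Reach x} : Finset V), ({x | x ∉ S ∧ ¬ Reach x} : Finset V),
    ⟨u, by simpa using Relation.ReflTransGen.refl⟩, ⟨w, by simpa using ⟨hw, huw⟩⟩,
    disjoint_filter.2 fun x _ hx hx' => hx'.2 hx, fun v => ?_, fun x hx y hy hxy => ?_⟩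
  · simp only [mem_filter, mem_univ, true_and]
    tauto
  · simp only [mem_filter, mem_univ, true_and] at hx hy
    exact hy.2 (hx.tail ⟨hxy, reach_notMem x hx, hy.1⟩)

variable {F₁ F₂ : Finset (Sym2 V)} {a₁ a₂ : Sym2 V → V}

lemma exists_tail_of_disjoint (hF : Disjoint F₁ F₂) (ha₁ : ∀ e ∈ F₁, a₁ e ∈ e)
    (ha₂ : ∀ e ∈ F₂, a₂ e ∈ e) :
    ∃ tail : Sym2 V → V, (∀ e, tail e ∈ e) ∧ (∀ e ∈ F₁, tail e = a₁ e) ∧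
      ∀ e ∈ F₂, s(a₂ e, tail e) = e := by
  have pointwise : ∀ e : Sym2 V, ∃ x, x ∈ e ∧ (e ∈ F₁ → x = a₁ e) ∧
      (e ∈ F₂ → s(a₂ e, x) = e) := fun e => by
    by_cases he₂ : e ∈ F₂
    · obtain ⟨x, hx⟩ := Sym2.mem_iff_exists.1 (ha₂ e he₂)
      exact ⟨x, hx ▸ Sym2.mem_mk_right _ _,
        fun he₁ => absurd he₂ (disjoint_left.1 hF he₁), fun _ => hx.symm⟩
    by_cases he₁ : e ∈ F₁
    · exact ⟨a₁ e, ha₁ e he₁, fun _ => rfl, fun h => absurd h he₂⟩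
    · exact ⟨e.out.1, Sym2.out_fst_mem e, fun h => absurd h he₁, fun h => absurd h he₂⟩
  choose tail htail using pointwise
  exact ⟨tail, fun e => (htail e).1, fun e => (htail e).2.1, fun e => (htail e).2.2⟩

theorem IsBalancedTail.stronglyConnectedOutside_orientation [Finite V] [DecidableEq V]
    {S T : Finset V} {tail : Sym2 V → V} (hd : 0 < d)
    (hFG : ∀ e ∈ F₁ ∪ F₂, e ∈ G.edgeSet) (hF₁ : IsMaxwellSparse d F₁) (hF₂ : IsMaxwellSparse d F₂)
    (ha₁ : IsBalancedTail d T F₁ a₁) (ha₂ : IsBalancedTail d T F₂ a₂)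
    (htail₁ : ∀ e ∈ F₁, tail e = a₁ e) (htail₂ : ∀ e ∈ F₂, s(a₂ e, tail e) = e)
    (hT : #T = (d + 1).choose 2) (hS : 4 * #S ≤ d) :
    StronglyConnectedOutside (orientation G tail) S := by
  have hdiag : ∀ e ∈ F₁ ∪ F₂, ¬ e.IsDiag := fun e he => G.not_isDiag_of_mem_edgeSet (hFG e he)
  by_contra hcon
  obtain ⟨X, Y, hX, hY, hXY, hcover, hcut⟩ := exists_cut_of_not_stronglyConnectedOutside hcon
  have hXS : ∀ e ∈ F₁, a₁ e ∈ X → e ∈ (X ∪ S).sym2 := fun e he hx => by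
    obtain ⟨v, hv⟩ := Sym2.mem_iff_exists.1 (ha₁.mem e he)
    rw [← htail₁ e he] at hv hx
    have harc := orientation_of_mem_edgeSet (hFG e (mem_union_left _ he)) hv.symm
    have hvY : v ∉ Y := fun hvY => hcut _ hx v hvY harc
    rw [hv, mk_mem_sym2_iff]
    grind
  have hYS : ∀ e ∈ F₂, a₂ e ∈ Y → e ∈ (Y ∪ S).sym2 := fun e he hy => by
    have htail := htail₂ e he
    have harc := orientation_of_mem_edgeSet (hFG e (mem_union_right _ he))
      (Sym2.eq_swap.trans htail)
    have htailX : tail e ∉ X := fun hx => hcut _ hx _ hy harc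
    rw [← htail, mk_mem_sym2_iff]
    grind
  have hX_le := ha₁.choose_two_le hF₁ (fun e he => hdiag e (mem_union_left _ he)) hX hXS
  have hY_le := ha₂.choose_two_le hF₂ (fun e he => hdiag e (mem_union_right _ he)) hY hYS
  have hT_le : #(X ∩ T) + #(Y ∩ T) ≤ #T := by
    rw [← card_union_of_disjoint (hXY.mono inter_subset_left inter_subset_left)]
    exact card_le_card (union_subset inter_subset_right inter_subset_right)
  have hchoose : (d + 1).choose 2 * 2 = (d + 1) * d := by
    simpa using (Nat.add_one_mul_choose_eq d 1).symm
  nlinarith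

theorem KConnected.exists_orientation_stronglyConnectedOutside [Finite V] {c : ℕ}
    (hG : KConnected G c) (hd : 0 < d) (hc : 3 * ((2 * d + 1) * (2 * d + 2)) ≤ 2 * c) :
    ∃ D, IsOrientation G D ∧ ∀ S : Finset V, 4 * #S ≤ d → StronglyConnectedOutside D S := by
  classical
  have := Fintype.ofFinite V
  have hcard : c < #(univ : Finset V) := by
    rw [card_univ, ← Nat.card_eq_fintype_card]; exact hG.1
  have : Nonempty V := univ_nonempty_iff.1 (card_pos.1 (by lia))
  obtain ⟨F₁, F₂, hdisj, hFG, hF₁, hF₂⟩ := hG.exists_disjoint_isMaxwellTight hd hc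
  have hdiag : ∀ e ∈ F₁ ∪ F₂, ¬ e.IsDiag := fun e he => G.not_isDiag_of_mem_edgeSet (hFG e he)
  have hchoose : (d + 1).choose 2 ≤ #(univ : Finset V) := by
    have := Nat.choose_le_pow (d + 1) 2
    nlinarith
  obtain ⟨T, -, hT⟩ := exists_subset_card_eq hchoose
  obtain ⟨a₁, ha₁⟩ :=
    hF₁.exists_isBalancedTail hd (fun e he => hdiag e (mem_union_left _ he)) hT
  obtain ⟨a₂, ha₂⟩ :=
    hF₂.exists_isBalancedTail hd (fun e he => hdiag e (mem_union_right _ he)) hT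
  obtain ⟨tail, htail, htail₁, htail₂⟩ := exists_tail_of_disjoint hdisj ha₁.mem ha₂.mem
  exact ⟨orientation G tail, isOrientation_orientation htail, fun S hS =>
    ha₁.stronglyConnectedOutside_orientation hd hFG hF₁.isMaxwellSparse hF₂.isMaxwellSparse
      ha₂ htail₁ htail₂ hT hS⟩

end Orientation

theorem thomassen_conjecture_general {V : Type*} [Finite V] (k : ℕ) (hk : 0 < k)
    (G : SimpleGraph V) (hG : KConnected G (96 * k ^ 2)) :
    ∃ D : V → V → Prop, IsOrientation G D ∧ DKConnected D k := by
  classical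
  obtain ⟨m, rfl⟩ := Nat.exists_eq_add_of_lt hk
  obtain ⟨D, hD, hconn⟩ :=
    hG.exists_orientation_stronglyConnectedOutside (d := 4 * m + 1) (by lia) (by nlinarith)
  refine ⟨D, hD, le_trans (by nlinarith) hG.1, fun S hS hSk => ?_⟩
  lift S to Finset V using hS
  rw [Set.ncard_coe_finset] at hSk
  exact hconn S (by lia)

/-- Every `(320·k²)`-connected finite simple graph has a `k`-connected orientation. -/
theorem thomassen_conjecture {V : Type*} [Fintype V] (k : ℕ) (hk : 0 < k)
    (G : SimpleGraph V) (hG : KConnected G (320 * k ^ 2)) :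
    ∃ D : V → V → Prop, IsOrientation G D ∧ DKConnected D k := by
  exact thomassen_conjecture_general k hk G (hG.mono_right (by lia))
end

section
/- For all positive integers d and t, every (t·10d(d+1))-connected finite simple graph contains t pairwise edge-disjoint spanning subgraphs, each of which is d-connected. -/
/-!
For a generic framework in `ℝ^d`, a graph whose rigidity rows span those of the complete graph is
`d`-connected: if fewer than `d` vertices separate `a` from `b`, an infinitesimal rotation of the
side of `a` about the separator preserves all edge lengths to first order, but not the distance of
`a` and `b`. It therefore suffices to find `t` disjoint spanning sets of edge rows, and by Edmonds'
base packing theorem these exist if `t * rank ≤ t * dim U + #{edges of G whose row is not in U}` for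
every subspace `U`.

To bound `dim U` from below, let `C` be the graph of all pairs whose row is in `U`, and add the
vertices one at a time: a vertex with at least `d` earlier neighbours in `C` contributes `d`
independent rows, and `d + 1` if it has more than `d` of them and they do not form a clique. In a
random vertex order, with certain simplicial vertices moved to the end, the expected contribution
of `v` is at least `d` unless `v` has few neighbours in `C` or is a simplicial vertex whose closed
neighbourhood is large but has a small boundary. In both cases the connectivity of `G` provides
enough edges of `G` outside `C`: in the second case it forces many of them to leave the clique from
vertices off its boundary.
-/

namespace RigidityPacking

open Finset

/-! ### Generic specialisations of polynomial vectors -/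

section Specialisation

theorem linearIndependent_row_iff_det_mul_transpose_ne_zero {K m n : Type*} [Field K]
    [LinearOrder K] [IsStrictOrderedRing K] [Fintype m] [DecidableEq m] [Fintype n]
    (A : Matrix m n K) : LinearIndependent K A.row ↔ (A * A.transpose).det ≠ 0 := by
  rw [← isUnit_iff_ne_zero, ← Matrix.isUnit_iff_isUnit_det,
    ← Matrix.linearIndependent_rows_iff_isUnit, linearIndependent_iff_card_eq_finrank_span,
    linearIndependent_iff_card_eq_finrank_span, Set.finrank, Set.finrank,
    ← Matrix.rank_eq_finrank_span_row, ← Matrix.rank_eq_finrank_span_row,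
    Matrix.rank_self_mul_transpose]

theorem exists_mvPolynomial_eval_ne_zero_iff_linearIndepOn {K ι κ σ : Type*} [Field K]
    [LinearOrder K] [IsStrictOrderedRing K] [Finite κ] (M : ι → κ → MvPolynomial σ K)
    (s : Finset ι) :
    ∃ Δ : MvPolynomial σ K, ∀ q : σ → K, MvPolynomial.eval q Δ ≠ 0 ↔
      LinearIndepOn K (fun i k => MvPolynomial.eval q (M i k)) (s : Set ι) := by
  classical
  cases nonempty_fintype κ
  let A : Matrix s κ (MvPolynomial σ K) := Matrix.of fun i k => M i k
  refine ⟨(A * A.transpose).det, fun q => ?_⟩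
  rw [RingHom.map_det, RingHom.mapMatrix_apply, Matrix.map_mul, Matrix.transpose_map,
    ← linearIndependent_row_iff_det_mul_transpose_ne_zero]
  rfl

theorem exists_eval_ne_zero_of_forall_ne_zero {J σ R : Type*} [Finite J] [CommRing R] [IsDomain R]
    [Infinite R] (Δ : J → MvPolynomial σ R) (hΔ : ∀ j, Δ j ≠ 0) :
    ∃ p : σ → R, ∀ j, MvPolynomial.eval p (Δ j) ≠ 0 := by
  cases nonempty_fintype J
  have hprod : ∏ j, Δ j ≠ 0 := Finset.prod_ne_zero_iff.2 fun j _ => hΔ j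
  obtain ⟨p, hp⟩ : ∃ p : σ → R, MvPolynomial.eval p (∏ j, Δ j) ≠ 0 := by
    contrapose! hprod
    exact MvPolynomial.funext fun p => by rw [hprod p, map_zero]
  rw [map_prod, Finset.prod_ne_zero_iff] at hp
  exact ⟨p, fun j => hp j (mem_univ j)⟩

theorem exists_eval_ne_zero_of_exists {J σ R : Type*} [Finite J] [CommRing R] [IsDomain R]
    [Infinite R] (Δ : J → MvPolynomial σ R) :
    ∃ p : σ → R, ∀ j, (∃ q, MvPolynomial.eval q (Δ j) ≠ 0) → MvPolynomial.eval p (Δ j) ≠ 0 := by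
  obtain ⟨p, hp⟩ := exists_eval_ne_zero_of_forall_ne_zero
    (fun j : {j // Δ j ≠ 0} => Δ j) fun j => j.2
  refine ⟨p, fun j ⟨q, hq⟩ => hp ⟨j, fun h => hq ?_⟩⟩
  rw [h, map_zero]

end Specialisation

/-! ### Rigidity matrices of generic frameworks -/

section LinearIndependence

variable {K M N ι : Type*} [Field K] [AddCommGroup M] [Module K M] [AddCommGroup N] [Module K N]
  {f : ι → M} {s t : Set ι}

theorem linearIndepOn_union_of_map (π : M →ₗ[K] N) (hs : LinearIndepOn K f s)
    (hπ : ∀ i ∈ s, π (f i) = 0) (ht : LinearIndepOn K (π ∘ f) t) : LinearIndepOn K f (s ∪ t) := by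
  have hle : Submodule.span K (f '' s) ≤ LinearMap.ker π := by
    rw [Submodule.span_le]
    rintro _ ⟨i, hi, rfl⟩
    exact hπ i hi
  refine hs.union_of_quotient (LinearIndepOn.of_comp (Submodule.liftQ _ π hle) ?_)
  exact ht.congr fun i _ => by simp

theorem linearIndepOn_const_sub {w : M} (hf : LinearIndepOn K f s)
    (hw : w ∉ Submodule.span K (f '' s)) : LinearIndepOn K (fun i => w - f i) s := by
  rw [linearIndepOn_iff'] at hf ⊢
  intro T c hT hc
  have hsum : (∑ i ∈ T, c i) • w = ∑ i ∈ T, c i • f i := by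
    simpa only [smul_sub, Finset.sum_sub_distrib, ← Finset.sum_smul, sub_eq_zero] using hc
  have hmem : (∑ i ∈ T, c i) • w ∈ Submodule.span K (f '' s) :=
    hsum ▸ Submodule.sum_mem _ fun i hi =>
      Submodule.smul_mem _ _ (Submodule.subset_span ⟨i, hT hi, rfl⟩)
  have hzero : ∑ i ∈ T, c i = 0 := by
    by_contra h
    exact hw ((Submodule.smul_mem_iff _ h).1 hmem)
  exact hf T c hT (by rw [← hsum, hzero, zero_smul])

end LinearIndependence

section RigidityRow

variable {V E : Type*} [DecidableEq V] [AddCommGroup E]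

/-- The row of the rigidity matrix of the framework `p` belonging to an edge `ab`: the vector
indexed by vertices with entry `p a - p b` at `a` and `p b - p a` at `b`. Diagonal pairs are allowed
and have zero row. -/
def rigidityRow (p : V → E) : Sym2 V → V → E :=
  Sym2.lift ⟨fun a b => Pi.single a (p a - p b) + Pi.single b (p b - p a), fun _ _ => add_comm _ _⟩

theorem rigidityRow_mk (p : V → E) (a b : V) :
    rigidityRow p s(a, b) = Pi.single a (p a - p b) + Pi.single b (p b - p a) := rfl

theorem rigidityRow_mk_self (p : V → E) (a : V) : rigidityRow p s(a, a) = 0 := by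
  simp [rigidityRow_mk]

theorem rigidityRow_apply_of_notMem (p : V → E) {e : Sym2 V} {v : V} (hv : v ∉ e) :
    rigidityRow p e v = 0 := by
  induction e with | _ a b
  rw [Sym2.mem_iff, not_or] at hv
  simp [rigidityRow_mk, hv.1, hv.2]

theorem rigidityRow_mk_apply_left (p : V → E) (a b : V) : rigidityRow p s(a, b) a = p a - p b := by
  rcases eq_or_ne a b with rfl | h
  · simp [rigidityRow_mk]
  · simp [rigidityRow_mk, h]

theorem rigidityRow_update_of_notMem (p : V → E) {e : Sym2 V} {v : V} (hv : v ∉ e) (w : E) :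
    rigidityRow (Function.update p v w) e = rigidityRow p e := by
  induction e with | _ a b
  rw [Sym2.mem_iff, not_or] at hv
  simp [rigidityRow_mk, Ne.symm hv.1, Ne.symm hv.2]

end RigidityRow

section Extension

variable {K V E : Type*} [Field K] [AddCommGroup E] [Module K E] {p : V → E} {v x y : V}
  {B : Set (Sym2 V)} {Q : Set V}

/-- The homogeneous coordinates `(1, p v)`: affine dependences of points are linear dependences of
their homogeneous coordinates. -/
def homogeneous (K : Type*) {V E : Type*} [One K] (p : V → E) (v : V) : K × E := (1, p v)

theorem linearIndepOn_const_sub_of_homogeneous {w : E} (hQ : LinearIndepOn K (homogeneous K p) Q)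
    (hw : ((1, w) : K × E) ∉ Submodule.span K (homogeneous K p '' Q)) :
    LinearIndepOn K (fun z => w - p z) Q := by
  refine LinearIndepOn.of_comp (LinearMap.inr K K E) ?_
  exact (linearIndepOn_const_sub hQ hw).congr fun z _ => by simp [homogeneous]

theorem linearIndepOn_midpoint_sub [Invertible (2 : K)]
    (hQ : LinearIndepOn K (homogeneous K p) Q) (hx : x ∈ Q) (hy : y ∈ Q) (hxy : x ≠ y) :
    LinearIndepOn K (fun z => midpoint K (p x) (p y) - p z) (Q \ {x}) := by
  refine linearIndepOn_const_sub_of_homogeneous (hQ.mono Set.sdiff_subset) fun hmem => ?_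
  have hx_eq : homogeneous K p x =
      (2 : K) • ((1, midpoint K (p x) (p y)) : K × E) - homogeneous K p y := by
    ext <;> simp only [homogeneous, two_smul, Prod.mk_add_mk, Prod.mk_sub_mk, midpoint_add_self,
      add_sub_cancel_right]
  have hy_mem : homogeneous K p y ∈ Submodule.span K (homogeneous K p '' (Q \ {x})) :=
    Submodule.subset_span ⟨y, ⟨hy, hxy.symm⟩, rfl⟩
  rw [← Set.insert_eq_of_mem hx, ← Set.insert_sdiff_singleton] at hQ
  exact hQ.notMem_span_of_insert (by simp)
    (hx_eq ▸ sub_mem (Submodule.smul_mem _ _ hmem) hy_mem)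

variable [DecidableEq V]

theorem linearIndepOn_rigidityRow_union_star (hB : LinearIndepOn K (rigidityRow p) B)
    (hvB : ∀ e ∈ B, v ∉ e) (hQ : LinearIndepOn K (fun z => p v - p z) Q) :
    LinearIndepOn K (rigidityRow p) (B ∪ (fun z => s(v, z)) '' Q) := by
  refine linearIndepOn_union_of_map (LinearMap.proj v) hB
    (fun e he => rigidityRow_apply_of_notMem p (hvB e he)) (LinearIndepOn.image_of_comp _ _ ?_)
  exact hQ.congr fun z _ => (rigidityRow_mk_apply_left p v z).symm

theorem rigidityRow_update_midpoint [Invertible (2 : K)] (p : V → E) (hxv : x ≠ v) (hyv : y ≠ v) :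
    rigidityRow (Function.update p v (midpoint K (p x) (p y))) s(x, y) = (2 : K) •
      (rigidityRow (Function.update p v (midpoint K (p x) (p y))) s(v, x) +
        rigidityRow (Function.update p v (midpoint K (p x) (p y))) s(v, y)) := by
  rcases eq_or_ne x y with rfl | -
  · simp [rigidityRow_mk, hxv]
  simp only [rigidityRow_mk, Function.update_self, Function.update_of_ne hxv,
    Function.update_of_ne hyv]
  have hcancel : Pi.single (M := fun _ => E) v (p y - p x) + Pi.single v (p x - p y) = 0 := by
    rw [← Pi.single_add, sub_add_sub_cancel, sub_self, Pi.single_zero]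
  simp only [left_sub_midpoint, right_sub_midpoint, midpoint_sub_left, midpoint_sub_right,
    Pi.single_smul', ← smul_add, smul_smul, mul_invOf_self, one_smul]
  rw [add_add_add_comm, hcancel, zero_add]

/-- Subdividing the edge `xy`: with `v` at the midpoint of `x` and `y` the rows of `vx` and `vy`
together span the row of `xy`, which can therefore be exchanged for that of `vx`. -/
theorem linearIndepOn_rigidityRow_update_midpoint [Invertible (2 : K)]
    (hB : LinearIndepOn K (rigidityRow p) (insert s(x, y) B)) (hvB : ∀ e ∈ B, v ∉ e)
    (hxyB : s(x, y) ∉ B) (hQ : LinearIndepOn K (homogeneous K p) Q) (hv : v ∉ Q) (hx : x ∈ Q)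
    (hy : y ∈ Q) (hxy : x ≠ y) :
    LinearIndepOn K (rigidityRow (Function.update p v (midpoint K (p x) (p y))))
      (B ∪ (fun z => s(v, z)) '' Q) := by
  have hxv : x ≠ v := ne_of_mem_of_not_mem hx hv
  have hyv : y ≠ v := ne_of_mem_of_not_mem hy hv
  set q := Function.update p v (midpoint K (p x) (p y)) with hq
  set W := B ∪ (fun z => s(v, z)) '' (Q \ {x}) with hW
  have hvxy : v ∉ s(x, y) := by simp [hxv.symm, hyv.symm]
  have hxyW : s(x, y) ∉ W := by
    rintro (h | ⟨z, -, h⟩)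
    · exact hxyB h
    · exact hvxy (h ▸ Sym2.mem_mk_left v z)
  have hvB' : ∀ e ∈ insert s(x, y) B, v ∉ e := Set.forall_mem_insert.2 ⟨hvxy, hvB⟩
  have hind : LinearIndepOn K (rigidityRow q) (insert s(x, y) W) := by
    rw [hW, ← Set.insert_union]
    refine linearIndepOn_rigidityRow_union_star
      (hB.congr fun e he => (rigidityRow_update_of_notMem p (hvB' e he) _).symm) hvB' ?_
    refine (linearIndepOn_midpoint_sub hQ hx hy hxy).congr fun z hz => ?_
    rw [hq, Function.update_self, Function.update_of_ne (ne_of_mem_of_not_mem hz.1 hv)]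
  have hstar : B ∪ (fun z => s(v, z)) '' Q = insert s(v, x) W := by
    rw [hW, ← Set.union_insert, ← Set.image_insert_eq (f := fun z => s(v, z)),
      Set.insert_sdiff_singleton, Set.insert_eq_of_mem hx]
  obtain ⟨hWind, hxy_notMem⟩ := (linearIndepOn_insert hxyW).1 hind
  have hvyW : s(v, y) ∈ W := Or.inr ⟨y, ⟨hy, hxy.symm⟩, rfl⟩
  rw [hstar]
  refine hWind.insert fun hvx => hxy_notMem ?_
  rw [hq, rigidityRow_update_midpoint p hxv hyv, ← hq]
  exact Submodule.smul_mem _ _ (add_mem hvx (Submodule.subset_span ⟨_, hvyW, rfl⟩))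

end Extension

section Generic

theorem linearIndependent_homogeneous_iff {K V E : Type*} [Field K] [AddCommGroup E] [Module K E]
    {p : V → E} : LinearIndependent K (homogeneous K p) ↔ AffineIndependent K p := by
  simp only [linearIndependent_iff', affineIndependent_iff, Prod.ext_iff, Prod.fst_sum,
    Prod.snd_sum, homogeneous, Prod.smul_mk, smul_eq_mul, mul_one, Prod.fst_zero, Prod.snd_zero,
    and_imp]

theorem exists_linearIndepOn_homogeneous {V : Type*} {d : ℕ} (S : Finset V) (hS : #S ≤ d + 1) :
    ∃ q : V → Fin d → ℝ, LinearIndepOn ℝ (homogeneous ℝ q) (S : Set V) := by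
  obtain ⟨P⟩ := AffineBasis.exists_affineBasis_of_finiteDimensional (k := ℝ) (P := Fin d → ℝ)
    (ι := Fin (d + 1)) (by simp)
  obtain ⟨g, -, hg⟩ := S.finite_toSet.exists_injOn_of_encard_le
    (t := (Set.univ : Set (Fin (d + 1))))
    (by simpa [Set.encard_coe_eq_coe_finsetCard] using mod_cast hS)
  exact ⟨P ∘ g, (linearIndependent_homogeneous_iff.2 P.ind).comp (fun v : S => g v)
    (fun a b h => Subtype.ext (hg a.2 b.2 h))⟩

variable {V : Type*} [DecidableEq V] {d : ℕ} {p : V → Fin d → ℝ} {v x y : V} {B : Set (Sym2 V)}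
  {Q : Finset V}

/-- A generic framework in `ℝ^d`: its points are in general position and its rigidity matrix has
all the independent sets of rows that the rigidity matrix of some other framework has. -/
structure IsGeneric (p : V → Fin d → ℝ) : Prop where
  linearIndepOn_homogeneous (S : Finset V) (hS : #S ≤ d + 1) :
    LinearIndepOn ℝ (homogeneous ℝ p) (S : Set V)
  linearIndepOn_rigidityRow (q : V → Fin d → ℝ) {B : Set (Sym2 V)}
    (hB : LinearIndepOn ℝ (rigidityRow q) B) : LinearIndepOn ℝ (rigidityRow p) B

theorem exists_mvPolynomial_eval_ne_zero_iff_rigidityRow [Finite V] (d : ℕ)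
    (B : Finset (Sym2 V)) :
    ∃ Δ : MvPolynomial (V × Fin d) ℝ, ∀ q : V → Fin d → ℝ,
      MvPolynomial.eval (Function.uncurry q) Δ ≠ 0 ↔
        LinearIndepOn ℝ (rigidityRow q) (B : Set (Sym2 V)) := by
  cases nonempty_fintype V
  obtain ⟨Δ, hΔ⟩ := exists_mvPolynomial_eval_ne_zero_iff_linearIndepOn
    (fun (e : Sym2 V) (k : V × Fin d) =>
      rigidityRow (fun v i => (MvPolynomial.X (v, i) : MvPolynomial (V × Fin d) ℝ)) e k.1 k.2) B
  refine ⟨Δ, fun q => (hΔ _).trans ?_⟩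
  rw [← (LinearEquiv.curry ℝ ℝ V (Fin d)).toLinearMap.linearIndepOn_iff_of_injOn
    (LinearEquiv.injective _).injOn]
  refine linearIndepOn_congr fun e _ => ?_
  funext v i
  induction e with | _ a b
  simp [rigidityRow_mk, Pi.single_apply, ite_apply, apply_ite (MvPolynomial.eval _)]

theorem exists_mvPolynomial_eval_ne_zero_iff_homogeneous {V : Type*} (d : ℕ) (S : Finset V) :
    ∃ Δ : MvPolynomial (V × Fin d) ℝ, ∀ q : V → Fin d → ℝ,
      MvPolynomial.eval (Function.uncurry q) Δ ≠ 0 ↔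
        LinearIndepOn ℝ (homogeneous ℝ q) (S : Set V) := by
  obtain ⟨Δ, hΔ⟩ := exists_mvPolynomial_eval_ne_zero_iff_linearIndepOn
    (fun v : V => (Fin.cons 1 fun i => MvPolynomial.X (v, i) :
      Fin (d + 1) → MvPolynomial (V × Fin d) ℝ)) S
  refine ⟨Δ, fun q => (hΔ _).trans ?_⟩
  rw [← (Fin.consLinearEquiv ℝ fun _ : Fin (d + 1) => ℝ).toLinearMap.linearIndepOn_iff_of_injOn
    (LinearEquiv.injective _).injOn]
  refine linearIndepOn_congr fun v _ => ?_
  funext k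
  cases k using Fin.cases <;> simp [homogeneous, Fin.consLinearEquiv]

theorem exists_isGeneric (V : Type*) [Finite V] [DecidableEq V] (d : ℕ) :
    ∃ p : V → Fin d → ℝ, IsGeneric p := by
  choose Δrow hΔrow using exists_mvPolynomial_eval_ne_zero_iff_rigidityRow (V := V) d
  choose Δhom hΔhom using exists_mvPolynomial_eval_ne_zero_iff_homogeneous (V := V) d
  cases nonempty_fintype V
  obtain ⟨p, hp⟩ := exists_eval_ne_zero_of_exists (Sum.elim Δrow Δhom)
  rw [← Function.uncurry_curry p] at hp
  refine ⟨Function.curry p, fun S hS => ?_, fun q B hB => ?_⟩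
  · obtain ⟨q, hq⟩ := exists_linearIndepOn_homogeneous (d := d) S hS
    exact (hΔhom S _).1 (hp (Sum.inr S) ⟨_, (hΔhom S q).2 hq⟩)
  · lift B to Finset (Sym2 V) using B.toFinite
    exact (hΔrow B _).1 (hp (Sum.inl B) ⟨_, (hΔrow B q).2 hB⟩)

theorem IsGeneric.linearIndepOn_union_star (hp : IsGeneric p)
    (hB : LinearIndepOn ℝ (rigidityRow p) B) (hvB : ∀ e ∈ B, v ∉ e) (hv : v ∉ Q) (hQ : #Q ≤ d) :
    LinearIndepOn ℝ (rigidityRow p) (B ∪ (fun z => s(v, z)) '' Q) := by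
  have hind := hp.linearIndepOn_homogeneous (insert v Q) (by rw [card_insert_of_notMem hv]; lia)
  rw [coe_insert] at hind
  exact linearIndepOn_rigidityRow_union_star hB hvB (linearIndepOn_const_sub_of_homogeneous
    (hind.mono (Set.subset_insert _ _)) (hind.notMem_span_of_insert (by exact_mod_cast hv)))

theorem IsGeneric.linearIndepOn_union_star_of_insert (hp : IsGeneric p)
    (hB : LinearIndepOn ℝ (rigidityRow p) (insert s(x, y) B)) (hvB : ∀ e ∈ B, v ∉ e)
    (hxyB : s(x, y) ∉ B) (hv : v ∉ Q) (hx : x ∈ Q) (hy : y ∈ Q) (hxy : x ≠ y) (hQ : #Q ≤ d + 1) :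
    LinearIndepOn ℝ (rigidityRow p) (B ∪ (fun z => s(v, z)) '' Q) :=
  hp.linearIndepOn_rigidityRow _ (linearIndepOn_rigidityRow_update_midpoint hB hvB hxyB
    (hp.linearIndepOn_homogeneous Q hQ) hv hx hy hxy)

end Generic

section Stress

/-- The coefficients `l a * l b` form a self-stress of the complete graph on `T`. -/
theorem sum_mul_smul_rigidityRow_eq_zero {K V E : Type*} [DecidableEq V] [Field K] [AddCommGroup E]
    [Module K E] (p : V → E) (T : Finset V) (l : V → K)
    (hl : ∑ v ∈ T, l v • homogeneous K p v = 0) :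
    ∑ a ∈ T, ∑ b ∈ T, (l a * l b) • rigidityRow p s(a, b) = 0 := by
  have hsum : ∑ b ∈ T, l b = 0 := by simpa [homogeneous, Prod.fst_sum] using congrArg Prod.fst hl
  have hsmul : ∑ b ∈ T, l b • p b = 0 := by
    simpa [homogeneous, Prod.snd_sum] using congrArg Prod.snd hl
  have hhalf : ∑ a ∈ T, ∑ b ∈ T, (l a * l b) • (Pi.single a (p a - p b) : V → E) = 0 := by
    refine sum_eq_zero fun a _ => ?_
    simp only [mul_smul, ← smul_sum, ← LinearMap.single_apply (R := K), ← map_smul, ← map_sum]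
    simp only [smul_sub, sum_sub_distrib, ← sum_smul, hsum, hsmul, zero_smul, sub_zero,
      map_zero, smul_zero]
  simp only [rigidityRow_mk, smul_add, sum_add_distrib, hhalf, zero_add]
  rw [sum_comm]
  simpa only [mul_comm] using hhalf

variable {V : Type*} [DecidableEq V] {d : ℕ} {p : V → Fin d → ℝ}

theorem IsGeneric.exists_affine_circuit (hp : IsGeneric p) {T : Finset V} (hT : #T = d + 2) :
    ∃ l : V → ℝ, ∑ v ∈ T, l v • homogeneous ℝ p v = 0 ∧ ∀ v ∈ T, l v ≠ 0 := by
  have hdep : ¬ LinearIndepOn ℝ (homogeneous ℝ p) (T : Set V) := fun h => by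
    have hcard := LinearIndependent.fintype_card_le_finrank h
    simp only [coe_sort_coe, Fintype.card_coe, hT, Module.finrank_prod, Module.finrank_self,
      Module.finrank_fin_fun] at hcard
    lia
  rw [linearIndepOn_finset_iff] at hdep
  push Not at hdep
  obtain ⟨l, hl, w, hw, hlw⟩ := hdep
  refine ⟨l, hl, fun u hu hlu => hlw ?_⟩
  rcases eq_or_ne w u with rfl | hwu
  · exact hlu
  have hind := hp.linearIndepOn_homogeneous (T.erase u) (by rw [card_erase_of_mem hu]; lia)
  rw [linearIndepOn_finset_iff] at hind
  exact hind l (by rw [sum_erase _ (by rw [hlu, zero_smul]), hl]) w (mem_erase.2 ⟨hwu, hw⟩)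

/-- The complete graph on `d + 2` vertices is a circuit of the generic rigidity matroid. -/
theorem IsGeneric.rigidityRow_mem_of_forall_mem (hp : IsGeneric p)
    {U : Submodule ℝ (V → Fin d → ℝ)} {T : Finset V} (hT : #T = d + 2) {v x : V} (hv : v ∈ T)
    (hx : x ∈ T)
    (hU : ∀ a ∈ T, ∀ b ∈ T, s(a, b) ≠ s(v, x) → rigidityRow p s(a, b) ∈ U) :
    rigidityRow p s(v, x) ∈ U := by
  rcases eq_or_ne v x with rfl | hvx
  · rw [rigidityRow_mk_self]
    exact U.zero_mem
  obtain ⟨l, hl, hne⟩ := hp.exists_affine_circuit hT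
  have hstress := congrArg U.mkQ (sum_mul_smul_rigidityRow_eq_zero p T l hl)
  rw [← sum_product', map_sum, map_zero, sum_eq_add_of_mem (v, x) (x, v) (mk_mem_product hv hx)
    (mk_mem_product hx hv) (by simp [hvx])] at hstress
  · rw [Sym2.eq_swap (a := x), mul_comm (l x), ← map_add, ← add_smul, map_smul,
      smul_eq_zero, Submodule.mkQ_apply, Submodule.Quotient.mk_eq_zero] at hstress
    refine hstress.resolve_left ?_
    rw [← two_mul]
    exact mul_ne_zero two_ne_zero (mul_ne_zero (hne v hv) (hne x hx))
  · rintro ⟨a, b⟩ hab ⟨hvx', hxv'⟩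
    rw [mem_product] at hab
    rw [map_smul, Submodule.mkQ_apply, (Submodule.Quotient.mk_eq_zero U).2, smul_zero]
    refine hU a hab.1 b hab.2 fun h => ?_
    rcases Sym2.eq_iff.1 h with ⟨rfl, rfl⟩ | ⟨rfl, rfl⟩ <;> contradiction

end Stress

section Separation

variable {V : Type*} [DecidableEq V] {d : ℕ} {p : V → Fin d → ℝ}

theorem lsum_rigidityRow {K V E : Type*} [Fintype V] [DecidableEq V] [Field K] [AddCommGroup E]
    [Module K E] (p : V → E) (μ : V → E →ₗ[K] K) (a b : V) :
    LinearMap.lsum K (fun _ : V => E) K μ (rigidityRow p s(a, b)) = (μ a - μ b) (p a - p b) := by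
  rw [rigidityRow_mk, map_add, LinearMap.lsum_piSingle, LinearMap.lsum_piSingle,
    LinearMap.sub_apply, ← neg_sub (p a), map_neg, ← sub_eq_add_neg]

theorem IsGeneric.exists_linearMap_ne_zero (hp : IsGeneric p) {S : Finset V} (hS : #S ≤ d) {b : V}
    (hb : b ∉ S) : ∃ f : ℝ × (Fin d → ℝ) →ₗ[ℝ] ℝ,
      f (homogeneous ℝ p b) ≠ 0 ∧ ∀ s ∈ S, f (homogeneous ℝ p s) = 0 := by
  have hind := hp.linearIndepOn_homogeneous (insert b S) (by rw [card_insert_of_notMem hb]; lia)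
  rw [coe_insert] at hind
  obtain ⟨f, hfb, hf⟩ := Submodule.exists_le_ker_of_notMem
    (hind.notMem_span_of_insert (by exact_mod_cast hb))
  exact ⟨f, hfb, fun s hs => hf (Submodule.subset_span ⟨s, hs, rfl⟩)⟩

/-- The velocities, as functionals on `E`, of the infinitesimal rotation of the framework `p` about
the common zero set of the affine functions `f` and `g`. -/
def rotation {K V E : Type*} [Field K] [AddCommGroup E] [Module K E] (p : V → E)
    (f g : K × E →ₗ[K] K) (z : V) : E →ₗ[K] K :=
  g (homogeneous K p z) • f ∘ₗ LinearMap.inr K K E -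
    f (homogeneous K p z) • g ∘ₗ LinearMap.inr K K E

theorem rotation_apply_sub {K V E : Type*} [Field K] [AddCommGroup E] [Module K E] (p : V → E)
    (f g : K × E →ₗ[K] K) (z u w : V) : rotation p f g z (p u - p w) =
      g (homogeneous K p z) * (f (homogeneous K p u) - f (homogeneous K p w)) -
        f (homogeneous K p z) * (g (homogeneous K p u) - g (homogeneous K p w)) := by
  have hsub : ((0, p u - p w) : K × E) = homogeneous K p u - homogeneous K p w := by
    simp [homogeneous]
  simp [rotation, hsub]

theorem span_rigidityRow_le_ker_rotation {K V E : Type*} [Field K] [AddCommGroup E] [Module K E]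
    [Fintype V] [DecidableEq V] (p : V → E) (f g : K × E →ₗ[K] K) (H : SimpleGraph V)
    {S A : Finset V} (hf : ∀ z ∈ S, f (homogeneous K p z) = 0)
    (hg : ∀ z ∈ S, g (homogeneous K p z) = 0)
    (hA : ∀ x ∈ A, ∀ y, H.Adj x y → y ∈ A ∨ y ∈ S) :
    Submodule.span K (rigidityRow p '' H.edgeSet) ≤ LinearMap.ker
      (LinearMap.lsum K (fun _ : V => E) K fun z => if z ∈ A then rotation p f g z else 0) := by
  have hmove : ∀ z, z ∈ A ∨ z ∈ S →
      (if z ∈ A then rotation p f g z else 0) = rotation p f g z := by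
    rintro z (hz | hz)
    · exact if_pos hz
    · simp [rotation, hf z hz, hg z hz]
  have hpreserve : ∀ x y, H.Adj x y → x ∈ A → rigidityRow p s(x, y) ∈ LinearMap.ker
      (LinearMap.lsum K (fun _ : V => E) K fun z => if z ∈ A then rotation p f g z else 0) := by
    intro x y hxy hx
    rw [LinearMap.mem_ker, lsum_rigidityRow, hmove x (Or.inl hx), hmove y (hA x hx y hxy),
      LinearMap.sub_apply, rotation_apply_sub, rotation_apply_sub]
    ring
  rw [Submodule.span_le]
  rintro _ ⟨e, he, rfl⟩
  induction e with | _ x y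
  by_cases hx : x ∈ A
  · exact hpreserve x y he hx
  by_cases hy : y ∈ A
  · rw [Sym2.eq_swap]
    exact hpreserve y x (SimpleGraph.Adj.symm he) hy
  · rw [SetLike.mem_coe, LinearMap.mem_ker, lsum_rigidityRow, if_neg hx, if_neg hy, sub_zero,
      LinearMap.zero_apply]

theorem IsGeneric.rigidityRow_notMem_span_of_separated [Finite V] (hp : IsGeneric p)
    {H : SimpleGraph V} {S A : Finset V} (hS : #S < d) {a b : V} (ha : a ∈ A) (haS : a ∉ S)
    (hb : b ∉ A) (hbS : b ∉ S) (hA : ∀ x ∈ A, ∀ y, H.Adj x y → y ∈ A ∨ y ∈ S) :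
    rigidityRow p s(a, b) ∉ Submodule.span ℝ (rigidityRow p '' H.edgeSet) := by
  cases nonempty_fintype V
  have hab : a ≠ b := ne_of_mem_of_not_mem ha hb
  obtain ⟨f, hfb, hf⟩ := hp.exists_linearMap_ne_zero (S := insert a S) (b := b)
    ((card_insert_le _ _).trans hS) (by simp [hab.symm, hbS])
  obtain ⟨g, hga, hg⟩ := hp.exists_linearMap_ne_zero (S := insert b S) (b := a)
    ((card_insert_le _ _).trans hS) (by simp [hab, haS])
  intro hmem
  have hzero := span_rigidityRow_le_ker_rotation p f g H (fun z hz => hf z (mem_insert_of_mem hz))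
    (fun z hz => hg z (mem_insert_of_mem hz)) hA hmem
  rw [LinearMap.mem_ker, lsum_rigidityRow, if_pos ha, if_neg hb, sub_zero, rotation_apply_sub,
    hf a (mem_insert_self _ _), zero_sub, zero_mul, sub_zero] at hzero
  exact mul_ne_zero hga (neg_ne_zero.2 hfb) hzero

/-- A graph is rigid at the framework `p` if its rigidity rows have the same span as those of the
complete graph. -/
def IsRigid (p : V → Fin d → ℝ) (H : SimpleGraph V) : Prop :=
  Submodule.span ℝ (rigidityRow p '' H.edgeSet) = Submodule.span ℝ (Set.range (rigidityRow p))

theorem IsRigid.kConnected [Fintype V] (hp : IsGeneric p) (hV : d < Fintype.card V)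
    {H : SimpleGraph V} (hH : IsRigid p H) : KConnected H d := by
  classical
  refine ⟨by rwa [Nat.card_eq_fintype_card], fun S _ hS => ?_⟩
  rw [Set.ncard_eq_toFinset_card'] at hS
  obtain ⟨u, hu⟩ : ∃ u, u ∉ S.toFinset := by
    by_contra! h
    rw [(eq_univ_iff_forall).2 h, card_univ] at hS
    lia
  have : Nonempty (Sᶜ : Set V) := ⟨u, by simpa using hu⟩
  refine ⟨fun a b => ?_⟩
  by_contra hab
  let A : Finset V := {x | ∃ hx : x ∈ Sᶜ, (H.induce Sᶜ).Reachable a ⟨x, hx⟩}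
  refine hp.rigidityRow_notMem_span_of_separated (H := H) (A := A) hS (a := a) (b := b)
    (mem_filter.2 ⟨mem_univ _, a.2, .rfl⟩) (fun h => a.2 (Set.mem_toFinset.1 h))
    (fun h => hab (mem_filter.1 h).2.2) (fun h => b.2 (Set.mem_toFinset.1 h)) (fun x hx y hxy => ?_)
    (hH ▸ Submodule.subset_span ⟨s(a.1, b.1), rfl⟩)
  obtain ⟨-, hxS, hax⟩ := mem_filter.1 hx
  by_cases hy : y ∈ S
  · exact Or.inr (Set.mem_toFinset.2 hy)
  · exact Or.inl (mem_filter.2 ⟨mem_univ _, hy, hax.trans (SimpleGraph.Adj.reachable hxy)⟩)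

end Separation

/-! ### Packing bases of a vector configuration -/

section BasePacking

variable {K W ι J : Type*} [Field K] [AddCommGroup W] [Module K W] {ρ : ι → W}

theorem mem_span_image_inter [Finite ι] {I X : Set ι} {x : W} (hI : LinearIndepOn K ρ I)
    (hx : x ∈ Submodule.span K (ρ '' I))
    (hX : ∀ f ∈ I \ X, x ∈ Submodule.span K (ρ '' (I \ {f}))) :
    x ∈ Submodule.span K (ρ '' (I ∩ X)) := by
  classical
  lift I to Finset ι using I.toFinite
  obtain ⟨a, rfl⟩ := (Submodule.mem_span_image_finset_iff_exists_fun' K).1 hx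
  have hcoeff : ∀ f ∈ I, f ∉ X → a f = 0 := by
    intro f hf hfX
    by_contra haf
    have hrest : ∑ i ∈ I.erase f, a i • ρ i ∈ Submodule.span K (ρ '' (I \ {f})) :=
      Submodule.sum_mem _ fun i hi => Submodule.smul_mem _ _ (Submodule.subset_span
        ⟨i, ⟨mem_of_mem_erase hi, ne_of_mem_erase hi⟩, rfl⟩)
    have hsum := hX f ⟨hf, hfX⟩
    rw [← add_sum_erase I _ hf, Submodule.add_mem_iff_left _ hrest, Submodule.smul_mem_iff _ haf]
      at hsum
    rw [← Set.insert_eq_of_mem (mem_coe.2 hf), ← Set.insert_sdiff_singleton] at hI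
    exact hI.notMem_span_of_insert (by simp) hsum
  refine Submodule.sum_mem _ fun i hi => ?_
  by_cases hiX : i ∈ X
  · exact Submodule.smul_mem _ _ (Submodule.subset_span ⟨i, ⟨hi, hiX⟩, rfl⟩)
  · rw [hcoeff i hi hiX, zero_smul]
    exact Submodule.zero_mem _

theorem finrank_span_image_eq_ncard [Finite ι] {I : Set ι} (hI : LinearIndepOn K ρ I) :
    Module.finrank K (Submodule.span K (ρ '' I)) = I.ncard := by
  cases nonempty_fintype I
  rw [Set.image_eq_range, finrank_span_eq_card hI, ← Nat.card_eq_fintype_card, Nat.card_coe_set_eq]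

/-- A partial colouring of the ground set (`none` meaning uncoloured) whose colour classes are
independent: an encoding of a family of disjoint independent sets. -/
def IsIndepColouring (K : Type*) {W ι J : Type*} [Field K] [AddCommGroup W] [Module K W] (ρ : ι → W)
    (c : ι → Option J) : Prop :=
  ∀ j, LinearIndepOn K ρ (c ⁻¹' {some j})

/-- An independent colouring with the fewest uncoloured elements. -/
def IsOptimalColouring (K : Type*) {W ι J : Type*} [Field K] [AddCommGroup W] [Module K W]
    (ρ : ι → W) (c : ι → Option J) : Prop :=
  IsIndepColouring K ρ c ∧
    ∀ c' : ι → Option J, IsIndepColouring K ρ c' → (c ⁻¹' {none}).ncard ≤ (c' ⁻¹' {none}).ncard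

/-- The independent colouring `c'` arises from `c` by giving the colour of `f` to an uncoloured
element `e`, and uncolouring `f`. -/
def IsExchange (K : Type*) {W ι J : Type*} [Field K] [AddCommGroup W] [Module K W] [DecidableEq ι]
    (ρ : ι → W) (c c' : ι → Option J) : Prop :=
  ∃ e f j, c e = none ∧ c f = some j ∧
    c' = Function.update (Function.update c f none) e (some j) ∧ IsIndepColouring K ρ c'

/-- The elements which some sequence of exchanges starting from `c` makes uncoloured. -/
def exchangeable (K : Type*) {W ι J : Type*} [Field K] [AddCommGroup W] [Module K W] [DecidableEq ι]
    (ρ : ι → W) (c : ι → Option J) : Set ι :=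
  {x | ∃ c', Relation.ReflTransGen (IsExchange K ρ) c c' ∧ c' x = none}

theorem exists_isOptimalColouring (K : Type*) {W ι : Type*} [Field K] [AddCommGroup W] [Module K W]
    (ρ : ι → W) (J : Type*) : ∃ c : ι → Option J, IsOptimalColouring K ρ c := by
  have hne : {c : ι → Option J | IsIndepColouring K ρ c}.Nonempty :=
    ⟨fun _ => none, fun j => by simp⟩
  obtain ⟨c, hc, hmin⟩ :=
    (measure fun c : ι → Option J => (c ⁻¹' {none}).ncard).wf.has_min _ hne
  exact ⟨c, hc, fun c' hc' => not_lt.1 (hmin c' hc')⟩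

section Exchange

variable {c c' : ι → Option J} {e f : ι} {j : J}

theorem IsIndepColouring.update [DecidableEq ι] (hc : IsIndepColouring K ρ c)
    (he : ρ e ∉ Submodule.span K (ρ '' (c ⁻¹' {some j}))) :
    IsIndepColouring K ρ (Function.update c e (some j)) := by
  intro i
  rcases eq_or_ne i j with rfl | hij
  · refine ((hc i).insert he).mono fun g hg => ?_
    rcases eq_or_ne g e with rfl | hge
    · exact Set.mem_insert _ _
    · exact Or.inr (by simpa [Function.update_of_ne hge] using hg)
  · refine (hc i).mono fun g hg => ?_
    rcases eq_or_ne g e with rfl | hge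
    · simp [hij.symm] at hg
    · simpa [Function.update_of_ne hge] using hg

theorem IsOptimalColouring.mem_span_class [Finite ι] (hc : IsOptimalColouring K ρ c)
    (he : c e = none) (j : J) : ρ e ∈ Submodule.span K (ρ '' (c ⁻¹' {some j})) := by
  classical
  by_contra hmem
  refine (hc.2 _ (hc.1.update hmem)).not_gt (Set.ncard_lt_ncard ?_)
  refine ⟨fun g hg => ?_, fun h => ?_⟩
  · rcases eq_or_ne g e with rfl | hge
    · exact he
    · simpa [hge] using hg
  · simpa using h he

variable [DecidableEq ι]

theorem IsIndepColouring.exchange (hc : IsIndepColouring K ρ c)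
    (he : ρ e ∉ Submodule.span K (ρ '' (c ⁻¹' {some j} \ {f}))) :
    IsIndepColouring K ρ (Function.update (Function.update c f none) e (some j)) := by
  have hclass : ∀ i, Function.update c f none ⁻¹' {some i} = c ⁻¹' {some i} \ {f} := fun i => by
    ext g
    rcases eq_or_ne g f with rfl | hgf <;> simp [*]
  refine IsIndepColouring.update (fun i => ?_) (by rwa [hclass])
  rw [hclass]
  exact (hc i).mono Set.sdiff_subset

theorem preimage_none_update_update (he : c e = none) (hf : c f ≠ none) :
    Function.update (Function.update c f none) e (some j) ⁻¹' {none} =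
      insert f (c ⁻¹' {none} \ {e}) := by
  have hfe : f ≠ e := fun h => hf (h ▸ he)
  ext g
  rcases eq_or_ne g e with rfl | hge
  · simp [hfe.symm]
  · rcases eq_or_ne g f with rfl | hgf <;> simp [*]

theorem IsExchange.ncard_eq (h : IsExchange K ρ c c') :
    (c' ⁻¹' {none}).ncard = (c ⁻¹' {none}).ncard := by
  obtain ⟨e, f, j, he, hf, rfl, -⟩ := h
  have hf' : f ∉ c ⁻¹' {none} := by simp [hf]
  rw [preimage_none_update_update he hf', Set.ncard_exchange hf' he]

theorem IsOptimalColouring.of_reflTransGen (hc : IsOptimalColouring K ρ c)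
    (h : Relation.ReflTransGen (IsExchange K ρ) c c') : IsOptimalColouring K ρ c' := by
  induction h with
  | refl => exact hc
  | tail _ hstep ih =>
    rw [IsOptimalColouring, hstep.ncard_eq]
    obtain ⟨-, -, -, -, -, -, hind⟩ := hstep
    exact ⟨hind, ih.2⟩

variable [Finite ι]

theorem IsOptimalColouring.mem_span_class_inter (hc : IsOptimalColouring K ρ c)
    (h : Relation.ReflTransGen (IsExchange K ρ) c c') (he : c' e = none) (j : J) :
    ρ e ∈ Submodule.span K (ρ '' (c' ⁻¹' {some j} ∩ exchangeable K ρ c)) := by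
  have hc' := hc.of_reflTransGen h
  refine mem_span_image_inter (hc'.1 j) (hc'.mem_span_class he j) fun f hf => ?_
  by_contra hmem
  refine hf.2 ⟨_, h.tail ⟨e, f, j, he, hf.1, rfl, hc'.1.exchange hmem⟩, ?_⟩
  have hfe : f ≠ e := fun h => by simpa [h, he] using hf.1
  simp [hfe]

theorem IsOptimalColouring.span_class_inter_le (hc : IsOptimalColouring K ρ c)
    (h : Relation.ReflTransGen (IsExchange K ρ) c c') (j : J) :
    Submodule.span K (ρ '' (c' ⁻¹' {some j} ∩ exchangeable K ρ c)) ≤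
      Submodule.span K (ρ '' (c ⁻¹' {some j} ∩ exchangeable K ρ c)) := by
  induction h with
  | refl => exact le_rfl
  | tail hreach hstep ih =>
    refine le_trans (Submodule.span_le.2 ?_) ih
    obtain ⟨e, f, i, he, hf, rfl, -⟩ := hstep
    rintro _ ⟨g, ⟨hgj, hg⟩, rfl⟩
    rcases eq_or_ne g e with rfl | hge
    · exact hc.mem_span_class_inter hreach he j
    rcases eq_or_ne g f with rfl | hgf
    · simp [hge] at hgj
    · exact Submodule.subset_span ⟨g, ⟨by simpa [hge, hgf] using hgj, hg⟩, rfl⟩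

theorem IsOptimalColouring.span_exchangeable_le (hc : IsOptimalColouring K ρ c) (j : J) :
    Submodule.span K (ρ '' exchangeable K ρ c) ≤
      Submodule.span K (ρ '' (c ⁻¹' {some j} ∩ exchangeable K ρ c)) := by
  rw [Submodule.span_le]
  rintro _ ⟨e, ⟨c', h, he⟩, rfl⟩
  exact hc.span_class_inter_le h j (hc.mem_span_class_inter h he j)

theorem IsOptimalColouring.card_mul_finrank_add_ncard_le [Fintype J]
    (hc : IsOptimalColouring K ρ c) :
    Fintype.card J * Module.finrank K (Submodule.span K (ρ '' exchangeable K ρ c)) +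
      (exchangeable K ρ c)ᶜ.ncard ≤ ∑ j, (c ⁻¹' {some j}).ncard := by
  set X := exchangeable K ρ c
  have hinter : ∀ j, Module.finrank K (Submodule.span K (ρ '' X)) ≤ (c ⁻¹' {some j} ∩ X).ncard := by
    intro j
    have := Module.Finite.span_of_finite K ((c ⁻¹' {some j} ∩ X).toFinite.image ρ)
    rw [← finrank_span_image_eq_ncard ((hc.1 j).mono Set.inter_subset_left)]
    exact Submodule.finrank_mono (hc.span_exchangeable_le j)
  have hcompl : Xᶜ ⊆ ⋃ j, c ⁻¹' {some j} \ X := by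
    intro x hx
    obtain ⟨j, hj⟩ := Option.ne_none_iff_exists'.1 fun hn => hx ⟨c, .refl, hn⟩
    exact Set.mem_iUnion.2 ⟨j, hj, hx⟩
  calc _ ≤ ∑ j, (c ⁻¹' {some j} ∩ X).ncard + ∑ j, (c ⁻¹' {some j} \ X).ncard := by
        gcongr
        · rw [← smul_eq_mul, ← card_univ]
          exact card_nsmul_le_sum _ _ _ fun j _ => hinter j
        · exact (Set.ncard_le_ncard hcompl).trans (Set.ncard_iUnion_le_of_fintype _)
    _ = _ := by
        rw [← sum_add_distrib]
        exact sum_congr rfl fun j _ => Set.ncard_inter_add_ncard_sdiff_eq_ncard _ _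

end Exchange

/-- Edmonds' base packing theorem for vector configurations. -/
theorem exists_disjoint_spanning [Finite ι] [Fintype J] (ρ : ι → W)
    (h : ∀ F : Set ι, Fintype.card J * Module.finrank K (Submodule.span K (Set.range ρ)) ≤
      Fintype.card J * Module.finrank K (Submodule.span K (ρ '' F)) + Fᶜ.ncard) :
    ∃ B : J → Set ι, Pairwise (Function.onFun Disjoint B) ∧
      ∀ j, Submodule.span K (ρ '' B j) = Submodule.span K (Set.range ρ) := by
  classical
  obtain ⟨c, hc⟩ := exists_isOptimalColouring K ρ J
  have := Module.Finite.span_of_finite K (Set.finite_range ρ)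
  have hle : ∀ j, Submodule.span K (ρ '' (c ⁻¹' {some j})) ≤ Submodule.span K (Set.range ρ) :=
    fun j => Submodule.span_mono (Set.image_subset_range _ _)
  have hcard : ∀ j, (c ⁻¹' {some j}).ncard ≤ Module.finrank K (Submodule.span K (Set.range ρ)) :=
    fun j => by
      rw [← finrank_span_image_eq_ncard (hc.1 j)]
      exact Submodule.finrank_mono (hle j)
  have hsum : ∑ j, (c ⁻¹' {some j}).ncard =
      ∑ _j : J, Module.finrank K (Submodule.span K (Set.range ρ)) := by
    refine le_antisymm (sum_le_sum fun j _ => hcard j) ?_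
    rw [sum_const, card_univ, smul_eq_mul]
    exact (h _).trans hc.card_mul_finrank_add_ncard_le
  refine ⟨fun j => c ⁻¹' {some j}, fun i j hij => ?_, fun j => ?_⟩
  · exact Disjoint.preimage c (by simpa using hij)
  · refine Submodule.eq_of_le_of_finrank_eq (hle j) ?_
    rw [finrank_span_image_eq_ncard (hc.1 j)]
    exact (sum_eq_sum_iff_of_le fun j _ => hcard j).1 hsum j (mem_univ j)

end BasePacking

/-! ### Rank lower bounds from vertex orders -/

/-- The gluing property of closed sets of the generic `d`-dimensional rigidity matroid: two vertices
with a clique of size at least `d` among their common neighbours are adjacent. -/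
def HasGluing {V : Type*} (C : SimpleGraph V) (d : ℕ) : Prop :=
  ∀ (Q : Finset V) (v x : V), d ≤ #Q → C.IsClique (Q : Set V) → (∀ q ∈ Q, C.Adj v q) →
    (∀ q ∈ Q, C.Adj x q) → v ≠ x → C.Adj v x

open scoped Classical in
/-- The number of independent edges gained by joining a new vertex to `Q`, where `C` is the graph of
all edges already in the span: `d` if `Q` is large enough, and one more if `Q` is also not a clique,
since then a one-extension is available. -/
noncomputable def rankGain {V : Type*} (C : SimpleGraph V) (d : ℕ) (Q : Finset V) : ℕ :=
  if d + 1 ≤ #Q ∧ ¬ C.IsClique (Q : Set V) then d + 1 else if d ≤ #Q then d else 0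

open scoped Classical in
/-- The neighbours of `v` which come before `v` in the order given by `f`. -/
noncomputable def earlierNeighbors {V α : Type*} [Fintype V] [LT α] (C : SimpleGraph V) (f : V → α)
    (v : V) : Finset V :=
  {u | C.Adj v u ∧ f u < f v}

section RankGain

variable {V : Type*} {C : SimpleGraph V} {d : ℕ} {Q : Finset V}

theorem le_rankGain (h : d ≤ #Q) : d ≤ rankGain C d Q := by
  rw [rankGain]
  split_ifs <;> lia

theorem succ_le_rankGain (h : d + 1 ≤ #Q) (hQ : ¬ C.IsClique (Q : Set V)) :
    d + 1 ≤ rankGain C d Q := by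
  rw [rankGain, if_pos ⟨h, hQ⟩]

theorem mem_earlierNeighbors {α : Type*} [Fintype V] [LT α] {f : V → α} {u v : V} :
    u ∈ earlierNeighbors C f v ↔ C.Adj v u ∧ f u < f v := by
  simp [earlierNeighbors]

open scoped Classical in
theorem HasGluing.adj_of_isClique (hC : HasGluing C d) {X : Finset V} (hX : C.IsClique (X : Set V))
    {v w : V} (hv : v ∉ X) (hd : d ≤ #{u ∈ X | C.Adj v u}) (hw : w ∈ X) : C.Adj v w := by
  by_contra hadj
  refine hadj (hC {u ∈ X | C.Adj v u} v w hd (hX.subset (coe_subset.2 (filter_subset _ _)))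
    (fun q hq => (mem_filter.1 hq).2) (fun q hq => ?_) fun h => hv (h ▸ hw))
  rw [mem_filter] at hq
  exact hX hw hq.1 fun h => hadj (h ▸ hq.2)

open scoped Classical in
theorem HasGluing.exists_card_filter_adj_lt (hC : HasGluing C d) {A K : Finset V}
    (hA : ¬ C.IsClique (A : Set V)) (hK : K ⊆ A) (hKclique : C.IsClique (K : Set V)) :
    ∃ K', K ⊆ K' ∧ K' ⊆ A ∧ ∃ x ∈ A, x ∉ K' ∧ #{u ∈ K' | C.Adj x u} < d := by
  obtain ⟨K', hKK', hmax⟩ := A.powerset.filter (fun K : Finset V => C.IsClique (K : Set V))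
    |>.exists_le_maximal (mem_filter.2 ⟨mem_powerset.2 hK, hKclique⟩)
  obtain ⟨hK'A, hK'⟩ := mem_filter.1 hmax.prop
  rw [mem_powerset] at hK'A
  have hne : K' ≠ A := fun h => hA (h ▸ hK')
  obtain ⟨x, hxA, hxK'⟩ := exists_of_ssubset (hK'A.ssubset_of_ne hne)
  refine ⟨K', hKK', hK'A, x, hxA, hxK', ?_⟩
  by_contra! hcard
  refine hxK' (hmax.le_of_ge (mem_filter.2 ⟨mem_powerset.2 (insert_subset hxA hK'A), ?_⟩)
    (subset_insert x K') (mem_insert_self x K'))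
  rw [coe_insert]
  exact hK'.insert fun u hu _ => hC.adj_of_isClique hK' hxK' hcard hu

end RankGain

section ClosureGraph

variable {V : Type*} [DecidableEq V] {d : ℕ} {p : V → Fin d → ℝ}
  {U : Submodule ℝ (V → Fin d → ℝ)}

/-- The graph of all edges whose rigidity rows lie in the subspace `U`. -/
def closureGraph (p : V → Fin d → ℝ) (U : Submodule ℝ (V → Fin d → ℝ)) : SimpleGraph V where
  Adj a b := a ≠ b ∧ rigidityRow p s(a, b) ∈ U
  symm := ⟨fun _ _ h => ⟨h.1.symm, Sym2.eq_swap ▸ h.2⟩⟩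
  loopless := ⟨fun _ h => h.1 rfl⟩

theorem closureGraph_adj {a b : V} :
    (closureGraph p U).Adj a b ↔ a ≠ b ∧ rigidityRow p s(a, b) ∈ U :=
  Iff.rfl

theorem IsGeneric.hasGluing_closureGraph (hp : IsGeneric p) (U : Submodule ℝ (V → Fin d → ℝ)) :
    HasGluing (closureGraph p U) d := by
  intro Q v x hQ hclique hv hx hvx
  obtain ⟨Q, hsub, rfl⟩ := exists_subset_card_eq hQ
  have hvQ : v ∉ Q := fun h => (hv v (hsub h)).1 rfl
  have hxQ : x ∉ Q := fun h => (hx x (hsub h)).1 rfl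
  have hvxQ : v ∉ insert x Q := by simp [hvx, hvQ]
  refine ⟨hvx, hp.rigidityRow_mem_of_forall_mem (T := insert v (insert x Q)) ?_ (by simp) (by simp)
    ?_⟩
  · rw [card_insert_of_notMem hvxQ, card_insert_of_notMem hxQ]
  have hrow : ∀ a b, (closureGraph p U).Adj a b → rigidityRow p s(a, b) ∈ U := fun _ _ h => h.2
  intro a ha b hb hab
  rcases eq_or_ne a b with rfl | hne
  · rw [rigidityRow_mk_self]
    exact U.zero_mem
  simp only [mem_insert] at ha hb
  rcases ha with rfl | rfl | ha <;> rcases hb with rfl | rfl | hb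
  · exact absurd rfl hne
  · exact absurd rfl hab
  · exact hrow _ _ (hv b (hsub hb))
  · exact absurd Sym2.eq_swap hab
  · exact absurd rfl hne
  · exact hrow _ _ (hx b (hsub hb))
  · exact hrow _ _ (hv a (hsub ha)).symm
  · exact hrow _ _ (hx a (hsub ha)).symm
  · exact hrow _ _ (hclique (hsub ha) (hsub hb) hne)

theorem IsGeneric.exists_subset_rankGain_le_card (hp : IsGeneric p) (hd : 0 < d)
    {B : Set (Sym2 V)} (hB : LinearIndepOn ℝ (rigidityRow p) B) (hBU : ∀ e ∈ B, rigidityRow p e ∈ U)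
    {v : V} (hvB : ∀ e ∈ B, v ∉ e) {Q : Finset V} (hv : v ∉ Q) :
    ∃ Q' ⊆ Q, LinearIndepOn ℝ (rigidityRow p) (B ∪ (fun z => s(v, z)) '' Q') ∧
      rankGain (closureGraph p U) d Q ≤ #Q' := by
  rw [rankGain]
  split_ifs with hone hzero
  · obtain ⟨hcard, hclique⟩ := hone
    rw [SimpleGraph.IsClique, Set.Pairwise] at hclique
    push Not at hclique
    obtain ⟨x, hx, y, hy, hxy, hadj⟩ := hclique
    have hU : rigidityRow p s(x, y) ∉ U := fun h => hadj ⟨hxy, h⟩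
    have hspan : Submodule.span ℝ (rigidityRow p '' B) ≤ U :=
      Submodule.span_le.2 (Set.image_subset_iff.2 hBU)
    obtain ⟨Q', hxyQ', hQ', hcard'⟩ := exists_subsuperset_card_eq (s := {x, y}) (t := Q)
      (insert_subset hx (singleton_subset_iff.2 hy)) (n := d + 1) (by rw [card_pair hxy]; lia) hcard
    exact ⟨Q', hQ', hp.linearIndepOn_union_star_of_insert (hB.insert fun h => hU (hspan h)) hvB
      (fun h => hU (hBU _ h)) (fun h => hv (hQ' h)) (hxyQ' (by simp)) (hxyQ' (by simp)) hxy
      hcard'.le, hcard'.ge⟩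
  · obtain ⟨Q', hQ', hcard⟩ := exists_subset_card_eq hzero
    exact ⟨Q', hQ', hp.linearIndepOn_union_star hB hvB (fun h => hv (hQ' h)) hcard.le, hcard.ge⟩
  · exact ⟨∅, empty_subset _, by simpa using hB, by simp⟩

theorem IsGeneric.exists_linearIndepOn_sum_rankGain_le [Fintype V] (hp : IsGeneric p) (hd : 0 < d)
    (U : Submodule ℝ (V → Fin d → ℝ)) {α : Type*} [LinearOrder α] {f : V → α}
    (hf : Function.Injective f) (T : Finset V) :
    ∃ B : Set (Sym2 V), LinearIndepOn ℝ (rigidityRow p) B ∧ (∀ e ∈ B, rigidityRow p e ∈ U) ∧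
      (∀ e ∈ B, ∀ u ∈ e, ∃ w ∈ T, f u ≤ f w) ∧
      ∑ v ∈ T, rankGain (closureGraph p U) d (earlierNeighbors (closureGraph p U) f v) ≤
        B.ncard := by
  induction T using Finset.induction_on_max_value f with
  | empty => exact ⟨∅, by simp⟩
  | insert v T hvT hmax ih =>
    obtain ⟨B, hB, hBU, hBT, hcard⟩ := ih
    have hvB : ∀ e ∈ B, v ∉ e := by
      intro e he hve
      obtain ⟨w, hw, hvw⟩ := hBT e he v hve
      exact hvT (hf (hvw.antisymm (hmax w hw)) ▸ hw)
    obtain ⟨Q, hQ, hind, hgain⟩ := hp.exists_subset_rankGain_le_card hd hB hBU hvB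
      (Q := earlierNeighbors (closureGraph p U) f v) (by simp [mem_earlierNeighbors])
    have hstar : ∀ z ∈ Q, (closureGraph p U).Adj v z ∧ f z < f v :=
      fun z hz => mem_earlierNeighbors.1 (hQ hz)
    refine ⟨_, hind, ?_, ?_, ?_⟩
    · rintro e (he | ⟨z, hz, rfl⟩)
      · exact hBU e he
      · exact (hstar z hz).1.2
    · rintro e (he | ⟨z, hz, rfl⟩) u hu
      · obtain ⟨w, hw, huw⟩ := hBT e he u hu
        exact ⟨w, mem_insert_of_mem hw, huw⟩
      · refine ⟨v, mem_insert_self _ _, ?_⟩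
        rcases Sym2.mem_iff.1 hu with rfl | rfl
        · exact le_rfl
        · exact (hstar _ hz).2.le
    · rw [sum_insert hvT, Set.ncard_union_eq, Set.ncard_image_of_injective, Set.ncard_coe_finset]
      · lia
      · exact fun a b h => Sym2.congr_right.1 h
      · rw [Set.disjoint_left]
        rintro _ he ⟨z, -, rfl⟩
        exact hvB _ he (Sym2.mem_mk_left _ _)

theorem IsGeneric.sum_rankGain_le_finrank [Fintype V] (hp : IsGeneric p) (hd : 0 < d)
    (U : Submodule ℝ (V → Fin d → ℝ)) {α : Type*} [LinearOrder α] {f : V → α}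
    (hf : Function.Injective f) :
    ∑ v, rankGain (closureGraph p U) d (earlierNeighbors (closureGraph p U) f v) ≤
      Module.finrank ℝ U := by
  obtain ⟨B, hB, hBU, -, hcard⟩ := hp.exists_linearIndepOn_sum_rankGain_le hd U hf univ
  rw [← finrank_span_image_eq_ncard hB] at hcard
  exact hcard.trans (Submodule.finrank_mono (Submodule.span_le.2 (Set.image_subset_iff.2 hBU)))

end ClosureGraph

/-! ### Ranks in a uniformly random vertex order -/

/-- The number of elements of `A` which come before `v` in the order given by `f`. -/
def rankIn {V α : Type*} [LinearOrder α] (f : V → α) (A : Finset V) (v : V) : ℕ :=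
  #{u ∈ A | f u < f v}

section RandomOrder

open scoped BigOperators Classical

variable {V : Type*} {A : Finset V} {v w : V} {m : ℕ}

theorem rankIn_lt_rankIn {α : Type*} [LinearOrder α] (f : V → α) {u v : V} (hu : u ∈ A)
    (huv : f u < f v) : rankIn f A u < rankIn f A v := by
  refine card_lt_card (ssubset_iff_of_subset (fun x hx => ?_) |>.2 ⟨u, by simp [hu, huv], by simp⟩)
  rw [mem_filter] at hx ⊢
  exact ⟨hx.1, hx.2.trans huv⟩

theorem card_filter_rankIn_lt_le {α : Type*} [LinearOrder α] {f : V → α} (hf : Set.InjOn f A)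
    (m : ℕ) : #{w ∈ A | rankIn f A w < m} ≤ m := by
  conv_rhs => rw [← card_range m]
  refine card_le_card_of_injOn (rankIn f A) (fun w hw => ?_) fun a ha b hb hab => ?_
  · exact mem_coe.2 (mem_range.2 (mem_filter.1 hw).2)
  · have ha := (mem_filter.1 ha).1
    have hb := (mem_filter.1 hb).1
    rcases lt_trichotomy (f a) (f b) with h | h | h
    · exact absurd hab (rankIn_lt_rankIn f ha h).ne
    · exact hf ha hb h
    · exact absurd hab (rankIn_lt_rankIn f hb h).ne'

theorem rankIn_comp_equiv {α : Type*} [LinearOrder α] (f : V → α) {e : V ≃ V}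
    (he : ∀ u, e u ∈ A ↔ u ∈ A) (v : V) : rankIn (f ∘ e) A v = rankIn f A (e v) :=
  card_equiv e fun u => by simp [he]

variable [Fintype V]

/-- The probability that fewer than `m` elements of `A` come before `v` in a uniformly random order
of the vertices, an order being encoded as a bijection to `Fin (Fintype.card V)`. -/
noncomputable def probRankLT (A : Finset V) (v : V) (m : ℕ) : ℝ :=
  𝔼 σ : V ≃ Fin (Fintype.card V), if rankIn σ A v < m then 1 else 0

theorem probRankLT_eq (hv : v ∈ A) (hw : w ∈ A) : probRankLT A v m = probRankLT A w m := by
  refine Fintype.expect_equiv ((Equiv.swap v w).equivCongr (Equiv.refl _)) _ _ fun σ => ?_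
  have hswap : ∀ u, Equiv.swap v w u ∈ A ↔ u ∈ A := fun u => by
    rw [Equiv.swap_apply_def]
    split_ifs <;> simp_all
  have hrank := rankIn_comp_equiv (⇑σ) hswap w
  rw [Equiv.swap_apply_right] at hrank
  rw [← hrank]
  rfl

theorem univ_orders_nonempty : (univ : Finset (V ≃ Fin (Fintype.card V))).Nonempty :=
  ⟨Fintype.equivFin V, mem_univ _⟩

theorem card_mul_probRankLT_le (hv : v ∈ A) : #A * probRankLT A v m ≤ m :=
  calc #A * probRankLT A v m = ∑ w ∈ A, probRankLT A w m := by
        rw [← nsmul_eq_mul, ← sum_const]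
        exact sum_congr rfl fun w hw => probRankLT_eq hv hw
    _ = 𝔼 σ : V ≃ Fin (Fintype.card V), (#{w ∈ A | rankIn σ A w < m} : ℝ) := by
        simp only [probRankLT, ← expect_sum_comm, card_filter, Nat.cast_sum, Nat.cast_ite,
          Nat.cast_one, Nat.cast_zero]
    _ ≤ m := expect_le univ_orders_nonempty fun σ _ => by
        exact_mod_cast card_filter_rankIn_lt_le σ.injective.injOn m

theorem probRankLT_le_div (hv : v ∈ A) : probRankLT A v m ≤ m / #A := by
  rw [le_div_iff₀' (mod_cast card_pos.2 ⟨v, hv⟩)]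
  exact card_mul_probRankLT_le hv

/-- The vertex order obtained from `σ` by moving the vertices of `D` behind all others. -/
noncomputable def delay (D : Finset V) (σ : V ≃ Fin (Fintype.card V)) (v : V) :
    Bool ×ₗ Fin (Fintype.card V) :=
  toLex (decide (v ∈ D), σ v)

theorem delay_injective (D : Finset V) (σ : V ≃ Fin (Fintype.card V)) :
    Function.Injective (delay D σ) :=
  fun _ _ h => σ.injective (congrArg Prod.snd (toLex.injective h))

theorem delay_lt_delay {D : Finset V} {σ : V ≃ Fin (Fintype.card V)} {u v : V} (hu : u ∉ D)
    (h : v ∈ D ∨ σ u < σ v) : delay D σ u < delay D σ v := by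
  rw [delay, delay, Prod.Lex.toLex_lt_toLex]
  by_cases hv : v ∈ D
  · simp [hu, hv]
  · simp [hu, hv, h.resolve_left hv]

/-- The expected rank gain of `v` in a uniformly random order with the vertices of `D` moved to the
end. -/
noncomputable def meanGain (C : SimpleGraph V) (d : ℕ) (D : Finset V) (v : V) : ℝ :=
  𝔼 σ : V ≃ Fin (Fintype.card V), (rankGain C d (earlierNeighbors C (delay D σ) v) : ℝ)

theorem meanGain_nonneg (C : SimpleGraph V) (d : ℕ) (D : Finset V) (v : V) : 0 ≤ meanGain C d D v :=
  expect_nonneg fun _ _ => Nat.cast_nonneg _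

end RandomOrder

theorem IsGeneric.sum_meanGain_le_finrank {V : Type*} [Fintype V] [DecidableEq V] {d : ℕ}
    {p : V → Fin d → ℝ} (hp : IsGeneric p) (hd : 0 < d) (U : Submodule ℝ (V → Fin d → ℝ))
    (D : Finset V) : ∑ v, meanGain (closureGraph p U) d D v ≤ Module.finrank ℝ U := by
  simp only [meanGain, ← expect_sum_comm]
  refine expect_le univ_orders_nonempty fun σ _ => ?_
  exact_mod_cast hp.sum_rankGain_le_finrank hd U (delay_injective D σ)

/-! ### Closed neighbourhoods and simplicial vertices -/

section ClosedNeighborhood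

open scoped Classical

variable {V : Type*} [Fintype V] {C : SimpleGraph V} {d T : ℕ} {u v w : V}

/-- The closed neighbourhood `N[v]`. -/
noncomputable def closedNbhd (C : SimpleGraph V) (v : V) : Finset V :=
  {u | u = v ∨ C.Adj v u}

/-- A vertex whose closed neighbourhood is a clique. -/
def IsSimplicial (C : SimpleGraph V) (v : V) : Prop :=
  C.IsClique (closedNbhd C v : Set V)

/-- The part of `N[v]` outside the twin class of `v`, where two vertices are twins if they have the
same closed neighbourhood. -/
noncomputable def boundary (C : SimpleGraph V) (v : V) : Finset V :=
  {w ∈ closedNbhd C v | closedNbhd C w ≠ closedNbhd C v}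

/-- The simplicial vertices with at least `T` vertices in the boundary. They gain rank `d` if they
come last in the vertex order. -/
noncomputable def lateVertices (C : SimpleGraph V) (T : ℕ) : Finset V :=
  {v | IsSimplicial C v ∧ T ≤ #(boundary C v)}

theorem mem_closedNbhd : u ∈ closedNbhd C v ↔ u = v ∨ C.Adj v u := by
  simp [closedNbhd]

theorem self_mem_closedNbhd (C : SimpleGraph V) (v : V) : v ∈ closedNbhd C v :=
  mem_closedNbhd.2 (Or.inl rfl)

theorem mem_closedNbhd_comm : u ∈ closedNbhd C v ↔ v ∈ closedNbhd C u := by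
  rw [mem_closedNbhd, mem_closedNbhd, C.adj_comm, eq_comm]

theorem mem_lateVertices : v ∈ lateVertices C T ↔ IsSimplicial C v ∧ T ≤ #(boundary C v) := by
  simp [lateVertices]

theorem IsSimplicial.closedNbhd_subset (hv : IsSimplicial C v) (h : w ∈ closedNbhd C v) :
    closedNbhd C v ⊆ closedNbhd C w := by
  intro u hu
  rw [mem_closedNbhd, or_iff_not_imp_left]
  exact fun huw => hv h hu (Ne.symm huw)

theorem IsSimplicial.closedNbhd_eq (hv : IsSimplicial C v) (hw : IsSimplicial C w)
    (h : w ∈ closedNbhd C v) : closedNbhd C v = closedNbhd C w :=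
  (hv.closedNbhd_subset h).antisymm (hw.closedNbhd_subset (mem_closedNbhd_comm.1 h))

theorem mem_boundary :
    w ∈ boundary C v ↔ w ∈ closedNbhd C v ∧ closedNbhd C w ≠ closedNbhd C v :=
  mem_filter

theorem adj_of_mem_boundary (h : w ∈ boundary C v) : C.Adj v w :=
  (mem_closedNbhd.1 (mem_boundary.1 h).1).resolve_left fun hwv => (mem_boundary.1 h).2 (by rw [hwv])

theorem isSimplicial_congr (h : closedNbhd C v = closedNbhd C w) :
    IsSimplicial C v ↔ IsSimplicial C w := by
  rw [IsSimplicial, IsSimplicial, h]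

theorem mem_lateVertices_congr (h : closedNbhd C v = closedNbhd C w) :
    v ∈ lateVertices C T ↔ w ∈ lateVertices C T := by
  rw [mem_lateVertices, mem_lateVertices, isSimplicial_congr h, boundary, boundary, h]

theorem IsSimplicial.notMem_lateVertices_of_mem_boundary (hv : IsSimplicial C v)
    (hw : w ∈ boundary C v) : w ∉ lateVertices C T := by
  intro hlate
  rw [mem_boundary] at hw
  exact hw.2 (hv.closedNbhd_eq (mem_lateVertices.1 hlate).1 hw.1).symm

theorem boundary_subset_closedNbhd_sdiff (hu : u ∈ closedNbhd C v) (hlate : u ∈ lateVertices C T) :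
    boundary C u ⊆ closedNbhd C v \ lateVertices C T := by
  intro w hw
  obtain ⟨hsimp, -⟩ := mem_lateVertices.1 hlate
  exact mem_sdiff.2 ⟨hsimp.closedNbhd_subset (mem_closedNbhd_comm.1 hu) (mem_boundary.1 hw).1,
    hsimp.notMem_lateVertices_of_mem_boundary hw⟩

theorem le_card_closedNbhd_sdiff_lateVertices (h : T ≤ #(closedNbhd C v)) :
    T ≤ #(closedNbhd C v \ lateVertices C T) := by
  by_cases hlate : Disjoint (closedNbhd C v) (lateVertices C T)
  · rwa [sdiff_eq_self_of_disjoint hlate]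
  · obtain ⟨u, hu, hulate⟩ := not_disjoint_iff.1 hlate
    exact (mem_lateVertices.1 hulate).2.trans
      (card_le_card (boundary_subset_closedNbhd_sdiff hu hulate))

theorem HasGluing.isSimplicial_of_isClique (hC : HasGluing C d) (hT : d ≤ T)
    (hcard : T ≤ #(closedNbhd C v))
    (hclique : C.IsClique ((closedNbhd C v \ lateVertices C T : Finset V) : Set V)) :
    IsSimplicial C v := by
  have hlate : ∀ y ∈ closedNbhd C v, y ∈ lateVertices C T →
      ∀ a ∈ closedNbhd C v \ lateVertices C T, C.Adj y a := by
    intro y hy hylate a ha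
    refine hC.adj_of_isClique hclique (fun h => (mem_sdiff.1 h).2 hylate) ?_ ha
    refine hT.trans ((mem_lateVertices.1 hylate).2.trans (card_le_card fun w hw => ?_))
    exact mem_filter.2 ⟨boundary_subset_closedNbhd_sdiff hy hylate hw, adj_of_mem_boundary hw⟩
  intro y hy z hz hyz
  rw [mem_coe] at hy hz
  by_cases hylate : y ∈ lateVertices C T
  · by_cases hzlate : z ∈ lateVertices C T
    · exact hC _ y z (hT.trans (le_card_closedNbhd_sdiff_lateVertices hcard)) hclique
        (hlate y hy hylate) (hlate z hz hzlate) hyz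
    · exact hlate y hy hylate z (mem_sdiff.2 ⟨hz, hzlate⟩)
  · by_cases hzlate : z ∈ lateVertices C T
    · exact (hlate z hz hzlate y (mem_sdiff.2 ⟨hy, hylate⟩)).symm
    · exact hclique (mem_coe.2 (mem_sdiff.2 ⟨hy, hylate⟩)) (mem_coe.2 (mem_sdiff.2 ⟨hz, hzlate⟩))
        hyz

end ClosedNeighborhood

/-! ### The expected rank gain of a vertex -/

section MeanGain

open scoped BigOperators Classical

variable {V : Type*} [Fintype V] {C : SimpleGraph V} {d r T : ℕ} {A D K : Finset V} {v x : V}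

theorem filter_lt_subset_earlierNeighbors (hA : A ⊆ closedNbhd C v \ D)
    (σ : V ≃ Fin (Fintype.card V)) :
    {u ∈ A | σ u < σ v} ⊆ earlierNeighbors C (delay D σ) v := by
  intro u hu
  obtain ⟨huA, hlt⟩ := mem_filter.1 hu
  obtain ⟨hnbhd, huD⟩ := mem_sdiff.1 (hA huA)
  exact mem_earlierNeighbors.2 ⟨(mem_closedNbhd.1 hnbhd).resolve_left fun h => by simp [h] at hlt,
    delay_lt_delay huD (Or.inr hlt)⟩

theorem rankIn_le_card_earlierNeighbors (hA : A ⊆ closedNbhd C v \ D)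
    (σ : V ≃ Fin (Fintype.card V)) : rankIn σ A v ≤ #(earlierNeighbors C (delay D σ) v) :=
  card_le_card (filter_lt_subset_earlierNeighbors hA σ)

theorem le_meanGain_of_mem_lateVertices (hT : d ≤ T) (hv : v ∈ lateVertices C T) :
    d ≤ meanGain C d (lateVertices C T) v := by
  refine le_expect univ_orders_nonempty fun σ _ => Nat.cast_le.2 (le_rankGain ?_)
  obtain ⟨hsimp, hboundary⟩ := mem_lateVertices.1 hv
  refine hT.trans (hboundary.trans (card_le_card fun u hu => ?_))
  exact mem_earlierNeighbors.2 ⟨adj_of_mem_boundary hu,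
    delay_lt_delay (hsimp.notMem_lateVertices_of_mem_boundary hu) (Or.inl hv)⟩

theorem le_rankGain_add_ite (hA : A ⊆ closedNbhd C v \ D) (σ : V ≃ Fin (Fintype.card V)) :
    (d : ℝ) ≤ rankGain C d (earlierNeighbors C (delay D σ) v) +
      d * if rankIn σ A v < d then 1 else 0 := by
  split_ifs with h
  · simp
  · simpa using le_rankGain ((not_lt.1 h).trans (rankIn_le_card_earlierNeighbors hA σ))

theorem le_meanGain_add_probRankLT (hA : A ⊆ closedNbhd C v \ D) :
    d ≤ meanGain C d D v + d * probRankLT A v d := by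
  rw [meanGain, probRankLT, mul_expect, ← expect_add_distrib]
  exact le_expect univ_orders_nonempty fun σ _ => le_rankGain_add_ite hA σ

theorem IsSimplicial.disjoint_closedNbhd_lateVertices (hv : IsSimplicial C v)
    (hlate : v ∉ lateVertices C T) : Disjoint (closedNbhd C v) (lateVertices C T) := by
  refine disjoint_left.2 fun u hu hulate => hlate ?_
  rwa [mem_lateVertices_congr (hv.closedNbhd_eq (mem_lateVertices.1 hulate).1 hu)]

theorem IsSimplicial.le_meanGain_add_div (hv : IsSimplicial C v) (hlate : v ∉ lateVertices C T) :
    d ≤ meanGain C d (lateVertices C T) v + d * d / #(closedNbhd C v) := by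
  have hprob : probRankLT (closedNbhd C v) v d ≤ d / #(closedNbhd C v) :=
    probRankLT_le_div (self_mem_closedNbhd C v)
  have hgain := le_meanGain_add_probRankLT (d := d) (A := closedNbhd C v)
    (subset_sdiff.2 ⟨Subset.rfl, hv.disjoint_closedNbhd_lateVertices hlate⟩)
  rw [mul_div_assoc]
  exact hgain.trans (by gcongr)

theorem succ_le_meanGain_add (hA : A ⊆ closedNbhd C v \ D) {b : (V ≃ Fin (Fintype.card V)) → ℝ}
    (hb : ∀ σ, 0 ≤ b σ)
    (hgain : ∀ σ, b σ < 1 → d + 1 ≤ rankGain C d (earlierNeighbors C (delay D σ) v)) :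
    d + 1 ≤ meanGain C d D v + d * probRankLT A v d + 𝔼 σ, b σ := by
  rw [meanGain, probRankLT, mul_expect, ← expect_add_distrib, ← expect_add_distrib]
  refine le_expect univ_orders_nonempty fun σ _ => ?_
  rcases lt_or_ge (b σ) 1 with hσ | hσ
  · have hrank : (d + 1 : ℝ) ≤ rankGain C d (earlierNeighbors C (delay D σ) v) :=
      mod_cast hgain σ hσ
    have hnonneg : (0 : ℝ) ≤ d * if rankIn σ A v < d then 1 else 0 := by positivity
    linarith [hb σ]
  · linarith [le_rankGain_add_ite (d := d) hA σ]

theorem not_isClique_earlierNeighbors (hA : A ⊆ closedNbhd C v \ D) (hv : v ∈ A)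
    (hclique : ∀ K ⊆ A, v ∈ K → C.IsClique (K : Set V) → #K ≤ r) {σ : V ≃ Fin (Fintype.card V)}
    (hσ : r ≤ rankIn σ A v) : ¬ C.IsClique (earlierNeighbors C (delay D σ) v : Set V) := by
  intro hE
  have hsub := filter_lt_subset_earlierNeighbors hA σ
  have hle := hclique (insert v {u ∈ A | σ u < σ v})
    (insert_subset hv (filter_subset _ _)) (mem_insert_self _ _) (by
      rw [coe_insert]
      exact (hE.subset (coe_subset.2 hsub)).insert
        fun u hu _ => (mem_earlierNeighbors.1 (hsub hu)).1)
  rw [card_insert_of_notMem (by simp)] at hle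
  exact (hσ.trans_lt hle).false

theorem probRankLT_le_div_of_le_card (hv : v ∈ A) (hr : 0 < r) (hA : 2 * r ≤ #A) (m : ℕ) :
    probRankLT A v m ≤ m / (2 * r) :=
  (probRankLT_le_div hv).trans (by gcongr; exact_mod_cast hA)

theorem le_meanGain_of_forall_card_le (hd : 0 < d) (hr : d * d + 2 * d ≤ r)
    (hA : A ⊆ closedNbhd C v \ D) (hv : v ∈ A) (hcard : 2 * r ≤ #A)
    (hclique : ∀ K ⊆ A, v ∈ K → C.IsClique (K : Set V) → #K ≤ r) : d ≤ meanGain C d D v := by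
  have hr' : d + 1 ≤ r := by nlinarith
  have hrpos : (0 : ℝ) < r := by exact_mod_cast (Nat.succ_pos d).trans_le hr'
  have hgain := succ_le_meanGain_add (d := d) hA
    (b := fun σ => if rankIn σ A v < r then 1 else 0) (fun σ => by positivity) fun σ hσ => by
      have hσ' : r ≤ rankIn σ A v := by
        by_contra! h
        simp [h] at hσ
      exact succ_le_rankGain (hr'.trans (hσ'.trans (rankIn_le_card_earlierNeighbors hA σ)))
        (not_isClique_earlierNeighbors hA hv hclique hσ')
  have hprob_d : probRankLT A v d ≤ d / (2 * r) := probRankLT_le_div_of_le_card hv (by lia) hcard d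
  have hprob_r : probRankLT A v r ≤ r / (2 * r) := probRankLT_le_div_of_le_card hv (by lia) hcard r
  have hhalf : (d * (d / (2 * r)) + r / (2 * r) : ℝ) ≤ 1 := by
    have : (d * d + 2 * d : ℝ) ≤ r := mod_cast hr
    rw [← mul_div_assoc, ← add_div, div_le_one (by positivity)]
    nlinarith
  have : d * probRankLT A v d ≤ d * (d / (2 * r)) := by gcongr
  rw [← probRankLT] at hgain
  linarith

theorem succ_le_rankGain_of_clique_of_lt (hA : A ⊆ closedNbhd C v \ D) (hK : K ⊆ A) (hxA : x ∈ A)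
    (hxK : x ∉ K) (hx : #{u ∈ K | C.Adj x u} < d) {σ : V ≃ Fin (Fintype.card V)} (hxv : σ x < σ v)
    (hσ : d ≤ rankIn σ K v) : d + 1 ≤ rankGain C d (earlierNeighbors C (delay D σ) v) := by
  have hsub := filter_lt_subset_earlierNeighbors hA σ
  have hxE : x ∈ earlierNeighbors C (delay D σ) v := hsub (mem_filter.2 ⟨hxA, hxv⟩)
  have hKE : {u ∈ K | σ u < σ v} ⊆ earlierNeighbors C (delay D σ) v :=
    (filter_subset_filter _ hK).trans hsub
  refine succ_le_rankGain ?_ fun hclique => ?_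
  · have hle := card_le_card (insert_subset hxE hKE)
    rw [card_insert_of_notMem fun h => hxK (mem_filter.1 h).1] at hle
    exact (Nat.succ_le_succ hσ).trans hle
  · refine (hσ.trans (card_le_card fun u hu => mem_filter.2 ?_)).not_gt hx
    have huK := (mem_filter.1 hu).1
    exact ⟨huK, hclique hxE (hKE hu) fun h => hxK (h ▸ huK)⟩

theorem le_meanGain_of_clique (hd : 0 < d) (hr : d * d + 2 * d ≤ r) (hA : A ⊆ closedNbhd C v \ D)
    (hcard : 2 * r ≤ #A) (hK : K ⊆ A) (hv : v ∈ K) (hKr : r ≤ #K) (hxA : x ∈ A) (hxK : x ∉ K)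
    (hx : #{u ∈ K | C.Adj x u} < d) : d ≤ meanGain C d D v := by
  have hxv : x ≠ v := fun h => hxK (h ▸ hv)
  have hrpos : 0 < r := by nlinarith
  have hgain := succ_le_meanGain_add (d := d) hA
    (b := fun σ => (if rankIn σ {x, v} v < 1 then 1 else 0) + if rankIn σ K v < d then 1 else 0)
    (fun σ => by positivity) fun σ hσ => by
      have hσx : σ x < σ v := by
        by_contra h
        have : rankIn σ {x, v} v = 0 := by simp [rankIn, filter_insert, filter_singleton, h]
        rw [if_pos (by lia)] at hσ
        exact hσ.not_ge (le_add_of_nonneg_right (by positivity))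
      have hσK : d ≤ rankIn σ K v := by
        by_contra! h
        rw [if_pos h] at hσ
        exact hσ.not_ge (le_add_of_nonneg_left (by positivity))
      exact succ_le_rankGain_of_clique_of_lt hA hK hxA hxK hx hσx hσK
  rw [expect_add_distrib, ← probRankLT, ← probRankLT] at hgain
  have hprob_A : probRankLT A v d ≤ d / (2 * r) :=
    probRankLT_le_div_of_le_card (hK hv) hrpos hcard d
  have hprob_x : probRankLT {x, v} v 1 ≤ 1 / 2 :=
    (probRankLT_le_div (by simp)).trans (by simp [card_pair hxv])
  have hprob_K : probRankLT K v d ≤ d / r :=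
    (probRankLT_le_div hv).trans (by gcongr)
  have hhalf : (d * (d / (2 * r)) + d / r : ℝ) ≤ 1 / 2 := by
    have : (d * d + 2 * d : ℝ) ≤ r := mod_cast hr
    field_simp
    linarith
  have : d * probRankLT A v d ≤ d * (d / (2 * r)) := by gcongr
  linarith

theorem HasGluing.le_meanGain (hC : HasGluing C d) (hd : 0 < d) (hr : d * d + 2 * d ≤ r)
    (hv : ¬ IsSimplicial C v) (hcard : 2 * r ≤ #(closedNbhd C v)) :
    d ≤ meanGain C d (lateVertices C (2 * r)) v := by
  have hcard' := le_card_closedNbhd_sdiff_lateVertices hcard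
  have hvA : v ∈ closedNbhd C v \ lateVertices C (2 * r) :=
    mem_sdiff.2 ⟨self_mem_closedNbhd C v, fun h => hv (mem_lateVertices.1 h).1⟩
  by_cases hclique : ∀ K ⊆ closedNbhd C v \ lateVertices C (2 * r), v ∈ K →
      C.IsClique (K : Set V) → #K ≤ r
  · exact le_meanGain_of_forall_card_le hd hr Subset.rfl hvA hcard' hclique
  push Not at hclique
  obtain ⟨K, hKA, hvK, hK, hKr⟩ := hclique
  have hA : ¬ C.IsClique ((closedNbhd C v \ lateVertices C (2 * r) : Finset V) : Set V) :=
    fun h => hv (hC.isSimplicial_of_isClique (by nlinarith) hcard h)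
  obtain ⟨K', hKK', hK'A, x, hxA, hxK', hx⟩ := hC.exists_card_filter_adj_lt hA hKA hK
  exact le_meanGain_of_clique hd hr Subset.rfl hcard' hK'A (hKK' hvK)
    (hKr.le.trans (card_le_card hKK')) hxA hxK' hx

end MeanGain

/-! ### Counting edges outside a closed graph -/

section Counting

open scoped Classical

variable {V : Type*} {G C : SimpleGraph V} {d k m q r t T : ℕ} {v w : V}

theorem exists_adj_of_kConnected (hG : KConnected G k) {S A : Finset V} (hS : #S < k) {a b : V}
    (ha : a ∈ A) (haS : a ∉ S) (hb : b ∉ A) (hbS : b ∉ S) :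
    ∃ x ∈ A, x ∉ S ∧ ∃ y ∉ A, y ∉ S ∧ G.Adj x y := by
  have hconn := hG.2 S S.finite_toSet (by rwa [Set.ncard_coe_finset])
  obtain ⟨walk⟩ := hconn.preconnected ⟨a, haS⟩ ⟨b, hbS⟩
  obtain ⟨e, -, hfst, hsnd⟩ := walk.exists_boundary_dart {x | (x : V) ∈ A} ha hb
  exact ⟨e.fst, hfst, e.fst.2, e.snd, hsnd, e.snd.2, e.adj⟩

variable [Fintype V]

theorem le_degree_of_kConnected (hG : KConnected G k) (v : V) : k ≤ G.degree v := by
  by_contra! hdeg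
  have hcard : #(insert v (G.neighborFinset v)) < #(univ : Finset V) := by
    have hV := hG.1
    have hinsert := card_insert_le v (G.neighborFinset v)
    rw [Nat.card_eq_fintype_card] at hV
    rw [G.card_neighborFinset_eq_degree] at hinsert
    rw [card_univ]
    lia
  obtain ⟨b, -, hb⟩ := exists_mem_notMem_of_card_lt_card hcard
  rw [mem_insert, not_or] at hb
  obtain ⟨x, hx, -, y, -, hy, hxy⟩ := exists_adj_of_kConnected hG
    (by rwa [G.card_neighborFinset_eq_degree]) (mem_singleton_self v)
    (G.notMem_neighborFinset_self v) (mt mem_singleton.1 hb.1) hb.2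
  rw [mem_singleton.1 hx] at hxy
  exact hy ((G.mem_neighborFinset v y).2 hxy)

theorem le_degree_sdiff_add_card_closedNbhd (hG : KConnected G k) (C : SimpleGraph V) (v : V) :
    k ≤ (G \ C).degree v + #(closedNbhd C v) := by
  have hsub : G.neighborFinset v ⊆ (G \ C).neighborFinset v ∪ closedNbhd C v := by
    intro u hu
    rw [SimpleGraph.mem_neighborFinset] at hu
    rw [mem_union, SimpleGraph.mem_neighborFinset, SimpleGraph.sdiff_adj, mem_closedNbhd]
    tauto
  calc k ≤ #(G.neighborFinset v) := le_degree_of_kConnected hG v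
    _ ≤ _ := (card_le_card hsub).trans (card_union_le _ _)

theorem le_sum_degree_twins (hG : KConnected G k) (hk : #(boundary C v) + q ≤ k)
    (hv : #(boundary C v) + q ≤ #(closedNbhd C v)) (hne : closedNbhd C v ≠ univ) :
    q ≤ ∑ w with closedNbhd C w = closedNbhd C v, (G \ C).degree w := by
  by_contra! hlt
  set Z : Finset V := {w | closedNbhd C w = closedNbhd C v ∧ (G \ C).degree w ≠ 0} with hZ
  have hZcard : #Z < q := by
    refine lt_of_le_of_lt ?_ hlt
    rw [hZ, ← filter_filter, card_eq_sum_ones]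
    refine (sum_le_sum fun w hw => ?_).trans (sum_le_sum_of_subset (filter_subset _ _))
    exact Nat.one_le_iff_ne_zero.2 (mem_filter.1 hw).2
  have hS : #(boundary C v ∪ Z) < #(boundary C v) + q :=
    (card_union_le _ _).trans_lt (Nat.add_lt_add_left hZcard _)
  have hsub : boundary C v ∪ Z ⊆ closedNbhd C v := by
    refine union_subset (filter_subset _ _) fun w hw => ?_
    rw [← (mem_filter.1 hw).2.1]
    exact self_mem_closedNbhd C w
  obtain ⟨a, ha, haS⟩ := exists_mem_notMem_of_card_lt_card (hS.trans_le hv)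
  obtain ⟨b, hb⟩ : ∃ b, b ∉ closedNbhd C v := by
    simpa [eq_univ_iff_forall] using hne
  obtain ⟨x, hx, hxS, y, hy, -, hxy⟩ :=
    exists_adj_of_kConnected hG (hS.trans_le hk) ha haS hb fun h => hb (hsub h)
  rw [mem_union, not_or, mem_boundary] at hxS
  have htwin : closedNbhd C x = closedNbhd C v := by
    by_contra h
    exact hxS.1 ⟨hx, h⟩
  have hadj : (G \ C).Adj x y :=
    ⟨hxy, fun h => hy (htwin ▸ mem_closedNbhd.2 (Or.inr h))⟩
  exact hxS.2 (mem_filter.2 ⟨mem_univ x, htwin,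
    (((G \ C).degree_pos_iff_exists_adj x).2 ⟨y, hadj⟩).ne'⟩)

/-- The simplicial vertices with more than `m` vertices in the closed neighbourhood, but fewer than
`T` in the boundary. They are the only vertices with a large closed neighbourhood whose expected
rank gain can fall short of `d`. -/
noncomputable def deficientVertices (C : SimpleGraph V) (T m : ℕ) : Finset V :=
  {v | IsSimplicial C v ∧ v ∉ lateVertices C T ∧ m < #(closedNbhd C v)}

theorem mem_deficientVertices :
    v ∈ deficientVertices C T m ↔
      IsSimplicial C v ∧ v ∉ lateVertices C T ∧ m < #(closedNbhd C v) := by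
  simp [deficientVertices]

theorem mem_deficientVertices_congr (h : closedNbhd C v = closedNbhd C w) :
    v ∈ deficientVertices C T m ↔ w ∈ deficientVertices C T m := by
  rw [mem_deficientVertices, mem_deficientVertices, isSimplicial_congr h,
    mem_lateVertices_congr h, h]

theorem IsSimplicial.closedNbhd_ne_univ (hv : IsSimplicial C v) (hC : C ≠ ⊤) :
    closedNbhd C v ≠ univ := by
  rintro h
  rw [IsSimplicial, h, coe_univ] at hv
  exact hC (top_unique fun a b hab => hv (Set.mem_univ a) (Set.mem_univ b) hab)

theorem le_sum_degree_twins_of_mem_deficientVertices (hG : KConnected G k) (hC : C ≠ ⊤)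
    (hk : T + q ≤ k) (hm : T + q ≤ m) (hv : v ∈ deficientVertices C T m) :
    q ≤ ∑ w ∈ deficientVertices C T m with closedNbhd C w = closedNbhd C v, (G \ C).degree w := by
  obtain ⟨hsimp, hlate, hcard⟩ := mem_deficientVertices.1 hv
  have hboundary : #(boundary C v) < T := by
    by_contra! h
    exact hlate (mem_lateVertices.2 ⟨hsimp, h⟩)
  have htwins : {w ∈ deficientVertices C T m | closedNbhd C w = closedNbhd C v} =
      ({w | closedNbhd C w = closedNbhd C v} : Finset V) := by
    ext w
    simpa using fun h => (mem_deficientVertices_congr h).2 hv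
  rw [htwins]
  exact le_sum_degree_twins hG (by lia) (by lia) (hsimp.closedNbhd_ne_univ hC)

theorem sum_div_card_closedNbhd_twins_le (s : Finset V) (v : V) (q : ℕ) :
    ∑ w ∈ s with closedNbhd C w = closedNbhd C v, (q : ℝ) / #(closedNbhd C w) ≤ q := by
  have hcard : #{w ∈ s | closedNbhd C w = closedNbhd C v} ≤ #(closedNbhd C v) := by
    refine card_le_card fun w hw => ?_
    rw [← (mem_filter.1 hw).2]
    exact self_mem_closedNbhd C w
  have hpos : (0 : ℝ) < #(closedNbhd C v) :=
    Nat.cast_pos.2 (card_pos.2 ⟨v, self_mem_closedNbhd C v⟩)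
  calc _ = #{w ∈ s | closedNbhd C w = closedNbhd C v} * ((q : ℝ) / #(closedNbhd C v)) := by
        rw [← nsmul_eq_mul, ← sum_const]
        exact sum_congr rfl fun w hw => by rw [(mem_filter.1 hw).2]
    _ ≤ #(closedNbhd C v) * ((q : ℝ) / #(closedNbhd C v)) := by gcongr
    _ = q := mul_div_cancel₀ _ hpos.ne'

theorem sum_div_card_closedNbhd_le_sum_degree (hG : KConnected G k) (hC : C ≠ ⊤)
    (hk : T + q ≤ k) (hm : T + q ≤ m) :
    ∑ v ∈ deficientVertices C T m, (q : ℝ) / #(closedNbhd C v) ≤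
      ∑ v ∈ deficientVertices C T m, ((G \ C).degree v : ℝ) := by
  have hmaps : ∀ v ∈ deficientVertices C T m,
      closedNbhd C v ∈ (deficientVertices C T m).image (closedNbhd C) :=
    fun v hv => mem_image_of_mem _ hv
  rw [← sum_fiberwise_of_maps_to hmaps, ← sum_fiberwise_of_maps_to hmaps]
  refine sum_le_sum fun X hX => ?_
  obtain ⟨v, hv, rfl⟩ := mem_image.1 hX
  refine (sum_div_card_closedNbhd_twins_le _ v q).trans ?_
  exact_mod_cast le_sum_degree_twins_of_mem_deficientVertices hG hC hk hm hv

theorem mul_le_mul_meanGain_add_of_mem_deficientVertices (t : ℕ)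
    (hv : v ∈ deficientVertices C T m) :
    (t * d : ℝ) ≤ t * meanGain C d (lateVertices C T) v +
      (2 * t * d * d : ℕ) / #(closedNbhd C v) / 2 := by
  obtain ⟨hsimp, hlate, -⟩ := mem_deficientVertices.1 hv
  calc (t * d : ℝ)
      ≤ t * (meanGain C d (lateVertices C T) v + d * d / #(closedNbhd C v)) := by
        gcongr
        exact hsimp.le_meanGain_add_div hlate
    _ = _ := by
        push_cast
        ring

theorem HasGluing.mul_le_mul_meanGain_add_degree (hC : HasGluing C d) (hG : KConnected G k)
    (hd : 0 < d) (hr : d * d + 2 * d ≤ r) (hm : 2 * r ≤ m) (hk : 2 * t * d + m ≤ k)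
    (hv : v ∉ deficientVertices C (2 * r) m) :
    (t * d : ℝ) ≤ t * meanGain C d (lateVertices C (2 * r)) v + (G \ C).degree v / 2 := by
  rcases le_or_gt #(closedNbhd C v) m with hsmall | hlarge
  · have hdeg : 2 * t * d ≤ (G \ C).degree v := by
      have := le_degree_sdiff_add_card_closedNbhd hG C v
      lia
    have hdeg' : (2 * t * d : ℝ) ≤ (G \ C).degree v := mod_cast hdeg
    have := mul_nonneg t.cast_nonneg (meanGain_nonneg C d (lateVertices C (2 * r)) v)
    linarith
  · suffices d ≤ meanGain C d (lateVertices C (2 * r)) v from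
      le_add_of_le_of_nonneg (by gcongr) (by positivity)
    by_cases hlate : v ∈ lateVertices C (2 * r)
    · exact le_meanGain_of_mem_lateVertices (by nlinarith) hlate
    · refine hC.le_meanGain hd hr (fun hsimp => hv ?_) (hm.trans hlarge.le)
      exact mem_deficientVertices.2 ⟨hsimp, hlate, hlarge⟩

theorem HasGluing.mul_card_le_mul_sum_meanGain_add (hC : HasGluing C d) (hCtop : C ≠ ⊤)
    (hG : KConnected G k) (hd : 0 < d) (hr : d * d + 2 * d ≤ r)
    (hm : 2 * r + 2 * t * d * d ≤ m) (hk : 2 * t * d + m ≤ k) :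
    (t * (d * Fintype.card V) : ℝ) ≤
      t * ∑ v, meanGain C d (lateVertices C (2 * r)) v + (G \ C).edgeSet.ncard := by
  set D := deficientVertices C (2 * r) m
  have hdeficient := sum_le_sum fun v (hv : v ∈ D) =>
    mul_le_mul_meanGain_add_of_mem_deficientVertices (d := d) t hv
  have hrest := sum_le_sum fun v (hv : v ∈ Dᶜ) =>
    hC.mul_le_mul_meanGain_add_degree hG hd hr (by lia) hk (mem_compl.1 hv)
  have htwins : ∑ v ∈ D, ((2 * t * d * d : ℕ) : ℝ) / #(closedNbhd C v) ≤
      ∑ v ∈ D, ((G \ C).degree v : ℝ) :=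
    sum_div_card_closedNbhd_le_sum_degree hG hCtop (by lia) hm
  have hedges : ∑ v ∈ D, ((G \ C).degree v : ℝ) + ∑ v ∈ Dᶜ, ((G \ C).degree v : ℝ) =
      2 * (G \ C).edgeSet.ncard := by
    rw [sum_add_sum_compl, ← Nat.cast_sum, SimpleGraph.sum_degrees_eq_twice_card_edges,
      ← Set.ncard_coe_finset, SimpleGraph.coe_edgeFinset, Nat.cast_mul, Nat.cast_two]
  have hgain := sum_add_sum_compl D fun v => meanGain C d (lateVertices C (2 * r)) v
  have hcard : (#D : ℝ) + #Dᶜ = Fintype.card V := mod_cast card_add_card_compl D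
  simp only [sum_add_distrib, sum_const, nsmul_eq_mul, ← mul_sum, ← sum_div] at hdeficient hrest
  rw [← hgain, ← hcard]
  linarith

end Counting

/-! ### Packing rigid subgraphs -/

section Packing

variable {V : Type*} [DecidableEq V] {G : SimpleGraph V} {d t : ℕ} {p : V → Fin d → ℝ}

theorem span_range_rigidityRow_le_of_closureGraph_eq_top {U : Submodule ℝ (V → Fin d → ℝ)}
    (hU : closureGraph p U = ⊤) : Submodule.span ℝ (Set.range (rigidityRow p)) ≤ U := by
  rw [Submodule.span_le, Set.range_subset_iff]
  refine Sym2.ind fun a b => ?_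
  rcases eq_or_ne a b with rfl | hab
  · rw [rigidityRow_mk_self]
    exact U.zero_mem
  · have hadj : (closureGraph p U).Adj a b := hU ▸ hab
    exact (closureGraph_adj.1 hadj).2

theorem sdiff_closureGraph_edgeSet (p : V → Fin d → ℝ) (U : Submodule ℝ (V → Fin d → ℝ)) :
    (G \ closureGraph p U).edgeSet = {e ∈ G.edgeSet | rigidityRow p e ∉ U} := by
  ext e
  induction e with
  | h a b =>
    rw [SimpleGraph.mem_edgeSet, SimpleGraph.sdiff_adj, closureGraph_adj, Set.mem_ofPred_eq,
      SimpleGraph.mem_edgeSet]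
    exact and_congr_right fun h => not_congr (and_iff_right h.ne)

variable [Finite V]

theorem IsGeneric.mul_finrank_span_rigidityRow_le (hp : IsGeneric p) (hd : 0 < d) (ht : 0 < t)
    (hG : KConnected G (t * (10 * d * (d + 1)))) (U : Submodule ℝ (V → Fin d → ℝ)) :
    t * Module.finrank ℝ (Submodule.span ℝ (Set.range (rigidityRow p))) ≤
      t * Module.finrank ℝ U + (G \ closureGraph p U).edgeSet.ncard := by
  cases nonempty_fintype V
  by_cases htop : closureGraph p U = ⊤
  · exact le_add_right (Nat.mul_le_mul_left t
      (Submodule.finrank_mono (span_range_rigidityRow_le_of_closureGraph_eq_top htop)))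
  have hrank : Module.finrank ℝ (Submodule.span ℝ (Set.range (rigidityRow p))) ≤
      d * Fintype.card V := by
    refine (Submodule.finrank_le _).trans_eq ?_
    simp [Module.finrank_pi_fintype, mul_comm]
  have hcount := (hp.hasGluing_closureGraph U).mul_card_le_mul_sum_meanGain_add
    (r := d * d + 2 * d) (m := 5 * t * d * (d + 1)) (t := t) htop hG hd le_rfl (by nlinarith)
    (by nlinarith [Nat.zero_le (t * d * d)])
  have hgain := hp.sum_meanGain_le_finrank hd U
    (lateVertices (closureGraph p U) (2 * (d * d + 2 * d)))
  have hreal : (t * (d * Fintype.card V) : ℝ) ≤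
      t * Module.finrank ℝ U + (G \ closureGraph p U).edgeSet.ncard :=
    hcount.trans (by gcongr)
  exact (Nat.mul_le_mul_left t hrank).trans (mod_cast hreal)

theorem IsGeneric.isRigid_of_kConnected (hp : IsGeneric p) (hd : 0 < d) (ht : 0 < t)
    (hG : KConnected G (t * (10 * d * (d + 1)))) : IsRigid p G := by
  have hrank := hp.mul_finrank_span_rigidityRow_le hd ht hG
    (Submodule.span ℝ (rigidityRow p '' G.edgeSet))
  have hempty : {e ∈ G.edgeSet | rigidityRow p e ∉
      Submodule.span ℝ (rigidityRow p '' G.edgeSet)} = ∅ :=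
    Set.sep_eq_empty_iff_mem_false.2 fun e he => not_not.2 (Submodule.subset_span ⟨e, he, rfl⟩)
  rw [sdiff_closureGraph_edgeSet, hempty, Set.ncard_empty, add_zero] at hrank
  exact Submodule.eq_of_le_of_finrank_le (Submodule.span_mono (Set.image_subset_range _ _))
    (Nat.le_of_mul_le_mul_left hrank ht)

theorem IsGeneric.mul_finrank_span_range_edgeSet_le (hp : IsGeneric p) (hd : 0 < d) (ht : 0 < t)
    (hG : KConnected G (t * (10 * d * (d + 1)))) (F : Set G.edgeSet) :
    t * Module.finrank ℝ (Submodule.span ℝ (Set.range fun e : G.edgeSet => rigidityRow p e)) ≤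
      t * Module.finrank ℝ (Submodule.span ℝ ((fun e : G.edgeSet => rigidityRow p e) '' F)) +
        Fᶜ.ncard := by
  set U := Submodule.span ℝ ((fun e : G.edgeSet => rigidityRow p e) '' F)
  have hsub : {e ∈ G.edgeSet | rigidityRow p e ∉ U} ⊆ Subtype.val '' Fᶜ :=
    fun e ⟨he, hrow⟩ => ⟨⟨e, he⟩, fun hF => hrow (Submodule.subset_span ⟨_, hF, rfl⟩), rfl⟩
  have hcard : {e ∈ G.edgeSet | rigidityRow p e ∉ U}.ncard ≤ Fᶜ.ncard :=
    (Set.ncard_le_ncard hsub).trans Set.ncard_image_le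
  have hrank := hp.mul_finrank_span_rigidityRow_le hd ht hG U
  rw [sdiff_closureGraph_edgeSet] at hrank
  rw [← Set.image_eq_range, hp.isRigid_of_kConnected hd ht hG]
  exact hrank.trans (by gcongr)

theorem IsGeneric.exists_isRigid_packing (hp : IsGeneric p) (hd : 0 < d) (ht : 0 < t)
    (hG : KConnected G (t * (10 * d * (d + 1)))) :
    ∃ H : Fin t → SimpleGraph V, (∀ i, H i ≤ G) ∧
      (∀ i j, i ≠ j → Disjoint (H i).edgeSet (H j).edgeSet) ∧ ∀ i, IsRigid p (H i) := by
  obtain ⟨B, hdisj, hspan⟩ := exists_disjoint_spanning (K := ℝ) (J := Fin t)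
    (fun e : G.edgeSet => rigidityRow p e)
    (by simpa only [Fintype.card_fin] using hp.mul_finrank_span_range_edgeSet_le hd ht hG)
  have hedge (i : Fin t) :
      (SimpleGraph.fromEdgeSet (Subtype.val '' B i)).edgeSet = Subtype.val '' B i := by
    rw [SimpleGraph.edgeSet_fromEdgeSet, sdiff_eq_left, Set.disjoint_left]
    rintro _ ⟨e, -, rfl⟩
    exact G.not_isDiag_of_mem_edgeSet e.2
  refine ⟨fun i => SimpleGraph.fromEdgeSet (Subtype.val '' B i), fun i => ?_, fun i j hij => ?_,
    fun i => ?_⟩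
  · rw [← SimpleGraph.edgeSet_subset_edgeSet, hedge]
    exact Subtype.coe_image_subset _ _
  · rw [hedge, hedge, Set.disjoint_image_iff Subtype.val_injective]
    exact hdisj hij
  · rw [IsRigid, hedge, Set.image_image, hspan, ← Set.image_eq_range]
    exact hp.isRigid_of_kConnected hd ht hG

end Packing

end RigidityPacking

/-- Every `(t·10d(d+1))`-connected finite simple graph contains `t` pairwise edge-disjoint
spanning subgraphs, each of which is `d`-connected. -/
theorem packing_d_connected_spanning_subgraphs {V : Type*} [Fintype V]
    (d t : ℕ) (hd : 0 < d) (ht : 0 < t)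
    (G : SimpleGraph V) (hG : KConnected G (t * (10 * d * (d + 1)))) :
    ∃ H : Fin t → SimpleGraph V,
      (∀ i, H i ≤ G) ∧
      (∀ i j, i ≠ j → Disjoint (H i).edgeSet (H j).edgeSet) ∧
      (∀ i, KConnected (H i) d) := by
  classical
  obtain ⟨p, hp⟩ := RigidityPacking.exists_isGeneric V d
  obtain ⟨H, hle, hdisj, hrigid⟩ := hp.exists_isRigid_packing hd ht hG
  have hV : d < Fintype.card V := by
    rw [← Nat.card_eq_fintype_card]
    nlinarith [hG.1, Nat.le_mul_of_pos_left (10 * d * (d + 1)) ht]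
  exact ⟨H, hle, hdisj, fun i => (hrigid i).kConnected hp hV⟩
end
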